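/- arXiv:2505.02336 — 4 statements merged into one kernel-verified Lean document; each statement's English description precedes it below -/
import Mathlib

section
/- For any p, q ∈ ℕ (p, q ≥ 1) there exists a real number λ_{p,q} > 1 such that ‖(A^p B^q)^k‖^{1/k} → λ_{p,q} as k → ∞, and such that for every ω ∈ L_{p,q} the survivor set K^ω is (log λ_{p,q} / ((p+q) log b))-Ahlfors regular. -/
/-!
Write `cnt k n` for the number of words on the positions `[k, n)` which avoid every forbidden word
contained in `[k, n)`. If `ω` is progressively overlapping at `i`, then sorting words by the last
position where they differ from `ω i` gives
`cnt k (i + m) = (b - 1) * ∑ t < m, cnt k (i + t)` (`cnt_overlap`); if `ω` is totally distinct at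
`i`, then a word violating only the constraint at `i` is an arbitrary admissible word on `[k, i)`
followed by `ω i`, so that `cnt k (i + m) = b * cnt k (i + m - 1) - cnt k i` (`cnt_distinct`). Hence
the row vector of the `m` latest counts is multiplied on the right by `A`, respectively by `B`, at
each step. If `k` is the beginning of a period, the vector after `l` periods is
`initVec * (A^p B^q)^l`, where `initVec` consists of the counts `b^m - 1, b^(m-1), …, b`
(`cnt_eq_blockCount`).

`B` has a negative entry, so positivity is replaced by a cone: both matrices preserve the cone
`InCone` of nonnegative vectors with consecutive entries decreasing by a factor at least `b - 1`, and
the smaller cone `InCore` inside its interior, which contains `initVec`. Consequently the first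
entry of `initVec * (A^p B^q)^l` is sub- and supermultiplicative up to constants, and Fekete's lemma
used twice (`fekete_two_sided`) gives `λ ≥ 2` with `c λ^l ≤ blockCount l ≤ C λ^l`. The norm
of `(A^p B^q)^l` is comparable to `blockCount l`, so its `l`-th root tends to `λ`
(`exists_growth`). Interpolating between period boundaries, `cnt k n` is comparable to `θ^(n-k)`
with `θ = λ^(1/(p+q)) = b^s`, uniformly in `k ≤ n` (`exists_cnt_bounds`).

The rest of the argument needs only these counts. A ball of radius about `b^(-n)` meets a bounded
number of cylinders of level `n`, hence at most a constant times `θ^(N-n)` cylinders of level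
`N ≥ n`, each of diameter `b^(-N) = (θ^(-N))^(1/s)`; letting `N → ∞` bounds the Hausdorff measure from
above (`hausdorff_upper`). For the lower bound, every admissible word of length `n` has at least
`2^(-m) * cnt n N` admissible extensions of length `N` (`cnt_le_extensions`). A limit point of the
distribution functions of the uniform measures on words of length `N`, normalised by `θ^(-N)`, is
therefore the distribution function of a measure carried by the survivor set, with mass comparable
to `r^s` on balls of radius `r` centred there (`exists_limit_distFun`), and the mass distribution
principle applies (`hausdorff_lower`).
-/

open MeasureTheory Filter

namespace Paper


/-- The set `Σ_k^ω` of admissible words of length `k`. -/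
def SigmaSet (b m : ℕ) (ω : ℕ → Fin m → Fin b) (k : ℕ) : Set (Fin k → Fin b) :=
  { d | ∀ (i : ℕ) (hi : i + m ≤ k),
      (fun j : Fin m => d ⟨i + j.1, by have := j.isLt; omega⟩) ≠ ω i }

/-- The survivor set `K^ω ⊆ [0,1]`. -/
def Kset (b m : ℕ) (ω : ℕ → Fin m → Fin b) : Set ℝ :=
  { x | ∃ d : ℕ → Fin b,
      (∀ k : ℕ, (fun j : Fin m => d (k + j.1)) ≠ ω k) ∧
      x = ∑' i : ℕ, ((d i : ℕ) : ℝ) / (b : ℝ) ^ (i + 1) }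

open Classical in
/-- The adjacency matrix `A_d` of the subshift of finite type with forbidden word `d`. -/
noncomputable def adjMat (b m : ℕ) (d : Fin m → Fin b) :
    Matrix (Fin (m - 1) → Fin b) (Fin (m - 1) → Fin b) ℝ :=
  fun u v =>
    if ((∀ (i : ℕ) (h : i + 1 < m - 1), u ⟨i + 1, h⟩ = v ⟨i, by omega⟩) ∧
        ¬ ((∀ (j : ℕ) (h : j < m - 1), u ⟨j, h⟩ = d ⟨j, by omega⟩) ∧
           (∀ (h2 : m - 2 < m - 1), v ⟨m - 2, h2⟩ = d ⟨m - 1, by omega⟩)))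
    then 1 else 0

/-- The norm `‖M‖ = ∑_{i,j} |m_{ij}|` of a real square matrix. -/
noncomputable def matNorm {n : Type*} [Fintype n] (M : Matrix n n ℝ) : ℝ :=
  ∑ i, ∑ j, |M i j|

/-- The product `A_{ω^0} A_{ω^1} ⋯ A_{ω^{n-1}}`. -/
noncomputable def prodA (b m : ℕ) (ω : ℕ → Fin m → Fin b) (n : ℕ) :
    Matrix (Fin (m - 1) → Fin b) (Fin (m - 1) → Fin b) ℝ :=
  ((List.range n).map (fun i => adjMat b m (ω i))).prod

/-- `ω` is progressively overlapping at position `k`. -/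
def ProgOverlapAt (b m : ℕ) (ω : ℕ → Fin m → Fin b) (k : ℕ) : Prop :=
  ∀ j : ℕ, 1 ≤ j → j ≤ min k (m - 1) →
    ∀ (t : ℕ) (h : t + j < m),
      ω k ⟨t, by omega⟩ = ω (k - j) ⟨t + j, h⟩

/-- `ω` is totally distinct at position `k`. -/
def TotDistinctAt (b m : ℕ) (ω : ℕ → Fin m → Fin b) (k : ℕ) : Prop :=
  ∀ j : ℕ, 1 ≤ j → j ≤ min k (m - 1) →
    ¬ (∀ (t : ℕ) (h : t + j < m),
        ω k ⟨t, by omega⟩ = ω (k - j) ⟨t + j, h⟩)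

/-- A set `F ⊆ ℝ` is `s`-Ahlfors regular. -/
def AhlforsRegular (F : Set ℝ) (s : ℝ) : Prop :=
  ∃ c : ℝ, 1 ≤ c ∧ ∀ x ∈ F, ∀ r : ℝ, 0 < r → r < 1 →
    ENNReal.ofReal (c⁻¹ * r ^ s) ≤ Measure.hausdorffMeasure s (F ∩ Metric.closedBall x r) ∧
    Measure.hausdorffMeasure s (F ∩ Metric.closedBall x r) ≤ ENNReal.ofReal (c * r ^ s)


/-- The `m × m` matrix `A` with first column `b-1` and superdiagonal `1`. -/
noncomputable def matA (b m : ℕ) : Matrix (Fin m) (Fin m) ℝ :=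
  fun i j => if j.1 = 0 then (b : ℝ) - 1 else if j.1 = i.1 + 1 then 1 else 0

/-- The `m × m` matrix `B` with `B_{1,1} = b`, superdiagonal `1` and `B_{m,1} = -1`. -/
noncomputable def matB (b m : ℕ) : Matrix (Fin m) (Fin m) ℝ :=
  fun i j =>
    if i.1 = 0 ∧ j.1 = 0 then (b : ℝ)
    else if j.1 = i.1 + 1 then 1
    else if i.1 = m - 1 ∧ j.1 = 0 then -1
    else 0

/-- Membership in the family `L_{p,q}`: progressively overlapping on blocks of length `p`
followed by totally distinct on blocks of length `q`, periodically. -/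
def MemLpq (b m p q : ℕ) (ω : ℕ → Fin m → Fin b) : Prop :=
  ∀ l k : ℕ,
    (l * (p + q) < k → k ≤ l * (p + q) + p → ProgOverlapAt b m ω k) ∧
    (l * (p + q) + p < k → k ≤ (l + 1) * (p + q) → TotDistinctAt b m ω k)

/-! ### Linear algebra: an invariant cone for `A` and `B` -/

lemma vecMul_matA_zero {b m : ℕ} (x : Fin m → ℝ) (j : Fin m) (hj : j.1 = 0) :
    Matrix.vecMul x (matA b m) j = ((b : ℝ) - 1) * ∑ i, x i := by
  simp only [Matrix.vecMul, dotProduct, matA, hj, if_true]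
  rw [← Finset.sum_mul, mul_comm]

lemma vecMul_matA_succ {b m : ℕ} (x : Fin m → ℝ) (i j : Fin m) (hj : j.1 = i.1 + 1) :
    Matrix.vecMul x (matA b m) j = x i := by
  simp only [Matrix.vecMul, dotProduct, matA]
  rw [Finset.sum_eq_single i]
  · simp [hj]
  · intro k _ hk
    have : k.1 ≠ i.1 := fun h => hk (Fin.ext h)
    rw [if_neg (by omega), if_neg (by omega), mul_zero]
  · simp

lemma vecMul_matB_zero {b m : ℕ} (hm : 2 ≤ m) (x : Fin m → ℝ) (j l : Fin m) (hj : j.1 = 0)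
    (hl : l.1 = m - 1) :
    Matrix.vecMul x (matB b m) j = b * x j - x l := by
  simp only [Matrix.vecMul, dotProduct, matB]
  have hjl : j ≠ l := fun h => by have := congrArg Fin.val h; omega
  rw [← Finset.sum_subset (Finset.subset_univ {j, l}), Finset.sum_pair hjl]
  · rw [if_pos ⟨hj, hj⟩, if_neg (by omega), if_neg (by omega), if_pos ⟨hl, hj⟩]
    ring
  · intro k _ hk
    simp only [Finset.mem_insert, Finset.mem_singleton, not_or] at hk
    have h1 : k.1 ≠ j.1 := fun h => hk.1 (Fin.ext h)
    have h2 : k.1 ≠ l.1 := fun h => hk.2 (Fin.ext h)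
    rw [if_neg (by omega), if_neg (by omega), if_neg (by omega), mul_zero]

lemma vecMul_matB_succ {b m : ℕ} (x : Fin m → ℝ) (i j : Fin m) (hj : j.1 = i.1 + 1) :
    Matrix.vecMul x (matB b m) j = x i := by
  simp only [Matrix.vecMul, dotProduct, matB]
  rw [Finset.sum_eq_single i]
  · simp [hj]
  · intro k _ hk
    have : k.1 ≠ i.1 := fun h => hk (Fin.ext h)
    rw [if_neg (by omega), if_neg (by omega), if_neg (by omega), mul_zero]
  · simp

/-- The simplicial cone of nonnegative row vectors whose consecutive entries decay at least by the
factor `b - 1`. -/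
def InCone (b m : ℕ) (x : Fin m → ℝ) : Prop :=
  (∀ i, 0 ≤ x i) ∧ ∀ i j : Fin m, j.1 = i.1 + 1 → ((b : ℝ) - 1) * x j ≤ x i

/-- A smaller cone: apart from `0`, its elements lie in the interior of `InCone`, uniformly. -/
def InCore (b m : ℕ) (x : Fin m → ℝ) : Prop :=
  (∀ i, 0 ≤ x i) ∧ ∀ i j : Fin m, j.1 = i.1 + 1 →
    ((b : ℝ) - 1 / 2) * x j ≤ x i ∧ x i ≤ 2 * ((b : ℝ) - 1) * x j

lemma InCore.inCone {b m : ℕ} {x : Fin m → ℝ} (h : InCore b m x) : InCone b m x := by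
  refine ⟨h.1, fun i j hj => ?_⟩
  have := (h.2 i j hj).1
  have := h.1 j
  nlinarith

lemma InCone.le_half_pow {b m : ℕ} (hb : 3 ≤ b) {x : Fin m → ℝ} (h : InCone b m x)
    (z : Fin m) (hz : z.1 = 0) (i : Fin m) : x i ≤ (1 / 2) ^ i.1 * x z := by
  have hb' : (3 : ℝ) ≤ b := by exact_mod_cast hb
  obtain ⟨i, hi⟩ := i
  induction i with
  | zero =>
    have : (⟨0, hi⟩ : Fin m) = z := Fin.ext hz.symm
    simp [this]
  | succ i ih =>
    have h1 := ih (by omega)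
    have h2 := h.2 ⟨i, by omega⟩ ⟨i + 1, hi⟩ rfl
    have h3 := h.1 ⟨i + 1, hi⟩
    simp only [pow_succ] at h1 ⊢
    nlinarith

lemma InCone.le_zero {b m : ℕ} (hb : 3 ≤ b) {x : Fin m → ℝ} (h : InCone b m x)
    (z : Fin m) (hz : z.1 = 0) (i : Fin m) : x i ≤ x z := by
  refine (h.le_half_pow hb z hz i).trans (mul_le_of_le_one_left (h.1 z) ?_)
  exact pow_le_one₀ (by norm_num) (by norm_num)

lemma InCone.sum_le {b m : ℕ} (hb : 3 ≤ b) {x : Fin m → ℝ} (h : InCone b m x)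
    (z : Fin m) (hz : z.1 = 0) : ∑ i, x i ≤ 2 * x z := by
  calc ∑ i, x i ≤ ∑ i : Fin m, (1 / 2 : ℝ) ^ i.1 * x z :=
        Finset.sum_le_sum fun i _ => h.le_half_pow hb z hz i
    _ = (∑ i ∈ Finset.range m, (1 / 2 : ℝ) ^ i) * x z := by
        rw [← Finset.sum_mul, Fin.sum_univ_eq_sum_range (fun i => (1 / 2 : ℝ) ^ i)]
    _ ≤ 2 * x z := mul_le_mul_of_nonneg_right (sum_geometric_two_le m) (h.1 z)

lemma InCone.le_sum {b m : ℕ} {x : Fin m → ℝ} (h : InCone b m x)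
    (z : Fin m) : x z ≤ ∑ i, x i :=
  Finset.single_le_sum (fun i _ => h.1 i) (Finset.mem_univ z)

lemma InCone.last_le {b m : ℕ} (hb : 3 ≤ b) (hm : 2 ≤ m) {x : Fin m → ℝ} (h : InCone b m x)
    (z l : Fin m) (hz : z.1 = 0) (hl : l.1 = m - 1) : 2 * x l ≤ x z := by
  have h1 := h.le_half_pow hb z hz l
  have h2 : (1 / 2 : ℝ) ^ l.1 ≤ (1 / 2) ^ 1 :=
    pow_le_pow_of_le_one (by norm_num) (by norm_num) (by omega)
  have h3 := mul_le_mul_of_nonneg_right h2 (h.1 z)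
  linarith

lemma InCone.matA {b m : ℕ} (hb : 3 ≤ b) {x : Fin m → ℝ}
    (h : InCone b m x) : InCone b m (Matrix.vecMul x (matA b m)) := by
  have hb' : (3 : ℝ) ≤ b := by exact_mod_cast hb
  refine ⟨fun i => ?_, fun i j hj => ?_⟩
  · by_cases hi : i.1 = 0
    · rw [vecMul_matA_zero x i hi]
      exact mul_nonneg (by linarith) (Finset.sum_nonneg fun i _ => h.1 i)
    · rw [vecMul_matA_succ x ⟨i.1 - 1, by omega⟩ i (by simp; omega)]
      exact h.1 _
  · rw [vecMul_matA_succ x i j hj]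
    by_cases hi : i.1 = 0
    · rw [vecMul_matA_zero x i hi]
      exact mul_le_mul_of_nonneg_left (h.le_sum i) (by linarith)
    · rw [vecMul_matA_succ x ⟨i.1 - 1, by omega⟩ i (by simp; omega)]
      exact h.2 _ _ (by simp; omega)

/-- Although `B` has a negative entry, it preserves the cone: the last entry of an element is at most
half of the first one. -/
lemma InCone.matB {b m : ℕ} (hb : 3 ≤ b) (hm : 2 ≤ m) {x : Fin m → ℝ}
    (h : InCone b m x) : InCone b m (Matrix.vecMul x (matB b m)) := by
  have hb' : (3 : ℝ) ≤ b := by exact_mod_cast hb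
  refine ⟨fun i => ?_, fun i j hj => ?_⟩
  · by_cases hi : i.1 = 0
    · rw [vecMul_matB_zero hm x i ⟨m - 1, by omega⟩ hi rfl]
      have := h.last_le hb hm i ⟨m - 1, by omega⟩ hi rfl
      have := h.1 i
      have := h.1 ⟨m - 1, by omega⟩
      nlinarith
    · rw [vecMul_matB_succ x ⟨i.1 - 1, by omega⟩ i (by simp; omega)]
      exact h.1 _
  · rw [vecMul_matB_succ x i j hj]
    by_cases hi : i.1 = 0
    · rw [vecMul_matB_zero hm x i ⟨m - 1, by omega⟩ hi rfl]
      have := h.last_le hb hm i ⟨m - 1, by omega⟩ hi rfl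
      have := h.1 i
      nlinarith
    · rw [vecMul_matB_succ x ⟨i.1 - 1, by omega⟩ i (by simp; omega)]
      exact h.2 _ _ (by simp; omega)

lemma InCore.matA {b m : ℕ} (hb : 3 ≤ b) (hm : 2 ≤ m) {x : Fin m → ℝ}
    (h : InCore b m x) : InCore b m (Matrix.vecMul x (matA b m)) := by
  have hb' : (3 : ℝ) ≤ b := by exact_mod_cast hb
  refine ⟨(h.inCone.matA hb).1, fun i j hj => ?_⟩
  rw [vecMul_matA_succ x i j hj]
  by_cases hi : i.1 = 0
  · rw [vecMul_matA_zero x i hi]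
    have h1 := h.inCone.sum_le hb i hi
    have h2 := (h.2 i ⟨1, by omega⟩ (by simp [hi])).2
    have h3 : x i + x ⟨1, by omega⟩ ≤ ∑ k, x k := by
      have hne : i ≠ ⟨1, by omega⟩ := fun hh => by
        have := congrArg Fin.val hh
        simp at this
        omega
      rw [← Finset.sum_pair hne]
      exact Finset.sum_le_sum_of_subset_of_nonneg (Finset.subset_univ _) fun k _ _ => h.1 k
    constructor
    · have := mul_le_mul_of_nonneg_left h3 (show (0 : ℝ) ≤ b - 1 by linarith)
      linarith
    · have := mul_le_mul_of_nonneg_left h1 (show (0 : ℝ) ≤ b - 1 by linarith)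
      linarith
  · rw [vecMul_matA_succ x ⟨i.1 - 1, by omega⟩ i (by simp; omega)]
    exact h.2 _ _ (by simp; omega)

lemma InCore.matB {b m : ℕ} (hb : 3 ≤ b) (hm : 2 ≤ m) {x : Fin m → ℝ}
    (h : InCore b m x) : InCore b m (Matrix.vecMul x (matB b m)) := by
  have hb' : (3 : ℝ) ≤ b := by exact_mod_cast hb
  refine ⟨(h.inCone.matB hb hm).1, fun i j hj => ?_⟩
  rw [vecMul_matB_succ x i j hj]
  by_cases hi : i.1 = 0
  · rw [vecMul_matB_zero hm x i ⟨m - 1, by omega⟩ hi rfl]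
    have := h.inCone.last_le hb hm i ⟨m - 1, by omega⟩ hi rfl
    have := h.1 i
    have := h.1 ⟨m - 1, by omega⟩
    constructor <;> nlinarith
  · rw [vecMul_matB_succ x ⟨i.1 - 1, by omega⟩ i (by simp; omega)]
    exact h.2 _ _ (by simp; omega)

lemma vecMul_pow_induction {n : Type*} [Fintype n] [DecidableEq n] (Q : (n → ℝ) → Prop)
    (M : Matrix n n ℝ) (hQ : ∀ x, Q x → Q (Matrix.vecMul x M)) (k : ℕ) (x : n → ℝ) (hx : Q x) :
    Q (Matrix.vecMul x (M ^ k)) := by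
  induction k with
  | zero => simpa using hx
  | succ k ih => rw [pow_succ, ← Matrix.vecMul_vecMul]; exact hQ _ ih

/-- The row vector `(b^m - 1, b^(m-1), …, b)`: the numbers of admissible words of lengths
`m, m - 1, …, 1`. -/
noncomputable def initVec (b m : ℕ) : Fin m → ℝ :=
  fun j => if j.1 = 0 then (b : ℝ) ^ m - 1 else (b : ℝ) ^ (m - j.1)

lemma initVec_core {b m : ℕ} (hb : 3 ≤ b) : InCore b m (initVec b m) := by
  have hb' : (3 : ℝ) ≤ b := by exact_mod_cast hb
  have h1 : ∀ k : ℕ, (1 : ℝ) ≤ (b : ℝ) ^ k := fun k => one_le_pow₀ (by linarith)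
  refine ⟨fun i => ?_, fun i j hj => ?_⟩
  · unfold initVec
    split_ifs
    · linarith [h1 m]
    · linarith [h1 (m - i.1)]
  · have hj0 : j.1 ≠ 0 := by omega
    have hm : m - i.1 = (m - j.1) + 1 := by omega
    have h3 : (b : ℝ) ^ (m - i.1) = (b : ℝ) ^ (m - j.1) * b := by rw [hm, pow_succ]
    have h4 : (b : ℝ) ≤ (b : ℝ) ^ (m - j.1) := le_self_pow₀ (by linarith) (by omega)
    unfold initVec
    rw [if_neg hj0]
    split_ifs with hi
    · rw [hi, Nat.sub_zero] at h3
      rw [h3]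
      constructor <;> nlinarith
    · rw [h3]
      constructor <;> nlinarith

lemma one_le_initVec {b m : ℕ} (hb : 3 ≤ b) (i : Fin m) : 1 ≤ initVec b m i := by
  have hb' : (3 : ℝ) ≤ b := by exact_mod_cast hb
  have hi := i.isLt
  unfold initVec
  split_ifs
  · have : (b : ℝ) ≤ (b : ℝ) ^ m := le_self_pow₀ (by linarith) (by omega)
    linarith
  · exact one_le_pow₀ (by linarith)

lemma initVec_le {b m : ℕ} (hb : 3 ≤ b) (i : Fin m) : initVec b m i ≤ (b : ℝ) ^ m := by
  have hb' : (3 : ℝ) ≤ b := by exact_mod_cast hb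
  unfold initVec
  split_ifs
  · linarith
  · exact pow_le_pow_right₀ (by linarith) (by omega)

/-- `initVec` is an order unit for the order induced by `InCone`. -/
lemma initVec_dominates {b m : ℕ} (hb : 3 ≤ b) (x : Fin m → ℝ) (t : ℝ) (ht : ∀ i, |x i| ≤ t) :
    InCone b m ((2 * b * t) • initVec b m - x) := by
  have hb' : (3 : ℝ) ≤ b := by exact_mod_cast hb
  refine ⟨fun i => ?_, fun i j hj => ?_⟩
  · have h1 := one_le_initVec hb i
    have h2 := abs_le.1 (ht i)
    have h3 : 0 ≤ t := (abs_nonneg _).trans (ht i)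
    simp only [Pi.sub_apply, Pi.smul_apply, smul_eq_mul]
    nlinarith [mul_nonneg (show (0 : ℝ) ≤ 2 * b * t by positivity) (sub_nonneg.2 h1)]
  · have h1 := one_le_initVec hb j
    have h2 := abs_le.1 (ht i)
    have h4 := abs_le.1 (ht j)
    have h3 : 0 ≤ t := (abs_nonneg _).trans (ht i)
    have h5 := ((initVec_core (m := m) hb).2 i j hj).1
    simp only [Pi.sub_apply, Pi.smul_apply, smul_eq_mul]
    have h6 : 1 / 2 ≤ initVec b m i - (b - 1) * initVec b m j := by nlinarith
    have h7 := mul_le_mul_of_nonneg_left h6 (show (0 : ℝ) ≤ 2 * b * t by positivity)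
    have h8 : -((b - 1 : ℝ) * x j) ≤ (b - 1) * t := by nlinarith
    nlinarith

/-- The entries of an element of the core are comparable to the first one. -/
lemma InCore.lower {b m : ℕ} (hb : 3 ≤ b) {x : Fin m → ℝ} (h : InCore b m x)
    (z : Fin m) (hz : z.1 = 0) (i : Fin m) : x z ≤ (2 * b) ^ i.1 * x i := by
  have hb' : (3 : ℝ) ≤ b := by exact_mod_cast hb
  obtain ⟨i, hi⟩ := i
  induction i with
  | zero =>
    have : (⟨0, hi⟩ : Fin m) = z := Fin.ext hz.symm
    simp [this]
  | succ i ih =>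
    refine (ih (by omega)).trans ?_
    have h2 := (h.2 ⟨i, by omega⟩ ⟨i + 1, hi⟩ rfl).2
    have h3 := h.1 ⟨i + 1, hi⟩
    simp only [pow_succ]
    rw [mul_assoc]
    refine mul_le_mul_of_nonneg_left ?_ (by positivity)
    nlinarith

/-- Elements of the core dominate a multiple of `initVec`, uniformly. -/
lemma InCore.dominates {b m : ℕ} (hb : 3 ≤ b) {x : Fin m → ℝ} (h : InCore b m x)
    (z : Fin m) (hz : z.1 = 0) :
    InCone b m (x - (x z / (2 * (2 * b) ^ m * b ^ m)) • initVec b m) := by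
  have hb' : (3 : ℝ) ≤ b := by exact_mod_cast hb
  have key : ∀ i, x z / (2 * (2 * b) ^ m * b ^ m) * (b : ℝ) ^ m ≤ x i / 2 := by
    intro i
    have h1 := h.lower hb z hz i
    have h2 : (2 * b : ℝ) ^ i.1 * x i ≤ (2 * b) ^ m * x i :=
      mul_le_mul_of_nonneg_right (pow_le_pow_right₀ (by linarith) (by omega)) (h.1 i)
    have h3 : x z / (2 * (2 * b) ^ m * b ^ m) * (b : ℝ) ^ m = x z / (2 * b) ^ m / 2 := by
      field_simp
    rw [h3]
    have h4 : x z / (2 * b : ℝ) ^ m ≤ x i := by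
      rw [div_le_iff₀ (by positivity)]
      linarith
    linarith
  set c := x z / (2 * (2 * b) ^ m * b ^ m) with hc
  have hc0 : 0 ≤ c := div_nonneg (h.1 z) (by positivity)
  refine ⟨fun i => ?_, fun i j hj => ?_⟩
  · simp only [Pi.sub_apply, Pi.smul_apply, smul_eq_mul]
    have := mul_le_mul_of_nonneg_left (initVec_le hb i) hc0
    have := key i
    have := h.1 i
    linarith
  · simp only [Pi.sub_apply, Pi.smul_apply, smul_eq_mul]
    have h1 := mul_le_mul_of_nonneg_left (initVec_le hb i) hc0
    have h2 := key j
    have h3 := h.1 j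
    have h4 := (h.2 i j hj).1
    have h5 : 0 ≤ c * initVec b m j := mul_nonneg hc0 ((initVec_core hb).1 j)
    nlinarith

/-! ### The growth rate of `‖(A^p B^q)^k‖` -/

section Growth

variable {b m : ℕ} (p q : ℕ)

lemma InCone.block (hb : 3 ≤ b) (hm : 2 ≤ m) {x : Fin m → ℝ} (h : InCone b m x) :
    InCone b m (Matrix.vecMul x (Paper.matA b m ^ p * Paper.matB b m ^ q)) := by
  rw [← Matrix.vecMul_vecMul]
  exact vecMul_pow_induction _ _ (fun x hx => hx.matB hb hm) q _
    (vecMul_pow_induction _ _ (fun x hx => hx.matA hb) p _ h)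

lemma InCore.block (hb : 3 ≤ b) (hm : 2 ≤ m) {x : Fin m → ℝ} (h : InCore b m x) :
    InCore b m (Matrix.vecMul x (Paper.matA b m ^ p * Paper.matB b m ^ q)) := by
  rw [← Matrix.vecMul_vecMul]
  exact vecMul_pow_induction _ _ (fun x hx => hx.matB hb hm) q _
    (vecMul_pow_induction _ _ (fun x hx => hx.matA hb hm) p _ h)

/-- On the cone, `A` at least doubles the first entry and `B` does not decrease it. -/
lemma block_growth (hb : 3 ≤ b) (hm : 2 ≤ m) (hp : 1 ≤ p) {x : Fin m → ℝ} (h : InCone b m x)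
    (z : Fin m) (hz : z.1 = 0) :
    2 * x z ≤ Matrix.vecMul x (matA b m ^ p * matB b m ^ q) z := by
  have hb' : (3 : ℝ) ≤ b := by exact_mod_cast hb
  have hA : ∀ y, InCone b m y → 2 * y z ≤ Matrix.vecMul y (matA b m) z := by
    intro y hy
    rw [vecMul_matA_zero y z hz]
    have := hy.le_sum z
    have := hy.1 z
    nlinarith
  have hB : ∀ y, InCone b m y → y z ≤ Matrix.vecMul y (matB b m) z := by
    intro y hy
    rw [vecMul_matB_zero hm y z ⟨m - 1, by omega⟩ hz rfl]
    have := hy.last_le hb hm z ⟨m - 1, by omega⟩ hz rfl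
    have := hy.1 z
    nlinarith
  obtain ⟨p, rfl⟩ : ∃ p', p = p' + 1 := ⟨p - 1, by omega⟩
  rw [← Matrix.vecMul_vecMul, pow_succ', ← Matrix.vecMul_vecMul]
  have h1 := vecMul_pow_induction (fun y => InCone b m y ∧ 2 * x z ≤ y z) (matA b m)
    (fun y hy => ⟨hy.1.matA hb, by linarith [hA y hy.1, hy.2, hy.1.1 z]⟩) p
    (Matrix.vecMul x (matA b m)) ⟨h.matA hb, hA x h⟩
  exact (vecMul_pow_induction (fun y => InCone b m y ∧ 2 * x z ≤ y z) (matB b m)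
    (fun y hy => ⟨hy.1.matB hb hm, by linarith [hB y hy.1, hy.2]⟩) q _ h1).2

/-- First entry of `initVec * (A^p B^q)^k`; it counts admissible words along blocks. -/
noncomputable def blockCount (b m p q : ℕ) (hm : 2 ≤ m) (k : ℕ) : ℝ :=
  Matrix.vecMul (initVec b m) ((matA b m ^ p * matB b m ^ q) ^ k) ⟨0, by omega⟩

lemma two_pow_le_blockCount (hb : 3 ≤ b) (hm : 2 ≤ m) (hp : 1 ≤ p) (k : ℕ) :
    2 ^ k ≤ blockCount b m p q hm k := by
  have : InCone b m (Matrix.vecMul (initVec b m) ((matA b m ^ p * matB b m ^ q) ^ k)) ∧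
      2 ^ k ≤ blockCount b m p q hm k := by
    induction k with
    | zero =>
      refine ⟨by simpa using (initVec_core hb).inCone, ?_⟩
      simpa [blockCount] using one_le_initVec hb (⟨0, by omega⟩ : Fin m)
    | succ k ih =>
      rw [blockCount, pow_succ (_ * _), ← Matrix.vecMul_vecMul]
      refine ⟨ih.1.block p q hb hm, ?_⟩
      have h1 := block_growth p q hb hm hp ih.1 ⟨0, by omega⟩ rfl
      have h2 := ih.2
      rw [blockCount] at h2
      rw [pow_succ]
      linarith
  exact this.2

/-- `2 * b` times the first entry, times `initVec`, dominates any element of the cone, and the order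
induced by the cone is preserved by `A` and `B`. -/
lemma blockCount_add_le (hb : 3 ≤ b) (hm : 2 ≤ m) (k l : ℕ) :
    blockCount b m p q hm (k + l) ≤
      2 * b * (blockCount b m p q hm k * blockCount b m p q hm l) := by
  set M := matA b m ^ p * matB b m ^ q with hM
  have hcone := fun k => vecMul_pow_induction (InCone b m) M (fun x hx => hx.block p q hb hm) k
  have hy := hcone k _ (initVec_core hb).inCone
  -- `t • initVec - initVec * M ^ k` lies in the cone, so its image under `M ^ l` is nonnegative
  have h1 := initVec_dominates hb (Matrix.vecMul (initVec b m) (M ^ k))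
    (Matrix.vecMul (initVec b m) (M ^ k) ⟨0, by omega⟩)
    (fun i => by rw [abs_of_nonneg (hy.1 i)]; exact hy.le_zero hb _ rfl i)
  have h2 := (hcone l _ h1).1 ⟨0, by omega⟩
  rw [Matrix.sub_vecMul, Matrix.smul_vecMul, Matrix.vecMul_vecMul, ← pow_add] at h2
  simp only [Pi.sub_apply, Pi.smul_apply, smul_eq_mul] at h2
  simp only [blockCount, ← hM]
  linarith

/-- Supermultiplicativity: `initVec * M^k` lies in the core, hence dominates a multiple of `initVec`
proportional to its first entry. -/
lemma le_blockCount_add (hb : 3 ≤ b) (hm : 2 ≤ m) (k l : ℕ) :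
    (1 / (2 * (2 * b) ^ m * b ^ m)) * (blockCount b m p q hm k * blockCount b m p q hm l) ≤
      blockCount b m p q hm (k + l) := by
  set M := matA b m ^ p * matB b m ^ q with hM
  have hcone := fun k => vecMul_pow_induction (InCone b m) M (fun x hx => hx.block p q hb hm) k
  have hcore := fun k => vecMul_pow_induction (InCore b m) M (fun x hx => hx.block p q hb hm) k
  have h1 := (hcore k _ (initVec_core hb)).dominates hb ⟨0, by omega⟩ rfl
  have h2 := (hcone l _ h1).1 ⟨0, by omega⟩
  rw [Matrix.sub_vecMul, Matrix.smul_vecMul, Matrix.vecMul_vecMul, ← pow_add] at h2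
  simp only [Pi.sub_apply, Pi.smul_apply, smul_eq_mul] at h2
  simp only [blockCount, ← hM]
  refine le_trans (le_of_eq ?_) (sub_nonneg.1 h2)
  ring

/-- Fekete's lemma, for a sequence which is both sub- and supermultiplicative up to constants. -/
lemma fekete_two_sided (a : ℕ → ℝ) (ha : ∀ k, 2 ^ k ≤ a k) (c C : ℝ) (hc : 0 < c) (hC : 0 < C)
    (hlow : ∀ k l, c * (a k * a l) ≤ a (k + l)) (hup : ∀ k l, a (k + l) ≤ C * (a k * a l)) :
    ∃ lam : ℝ, 2 ≤ lam ∧ ∀ k, C⁻¹ * lam ^ k ≤ a k ∧ a k ≤ c⁻¹ * lam ^ k := by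
  have hpos : ∀ k, 0 < a k := fun k => lt_of_lt_of_le (by positivity) (ha k)
  have hlog : ∀ k : ℕ, (k : ℝ) * Real.log 2 ≤ Real.log (a k) := fun k => by
    rw [← Real.log_pow]; exact Real.log_le_log (by positivity) (ha k)
  set u : ℕ → ℝ := fun k => Real.log (C * a k) with hu
  set w : ℕ → ℝ := fun k => -Real.log (c * a k) with hw
  have hus : Subadditive u := by
    intro k l
    simp only [hu]
    rw [← Real.log_mul (by have := hpos k; positivity) (by have := hpos l; positivity)]
    refine Real.log_le_log (by have := hpos (k + l); positivity) ?_
    nlinarith [hup k l]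
  have hws : Subadditive w := by
    intro k l
    simp only [hw]
    rw [← neg_add, neg_le_neg_iff,
      ← Real.log_mul (by have := hpos k; positivity) (by have := hpos l; positivity)]
    refine Real.log_le_log (by have := hpos k; have := hpos l; positivity) ?_
    nlinarith [hlow k l]
  have hsplit : ∀ k, u k = Real.log C + Real.log (a k) := fun k =>
    Real.log_mul hC.ne' (hpos k).ne'
  have hsplit' : ∀ k, w k = -(Real.log c + Real.log (a k)) := fun k => by
    simp only [hw]; rw [Real.log_mul hc.ne' (hpos k).ne']
  have hdiv : ∀ (n : ℕ) (y : ℝ), |y / n| ≤ |y| := fun n y => by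
    rcases Nat.eq_zero_or_pos n with h | h
    · simp [h]
    · rw [abs_div, Nat.abs_cast]
      exact div_le_self (abs_nonneg _) (by exact_mod_cast h)
  have hub : BddBelow (Set.range fun n => u n / n) := by
    refine ⟨-|Real.log C|, ?_⟩
    rintro _ ⟨n, rfl⟩
    simp only [hsplit, add_div]
    have h1 := neg_le_of_abs_le (hdiv n (Real.log C))
    have h2 : 0 ≤ Real.log (a n) / n :=
      div_nonneg (le_trans (by positivity) (hlog n)) (Nat.cast_nonneg _)
    linarith
  have hul := hus.tendsto_lim hub
  have hdiff : Tendsto (fun n : ℕ => (Real.log C - Real.log c) / (n : ℝ)) atTop (nhds 0) :=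
    tendsto_const_div_atTop_nhds_zero_nat _
  -- `u n + w n` is constant, so the two Fekete limits are opposite to each other
  have hwl : Tendsto (fun n => w n / n) atTop (nhds (-hus.lim)) := by
    have := (hdiff.sub hul)
    simp only [zero_sub] at this
    refine this.congr fun n => ?_
    rw [hsplit, hsplit', ← sub_div]
    congr 1
    ring
  have hwb : BddBelow (Set.range fun n => w n / n) := hwl.bddBelow_range
  have hwlim : hws.lim = -hus.lim := tendsto_nhds_unique (hws.tendsto_lim hwb) hwl
  have hpow : ∀ k : ℕ, Real.exp hus.lim ^ k = Real.exp (k * hus.lim) := fun k => by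
    rw [← Real.exp_nat_mul]
  refine ⟨Real.exp hus.lim, ?_, fun k => ?_⟩
  · have : Real.log 2 ≤ hus.lim := by
      have h0 : Tendsto (fun n : ℕ => u n / n - Real.log C / n) atTop (nhds (hus.lim - 0)) :=
        hul.sub (tendsto_const_div_atTop_nhds_zero_nat _)
      rw [sub_zero] at h0
      refine ge_of_tendsto h0 ?_
      filter_upwards [eventually_gt_atTop 0] with n hn
      have hn' : (0 : ℝ) < n := by exact_mod_cast hn
      rw [hsplit, ← sub_div, le_div_iff₀ hn']
      linarith [hlog n]
    rw [← Real.log_le_iff_le_exp (by norm_num)]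
    exact this
  · rw [hpow]
    rcases Nat.eq_zero_or_pos k with rfl | hk
    · have h1 := hup 0 0
      have h2 := hlow 0 0
      have h3 := hpos 0
      simp only [Nat.cast_zero, zero_mul, Real.exp_zero, mul_one]
      refine ⟨?_, ?_⟩
      · rw [inv_le_iff_one_le_mul₀ hC]
        nlinarith
      · rw [le_inv_comm₀ h3 hc, ← one_div, le_div_iff₀ h3]
        nlinarith
    · have hk' : (0 : ℝ) < k := by exact_mod_cast hk
      have h1 := hus.lim_le_div hub hk.ne'
      have h2 := hws.lim_le_div hwb hk.ne'
      rw [hwlim] at h2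
      rw [le_div_iff₀ hk'] at h1 h2
      constructor
      · rw [inv_mul_le_iff₀ hC, ← Real.le_log_iff_exp_le (by have := hpos k; positivity)]
        linarith
      · rw [le_inv_mul_iff₀ hc, ← Real.log_le_iff_le_exp (by have := hpos k; positivity)]
        simp only [hw] at h2
        linarith

/-- Each row of `M^k` is the image of a basis vector, and `initVec` dominates `± e_i` up to a
constant. -/
lemma matNorm_le_blockCount (hb : 3 ≤ b) (hm : 2 ≤ m) (k : ℕ) :
    matNorm ((matA b m ^ p * matB b m ^ q) ^ k) ≤
      m * (m * (2 * b * blockCount b m p q hm k)) := by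
  set M := matA b m ^ p * matB b m ^ q with hM
  have hcone := fun k => vecMul_pow_induction (InCone b m) M (fun x hx => hx.block p q hb hm) k
  have hy := hcone k _ (initVec_core hb).inCone
  have key : ∀ i j, |(M ^ k) i j| ≤ 2 * b * blockCount b m p q hm k := by
    intro i j
    have hrow : (M ^ k) i j = Matrix.vecMul (Pi.single i 1) (M ^ k) j := by
      simp
    have e1 : ∀ l, |(Pi.single i (1 : ℝ) : Fin m → ℝ) l| ≤ 1 := fun l => by
      by_cases h : l = i
      · subst h; simp
      · simp [h]
    have h1 := (hcone k _ (initVec_dominates hb _ 1 e1)).1 j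
    have h2 := (hcone k _ (initVec_dominates hb (-Pi.single i 1) 1
      (fun l => by rw [Pi.neg_apply, abs_neg]; exact e1 l))).1 j
    have h3 := hy.le_zero hb ⟨0, by omega⟩ rfl j
    rw [Matrix.sub_vecMul, Matrix.smul_vecMul] at h1 h2
    rw [Matrix.neg_vecMul] at h2
    simp only [Pi.sub_apply, Pi.smul_apply, smul_eq_mul, Pi.neg_apply, ← hrow] at h1 h2
    have h4 := mul_le_mul_of_nonneg_left h3 (show (0 : ℝ) ≤ 2 * b by positivity)
    have h5 : blockCount b m p q hm k = Matrix.vecMul (initVec b m) (M ^ k) ⟨0, by omega⟩ := rfl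
    rw [h5, abs_le]
    constructor <;> linarith
  unfold matNorm
  calc ∑ i, ∑ j, |(M ^ k) i j| ≤ ∑ i : Fin m, ∑ j : Fin m, 2 * b * blockCount b m p q hm k :=
        Finset.sum_le_sum fun i _ => Finset.sum_le_sum fun j _ => key i j
    _ = _ := by simp

lemma blockCount_le_matNorm (hb : 3 ≤ b) (hm : 2 ≤ m) (k : ℕ) :
    blockCount b m p q hm k ≤ b ^ m * matNorm ((matA b m ^ p * matB b m ^ q) ^ k) := by
  unfold blockCount matNorm
  simp only [Matrix.vecMul, dotProduct]
  rw [Finset.mul_sum]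
  refine Finset.sum_le_sum fun i _ => ?_
  set N := (matA b m ^ p * matB b m ^ q) ^ k
  have h1 : |N i ⟨0, by omega⟩| ≤ ∑ j, |N i j| :=
    Finset.single_le_sum (f := fun j => |N i j|) (fun j _ => abs_nonneg _) (Finset.mem_univ _)
  calc initVec b m i * N i ⟨0, by omega⟩ ≤ initVec b m i * |N i ⟨0, by omega⟩| :=
        mul_le_mul_of_nonneg_left (le_abs_self _) ((initVec_core hb).1 i)
    _ ≤ b ^ m * ∑ j, |N i j| :=
        mul_le_mul (initVec_le hb i) h1 (abs_nonneg _) (by positivity)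

/-- Existence of the growth rate, with two-sided bounds without subexponential error terms. -/
lemma exists_growth (hb : 3 ≤ b) (hm : 2 ≤ m) (hp : 1 ≤ p) :
    ∃ lam : ℝ, 2 ≤ lam ∧
      Tendsto (fun k : ℕ => matNorm ((matA b m ^ p * matB b m ^ q) ^ k) ^ (1 / (k : ℝ)))
        atTop (nhds lam) ∧
      ∃ c C : ℝ, 0 < c ∧ 0 < C ∧ ∀ k,
        c * lam ^ k ≤ blockCount b m p q hm k ∧ blockCount b m p q hm k ≤ C * lam ^ k := by
  have hb' : (3 : ℝ) ≤ b := by exact_mod_cast hb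
  have hm' : (2 : ℝ) ≤ m := by exact_mod_cast hm
  obtain ⟨lam, hlam, h⟩ := fekete_two_sided (blockCount b m p q hm)
    (two_pow_le_blockCount p q hb hm hp) (1 / (2 * (2 * b) ^ m * b ^ m)) (2 * b)
    (by positivity) (by positivity) (le_blockCount_add p q hb hm) (blockCount_add_le p q hb hm)
  set c := (2 * b : ℝ)⁻¹ with hc
  set C := (1 / (2 * (2 * b) ^ m * b ^ m) : ℝ)⁻¹ with hC
  have hc0 : 0 < c := by positivity
  have hC0 : 0 < C := by positivity
  refine ⟨lam, hlam, ?_, c, C, hc0, hC0, h⟩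
  have hroot : ∀ K : ℝ, 0 < K →
      Tendsto (fun k : ℕ => (K * lam ^ k) ^ (1 / (k : ℝ))) atTop (nhds lam) := by
    intro K hK
    have h1 : Tendsto (fun k : ℕ => K ^ (1 / (k : ℝ))) atTop (nhds (K ^ (0 : ℝ))) :=
      (Real.continuousAt_const_rpow hK.ne').tendsto.comp
        (tendsto_const_div_atTop_nhds_zero_nat (1 : ℝ))
    have h2 := h1.mul_const lam
    rw [Real.rpow_zero, one_mul] at h2
    refine h2.congr' ?_
    filter_upwards [eventually_gt_atTop 0] with k hk
    rw [Real.mul_rpow hK.le (by positivity), ← Real.rpow_natCast, ← Real.rpow_mul (by linarith),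
      mul_one_div_cancel (by positivity), Real.rpow_one]
  have hbm : (0 : ℝ) < b ^ m := by positivity
  refine tendsto_of_tendsto_of_tendsto_of_le_of_le (hroot (c / b ^ m) (by positivity))
    (hroot (m * (m * (2 * b * C))) (by positivity)) (fun k => ?_) (fun k => ?_)
  · refine Real.rpow_le_rpow (by positivity) ?_ (by positivity)
    rw [div_mul_eq_mul_div, div_le_iff₀ hbm]
    linarith [(h k).1, blockCount_le_matNorm p q hb hm k]
  · refine Real.rpow_le_rpow ?_ ?_ (by positivity)
    · exact Finset.sum_nonneg fun i _ => Finset.sum_nonneg fun j _ => abs_nonneg _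
    · refine (matNorm_le_blockCount p q hb hm k).trans ?_
      have := mul_le_mul_of_nonneg_left (h k).2 (show (0 : ℝ) ≤ m * (m * (2 * b)) by positivity)
      linarith

end Growth

/-! ### Counting admissible words -/

section Words

variable {b : ℕ} [NeZero b] (m : ℕ) (O : ℕ → ℕ → Fin b)

/-- The sequence `d` reads the `i`-th forbidden word at position `i`. The letter of the `i`-th
forbidden word sitting at the absolute position `s ∈ [i, i + m)` is `O i s`. -/
def Occ (d : ℕ → Fin b) (i : ℕ) : Prop := ∀ s, i ≤ s → s < i + m → d s = O i s

/-- Admissible words occupying the absolute positions `[k, n)`, encoded as sequences which vanish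
outside `[k, n)`. Only the constraints living inside `[k, n)` are imposed. -/
def Words (k n : ℕ) : Set (ℕ → Fin b) :=
  {d | (∀ s, s < k ∨ n ≤ s → d s = 0) ∧ ∀ i, k ≤ i → i + m ≤ n → ¬ Occ m O d i}

/-- The number of admissible words on `[k, n)`. -/
noncomputable def cnt (k n : ℕ) : ℕ := (Words m O k n).ncard

variable {m O}

lemma occ_congr {d d' : ℕ → Fin b} {i : ℕ} (h : ∀ s, i ≤ s → s < i + m → d s = d' s) :
    Occ m O d i ↔ Occ m O d' i := by
  constructor
  · intro H s h1 h2
    rw [← h s h1 h2]; exact H s h1 h2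
  · intro H s h1 h2
    rw [h s h1 h2]; exact H s h1 h2

lemma finite_words (k n : ℕ) : (Words m O k n).Finite := by
  refine Set.Finite.of_finite_image (f := fun d (i : Fin n) => d i.1) (Set.toFinite _) ?_
  intro d hd d' hd' h
  funext s
  by_cases hs : s < n
  · exact congrFun h ⟨s, hs⟩
  · rw [hd.1 s (Or.inr (by omega)), hd'.1 s (Or.inr (by omega))]

lemma ncard_ne (c : Fin b) : ({a | a ≠ c} : Set (Fin b)).ncard = b - 1 := by
  have h := Set.ncard_add_ncard_compl ({c} : Set (Fin b))
  rw [Set.ncard_singleton, Nat.card_eq_fintype_card, Fintype.card_fin] at h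
  have : ({a | a ≠ c} : Set (Fin b)) = {c}ᶜ := by ext; simp
  rw [this]
  omega

lemma ncard_univ_fin : (Set.univ : Set (Fin b)).ncard = b := by
  rw [Set.ncard_univ, Nat.card_eq_fintype_card, Fintype.card_fin]

lemma cnt_self (hm : 1 ≤ m) (k : ℕ) : cnt m O k k = 1 := by
  have : Words m O k k = {fun _ => 0} := by
    ext d
    simp only [Words, Set.mem_ofPred_eq, Set.mem_singleton_iff]
    constructor
    · intro h
      funext s
      exact h.1 s (by omega)
    · rintro rfl
      exact ⟨fun _ _ => rfl, fun i _ _ => by omega⟩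
  rw [cnt, this, Set.ncard_singleton]

/-- Prepending a letter different from the first letter of the forbidden word is always allowed. -/
lemma mul_cnt_succ_le (hm : 1 ≤ m) {k n : ℕ} (hk : k < n) :
    (b - 1) * cnt m O (k + 1) n ≤ cnt m O k n := by
  rw [mul_comm, cnt, ← ncard_ne (O k k), ← Set.ncard_prod]
  refine Set.ncard_le_ncard_of_injOn (fun x => Function.update x.1 k x.2) ?_ ?_ (finite_words _ _)
  · rintro ⟨d, a⟩ ⟨hd, ha⟩
    refine ⟨fun s hs => ?_, fun i hi hin => ?_⟩
    · have : s ≠ k := by omega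
      simp only [Function.update_of_ne this]
      exact hd.1 s (by omega)
    · rcases hi.eq_or_lt with rfl | hi
      · intro h
        have := h k le_rfl (by omega)
        simp only [Function.update_self] at this
        exact ha this
      · rw [occ_congr (d' := d)]
        · exact hd.2 i hi hin
        · intro s h1 h2
          exact Function.update_of_ne (by omega) _ _
  · rintro ⟨d, a⟩ ⟨hd, ha⟩ ⟨d', a'⟩ ⟨hd', ha'⟩ h
    simp only at h
    refine Prod.ext (funext fun s => ?_) ?_
    · by_cases hs : s = k
      · subst hs
        exact (hd.1 s (by omega)).trans (hd'.1 s (by omega)).symm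
      · have := congrFun h s
        simpa [Function.update_of_ne hs] using this
    · have := congrFun h k
      simpa using this

/-- Erasing the first letter of an admissible word. -/
lemma cnt_le_mul_cnt_succ {k n : ℕ} :
    cnt m O k n ≤ b * cnt m O (k + 1) n := by
  have h : b * cnt m O (k + 1) n =
      (Words m O (k + 1) n ×ˢ (Set.univ : Set (Fin b))).ncard := by
    rw [Set.ncard_prod, ncard_univ_fin, mul_comm, cnt]
  rw [h, cnt]
  refine Set.ncard_le_ncard_of_injOn (fun d => (Function.update d k 0, d k)) ?_ ?_
    ((finite_words _ _).prod Set.finite_univ)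
  · intro d hd
    refine ⟨⟨fun s hs => ?_, fun i hi hin => ?_⟩, Set.mem_univ _⟩
    · by_cases h : s = k
      · subst h; simp
      · simp only [Function.update_of_ne h]
        exact hd.1 s (by omega)
    · rw [occ_congr (d' := d)]
      · exact hd.2 i (by omega) hin
      · intro s h1 h2
        exact Function.update_of_ne (by omega) _ _
  · intro d hd d' hd' h
    funext s
    by_cases hs : s = k
    · subst hs; exact congrArg Prod.snd h
    · have := congrFun (congrArg Prod.fst h) s
      simpa [Function.update_of_ne hs] using this

/-- Some letter different from a given one. -/
lemma exists_ne_letter (hb : 3 ≤ b) (c : Fin b) : ∃ a, a ≠ c := by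
  have : Nontrivial (Fin b) := Fin.nontrivial_iff_two_le.2 (by omega)
  exact exists_ne c

/-- The only new constraint is avoided by appending a letter different from its last letter. -/
lemma cnt_le_cnt_succ (hb : 3 ≤ b) (hm : 1 ≤ m) {k n : ℕ} (hk : k ≤ n) :
    cnt m O k n ≤ cnt m O k (n + 1) := by
  obtain ⟨e, he⟩ := exists_ne_letter hb (O (n + 1 - m) n)
  refine Set.ncard_le_ncard_of_injOn (fun d => Function.update d n e) ?_ ?_ (finite_words _ _)
  · intro d hd
    refine ⟨fun s hs => ?_, fun i hi hin => ?_⟩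
    · have : s ≠ n := by omega
      simp only [Function.update_of_ne this]
      exact hd.1 s (by omega)
    · by_cases h : i + m ≤ n
      · rw [occ_congr (d' := d)]
        · exact hd.2 i hi h
        · intro s h1 h2
          exact Function.update_of_ne (by omega) _ _
      · intro H
        have := H n (by omega) (by omega)
        rw [Function.update_self] at this
        have hi' : i = n + 1 - m := by omega
        rw [hi'] at this
        exact he this
  · intro d hd d' hd' h
    funext s
    by_cases hs : s = n
    · subst hs
      exact (hd.1 s (by omega)).trans (hd'.1 s (by omega)).symm
    · have := congrFun h s
      simpa [Function.update_of_ne hs] using this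

lemma update_injOn {k n : ℕ} (t : Set (Fin b)) :
    Set.InjOn (fun x : (ℕ → Fin b) × Fin b => Function.update x.1 n x.2) (Words m O k n ×ˢ t) := by
  rintro ⟨d, a⟩ ⟨hd, ha⟩ ⟨d', a'⟩ ⟨hd', ha'⟩ h
  simp only at h
  refine Prod.ext (funext fun s => ?_) ?_
  · by_cases hs : s = n
    · subst hs
      exact (hd.1 s (by omega)).trans (hd'.1 s (by omega)).symm
    · have := congrFun h s
      simpa [Function.update_of_ne hs] using this
  · have := congrFun h n
    simpa using this

/-- Words on `[k, n + 1)` for which only the constraints inside `[k, n)` are imposed. -/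
lemma mem_update_image {k n : ℕ} (hk : k ≤ n) (d : ℕ → Fin b) :
    d ∈ (fun x : (ℕ → Fin b) × Fin b => Function.update x.1 n x.2) ''
        (Words m O k n ×ˢ Set.univ) ↔
      (∀ s, s < k ∨ n + 1 ≤ s → d s = 0) ∧ ∀ i, k ≤ i → i + m ≤ n → ¬ Occ m O d i := by
  constructor
  · rintro ⟨⟨e, a⟩, ⟨he, -⟩, rfl⟩
    refine ⟨fun s hs => ?_, fun i hi hin => ?_⟩
    · have : s ≠ n := by omega
      simp only [Function.update_of_ne this]
      exact he.1 s (by omega)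
    · rw [occ_congr (d' := e)]
      · exact he.2 i hi hin
      · intro s h1 h2
        exact Function.update_of_ne (by omega) _ _
  · rintro ⟨h1, h2⟩
    refine ⟨(Function.update d n 0, d n), ⟨⟨fun s hs => ?_, fun i hi hin => ?_⟩, Set.mem_univ _⟩,
      by simp⟩
    · by_cases h : s = n
      · subst h; simp
      · simp only [Function.update_of_ne h]
        exact h1 s (by omega)
    · rw [occ_congr (d' := d)]
      · exact h2 i hi hin
      · intro s h1 h2
        exact Function.update_of_ne (by omega) _ _

lemma ncard_update_image (k n : ℕ) :
    ((fun x : (ℕ → Fin b) × Fin b => Function.update x.1 n x.2) ''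
        (Words m O k n ×ˢ Set.univ)).ncard = b * cnt m O k n := by
  rw [(update_injOn _).ncard_image, Set.ncard_prod, ncard_univ_fin, mul_comm, cnt]

lemma cnt_succ_le {k n : ℕ} (hk : k ≤ n) : cnt m O k (n + 1) ≤ b * cnt m O k n := by
  rw [← ncard_update_image, cnt]
  refine Set.ncard_le_ncard (fun d hd => ?_)
    (((finite_words _ _).prod Set.finite_univ).image _)
  rw [mem_update_image hk]
  exact ⟨hd.1, fun i hi hin => hd.2 i hi (by omega)⟩

lemma cnt_succ_of_lt {k n : ℕ} (hk : k ≤ n) (hn : n + 1 < k + m) :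
    cnt m O k (n + 1) = b * cnt m O k n := by
  rw [← ncard_update_image, cnt]
  congr 1
  ext d
  rw [mem_update_image hk]
  exact ⟨fun hd => ⟨hd.1, fun i hi hin => by omega⟩, fun hd => ⟨hd.1, fun i hi hin => by omega⟩⟩

/-- The recursion at a totally distinct position: a word violating only the `i`-th constraint is
an arbitrary admissible word on `[k, i)` followed by the `i`-th forbidden word. -/
lemma cnt_distinct (hm : 1 ≤ m) {k i : ℕ} (hk : k ≤ i)
    (h : ∀ i', k ≤ i' → i' < i → i < i' + m → ∃ s, i ≤ s ∧ s < i' + m ∧ O i s ≠ O i' s) :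
    cnt m O k (i + m) + cnt m O k i = b * cnt m O k (i + m - 1) := by
  -- `Φ d` is the word `d` on `[k, i)` followed by the `i`-th forbidden word
  set Φ : (ℕ → Fin b) → ℕ → Fin b := fun d s =>
    if s < i then d s else if s < i + m then O i s else 0 with hΦ
  have hΦ1 : ∀ d s, s < i → Φ d s = d s := fun d s hs => by simp [hΦ, hs]
  have hΦ2 : ∀ d s, i ≤ s → s < i + m → Φ d s = O i s := fun d s hs hs' => by
    simp [hΦ, hs', not_lt.2 hs]
  have hΦ3 : ∀ d s, i + m ≤ s → Φ d s = 0 := fun d s hs => by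
    simp only [hΦ]; rw [if_neg (by omega), if_neg (by omega)]
  have hinj : Set.InjOn Φ (Words m O k i) := by
    intro d hd d' hd' hh
    funext s
    by_cases hs : s < i
    · rw [← hΦ1 d s hs, hh, hΦ1 d' s hs]
    · exact (hd.1 s (by omega)).trans (hd'.1 s (by omega)).symm
  have hdisj : Disjoint (Words m O k (i + m)) (Φ '' Words m O k i) := by
    rw [Set.disjoint_left]
    rintro _ hd ⟨d, -, rfl⟩
    exact hd.2 i hk le_rfl (hΦ2 d)
  rw [← ncard_update_image, cnt, cnt, ← hinj.ncard_image,
    ← Set.ncard_union_eq hdisj (finite_words _ _) ((finite_words _ _).image _)]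
  congr 1
  ext d
  rw [mem_update_image (by omega), show i + m - 1 + 1 = i + m by omega]
  constructor
  · rintro (hd | ⟨d, hd, rfl⟩)
    · exact ⟨hd.1, fun i hi hin => hd.2 i hi (by omega)⟩
    · refine ⟨fun s hs => ?_, fun i' hi' hin => ?_⟩
      · rcases hs with hs | hs
        · rw [hΦ1 _ _ (by omega)]; exact hd.1 s (by omega)
        · exact hΦ3 _ _ hs
      · -- a constraint reaching beyond `i` disagrees with the `i`-th word on the overlap
        by_cases h1 : i' + m ≤ i
        · rw [occ_congr (d' := d)]
          · exact hd.2 i' hi' h1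
          · intro s h2 h3
            exact hΦ1 _ _ (by omega)
        · intro hocc
          obtain ⟨s, h2, h3, h4⟩ := h i' hi' (by omega) (by omega)
          rw [← hΦ2 d s h2 (by omega), hocc s (by omega) h3] at h4
          exact h4 rfl
  · rintro ⟨h1, h2⟩
    by_cases hocc : Occ m O d i
    · refine Or.inr ⟨fun s => if s < i then d s else 0, ⟨fun s hs => ?_, fun i' hi' hin => ?_⟩, ?_⟩
      · simp only
        split_ifs
        · exact h1 s (by omega)
        · rfl
      · rw [occ_congr (d' := d)]
        · exact h2 i' hi' (by omega)
        · intro s h3 h4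
          exact if_pos (by omega)
      · funext s
        by_cases hs : s < i
        · exact (hΦ1 (fun s => if s < i then d s else 0) s hs).trans (if_pos hs)
        · by_cases hs' : s < i + m
          · exact (hΦ2 (fun s => if s < i then d s else 0) s (by omega) hs').trans (hocc s (by omega) hs').symm
          · exact (hΦ3 (fun s => if s < i then d s else 0) s (by omega)).trans (h1 s (by omega)).symm
    · refine Or.inl ⟨h1, fun i' hi' hin => ?_⟩
      by_cases h3 : i' = i
      · subst h3; exact hocc
      · exact h2 i' hi' (by omega)

/-- The recursion at a progressively overlapping position: classify words by the last position
where they differ from the `i`-th forbidden word. -/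
lemma cnt_overlap {k i : ℕ} (hk : k ≤ i)
    (h : ∀ i', k ≤ i' → i' < i → i < i' + m → ∀ s, i ≤ s → s < i' + m → O i s = O i' s) :
    cnt m O k (i + m) = (b - 1) * ∑ t ∈ Finset.range m, cnt m O k (i + t) := by
  -- `S t`: admissible words agreeing with the `i`-th forbidden word on `[i + t, i + m)`
  set S : ℕ → Set (ℕ → Fin b) := fun t =>
    {d | d ∈ Words m O k (i + m) ∧ ∀ s, i + t ≤ s → s < i + m → d s = O i s} with hS
  have key : ∀ t, t ≤ m → (S t).ncard = (b - 1) * ∑ t ∈ Finset.range t, cnt m O k (i + t) := by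
    intro t
    induction t with
    | zero =>
      intro _
      have : S 0 = ∅ := by
        ext d
        simp only [hS, Set.mem_ofPred_eq, Set.mem_empty_iff_false, iff_false]
        rintro ⟨h1, h2⟩
        exact h1.2 i hk le_rfl h2
      simp [this]
    | succ t ih =>
      intro ht
      specialize ih (by omega)
      set r := i + t with hr
      -- words of `S (t + 1)` outside `S t`: a word on `[k, r)`, then a letter different from the
      -- one of the `i`-th forbidden word at `r`, then the remaining letters of that word
      set Φ : (ℕ → Fin b) × Fin b → ℕ → Fin b := fun x s =>
        if s < r then x.1 s else if s = r then x.2 else if s < i + m then O i s else 0 with hΦ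
      have hΦ1 : ∀ x s, s < r → Φ x s = x.1 s := fun x s hs => by simp [hΦ, hs]
      have hΦr : ∀ x, Φ x r = x.2 := fun x => by simp [hΦ]
      have hΦ2 : ∀ x s, r < s → s < i + m → Φ x s = O i s := fun d s hs hs' => by
        simp only [hΦ]; rw [if_neg (by omega), if_neg (by omega), if_pos hs']
      have hΦ3 : ∀ x s, i + m ≤ s → Φ x s = 0 := fun d s hs => by
        simp only [hΦ]; rw [if_neg (by omega), if_neg (by omega), if_neg (by omega)]
      have hinj : Set.InjOn Φ (Words m O k r ×ˢ {a | a ≠ O i r}) := by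
        rintro ⟨d, a⟩ ⟨hd, ha⟩ ⟨d', a'⟩ ⟨hd', ha'⟩ hh
        refine Prod.ext (funext fun s => ?_) ?_
        · by_cases hs : s < r
          · rw [← hΦ1 (d, a) s hs, hh, hΦ1 _ s hs]
          · exact (hd.1 s (by omega)).trans (hd'.1 s (by omega)).symm
        · rw [← hΦr (d, a), hh, hΦr]
      have hdisj : Disjoint (S t) (Φ '' (Words m O k r ×ˢ {a | a ≠ O i r})) := by
        rw [Set.disjoint_left]
        rintro _ hd ⟨⟨d, a⟩, ⟨-, ha⟩, rfl⟩
        have := hd.2 r le_rfl (by omega)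
        rw [hΦr] at this
        exact ha this
      have hfin : (S t).Finite := (finite_words (m := m) (O := O) k (i + m)).subset fun d hd => hd.1
      have hunion : S (t + 1) = S t ∪ Φ '' (Words m O k r ×ˢ {a | a ≠ O i r}) := by
        ext d
        constructor
        · rintro ⟨h1, h2⟩
          by_cases hd : d r = O i r
          · refine Or.inl ⟨h1, fun s h3 h4 => ?_⟩
            by_cases hs : s = r
            · rw [hs, hd]
            · exact h2 s (by omega) h4
          · refine Or.inr ⟨(fun s => if s < r then d s else 0, d r),
              ⟨⟨fun s hs => ?_, fun i' hi' hin => ?_⟩, hd⟩, ?_⟩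
            · simp only
              split_ifs
              · exact h1.1 s (by omega)
              · rfl
            · rw [occ_congr (d' := d)]
              · exact h1.2 i' hi' (by omega)
              · intro s h3 h4
                exact if_pos (by omega)
            · funext s
              rcases lt_trichotomy s r with hs | hs | hs
              · rw [hΦ1 _ _ hs]; exact if_pos hs
              · rw [hs, hΦr]
              · by_cases hs' : s < i + m
                · rw [hΦ2 _ _ hs hs', h2 s (by omega) hs']
                · rw [hΦ3 _ _ (by omega), h1.1 s (by omega)]
        · rintro (hd | ⟨⟨d, a⟩, ⟨hd, ha⟩, rfl⟩)
          · exact ⟨hd.1, fun s h1 h2 => hd.2 s (by omega) h2⟩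
          · refine ⟨⟨fun s hs => ?_, fun i' hi' hin => ?_⟩, fun s h1 h2 => hΦ2 _ _ (by omega) h2⟩
            · rcases hs with hs | hs
              · rw [hΦ1 _ _ (by omega)]; exact hd.1 s (by omega)
              · exact hΦ3 _ _ hs
            · by_cases h1 : i' + m ≤ r
              · rw [occ_congr (d' := d)]
                · exact hd.2 i' hi' h1
                · intro s h2 h3
                  exact hΦ1 _ _ (by omega)
              · -- by overlap, all constraints straddling `r` prescribe there the letter `O i r`
                intro hocc
                have h2 := hocc r (by omega) (by omega)
                rw [hΦr] at h2
                refine ha (h2.trans ?_)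
                by_cases h3 : i' = i
                · rw [h3]
                · exact (h i' hi' (by omega) (by omega) r (by omega) (by omega)).symm
      rw [hunion, Set.ncard_union_eq hdisj hfin
        (((finite_words _ _).prod (Set.toFinite _)).image _), ih,
        hinj.ncard_image, Set.ncard_prod, ncard_ne, Finset.sum_range_succ, mul_add,
        ← hr, cnt, mul_comm (b - 1) (Words m O k r).ncard]
  have hlast : S m = Words m O k (i + m) := by
    ext d
    exact ⟨fun hd => hd.1, fun hd => ⟨hd, fun s h1 h2 => by omega⟩⟩
  rw [cnt, ← hlast]
  exact key m le_rfl

lemma pow_mul_cnt_le (hb : 3 ≤ b) (hm : 1 ≤ m) {k n : ℕ} (j : ℕ) (hk : k + j ≤ n) :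
    2 ^ j * cnt m O (k + j) n ≤ cnt m O k n := by
  induction j with
  | zero => simp
  | succ j ih =>
    refine le_trans ?_ (ih (by omega))
    have h1 := mul_cnt_succ_le (O := O) hm (show k + j < n by omega)
    have h2 : 2 * cnt m O (k + j + 1) n ≤ (b - 1) * cnt m O (k + j + 1) n :=
      Nat.mul_le_mul_right _ (by omega)
    rw [pow_succ, mul_assoc]
    exact Nat.mul_le_mul_left _ (h2.trans h1)

/-- Every admissible word on `[0, k)` has at least `2^(-m)` times as many admissible extensions
to `[0, n)` as there are admissible words on `[k, n)`. For `1 ≤ j ≤ m` at most one straddling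
constraint `[i, i + m)` has its end `i + m` at `k + j`. It excludes at most a proportion `2^(-j)` of the
words on `[k, n)`, since `b - 1 ≥ 2`, and these proportions add up to `1 - 2^(-m)`. -/
lemma cnt_le_extensions (hb : 3 ≤ b) (hm : 1 ≤ m) {k n : ℕ} (hk : k ≤ n) {u : ℕ → Fin b}
    (hu : u ∈ Words m O 0 k) :
    cnt m O k n ≤ 2 ^ m * {d | d ∈ Words m O 0 n ∧ ∀ s, s < k → d s = u s}.ncard := by
  set join : (ℕ → Fin b) → ℕ → Fin b := fun d s => if s < k then u s else d s with hjoin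
  have hj1 : ∀ d s, s < k → join d s = u s := fun d s hs => by simp [hjoin, hs]
  have hj2 : ∀ d s, k ≤ s → join d s = d s := fun d s hs => by simp [hjoin, not_lt.2 hs]
  -- `G J`: words on `[k, n)` which, appended to `u`, meet the straddling constraints ending at
  -- `k + J` at the latest
  set G : ℕ → Set (ℕ → Fin b) := fun J =>
    {d | d ∈ Words m O k n ∧ ∀ i, i < k → k < i + m → i + m ≤ k + J → i + m ≤ n →
      ¬ Occ m O (join d) i} with hG
  have hGfin : ∀ J, (G J).Finite := fun J => (finite_words k n).subset fun d hd => hd.1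
  have key : ∀ J, cnt m O k n ≤ 2 ^ J * (G J).ncard := by
    intro J
    induction J with
    | zero =>
      have : G 0 = Words m O k n := by
        ext d
        exact ⟨fun hd => hd.1, fun hd => ⟨hd, fun i _ _ _ => by omega⟩⟩
      simp [this, cnt]
    | succ J ih =>
      -- words whose first `J + 1` letters are those prescribed by the constraint ending at
      -- `k + (J + 1)`; the truncated subtraction is harmless, as `B` only has to be small
      set B : Set (ℕ → Fin b) := {d | d ∈ Words m O k n ∧ k + (J + 1) ≤ n ∧
        ∀ s, k ≤ s → s < k + (J + 1) → d s = O (k + (J + 1) - m) s} with hB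
      have hBfin : B.Finite := (finite_words k n).subset fun d hd => hd.1
      have hBcard : 2 ^ (J + 1) * B.ncard ≤ cnt m O k n := by
        by_cases hn : k + (J + 1) ≤ n
        · refine le_trans (Nat.mul_le_mul_left _ ?_) (pow_mul_cnt_le hb hm (J + 1) hn)
          refine Set.ncard_le_ncard_of_injOn (fun d s => if s < k + (J + 1) then 0 else d s) ?_ ?_
            (finite_words _ _)
          · rintro d ⟨hd, -, -⟩
            refine ⟨fun s hs => ?_, fun i hi hin => ?_⟩
            · simp only
              split_ifs
              · rfl
              · exact hd.1 s (by omega)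
            · rw [occ_congr (d' := d)]
              · exact hd.2 i (by omega) hin
              · intro s h1 h2
                exact if_neg (by omega)
          · rintro d ⟨hd, -, hd2⟩ d' ⟨hd', -, hd2'⟩ hh
            funext s
            by_cases hs : s < k
            · rw [hd.1 s (by omega), hd'.1 s (by omega)]
            · by_cases hs' : s < k + (J + 1)
              · rw [hd2 s (by omega) hs', hd2' s (by omega) hs']
              · have := congrFun hh s
                simpa [hs'] using this
        · have : B = ∅ := by
            ext d
            simp only [hB, Set.mem_ofPred_eq, Set.mem_empty_iff_false, iff_false]
            rintro ⟨-, h2, -⟩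
            exact hn h2
          simp [this]
      have hsub : G J ⊆ G (J + 1) ∪ B := by
        intro d hd
        by_cases hdB : d ∈ B
        · exact Or.inr hdB
        · refine Or.inl ⟨hd.1, fun i h1 h2 h3 h4 hocc => ?_⟩
          rcases Nat.lt_or_ge (k + J) (i + m) with h5 | h5
          · refine hdB ⟨hd.1, by omega, fun s h6 h7 => ?_⟩
            have := hocc s (by omega) (by omega)
            rw [hj2 _ _ h6] at this
            rw [this]
            congr 1
            omega
          · exact hd.2 i h1 h2 h5 h4 hocc
      have h1 : (G J).ncard ≤ (G (J + 1)).ncard + B.ncard :=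
        (Set.ncard_le_ncard hsub ((hGfin _).union hBfin)).trans (Set.ncard_union_le _ _)
      have h2 := Nat.mul_le_mul_left (2 ^ J) h1
      rw [pow_succ] at hBcard ⊢
      nlinarith
  refine (key m).trans (Nat.mul_le_mul_left _ ?_)
  refine Set.ncard_le_ncard_of_injOn join ?_ ?_ ((finite_words 0 n).subset fun d hd => hd.1)
  · rintro d ⟨hd1, hd2⟩
    refine ⟨⟨fun s hs => ?_, fun i hi hin => ?_⟩, fun s hs => hj1 d s hs⟩
    · rw [hj2 _ _ (by omega)]
      exact hd1.1 s (by omega)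
    · by_cases h1 : i + m ≤ k
      · rw [occ_congr (d' := u)]
        · exact hu.2 i hi h1
        · intro s h2 h3
          exact hj1 _ _ (by omega)
      · by_cases h2 : i < k
        · exact hd2 i h2 (by omega) (by omega) hin
        · rw [occ_congr (d' := d)]
          · exact hd1.2 i (by omega) hin
          · intro s h3 h4
            exact hj2 _ _ (by omega)
  · rintro d ⟨hd, -⟩ d' ⟨hd', -⟩ hh
    funext s
    by_cases hs : s < k
    · rw [hd.1 s (by omega), hd'.1 s (by omega)]
    · rw [← hj2 d s (by omega), hh, hj2 d' s (by omega)]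

/-- A finite admissible word extends to an infinite sequence meeting all the constraints. -/
lemma exists_infinite_extension (hb : 3 ≤ b) (hm : 1 ≤ m) {n : ℕ} {u : ℕ → Fin b}
    (hu : u ∈ Words m O 0 n) : ∃ d : ℕ → Fin b, (∀ i, ¬ Occ m O d i) ∧ ∀ s, s < n → d s = u s := by
  choose e he using fun s => exists_ne_letter hb (O (s + 1 - m) s)
  refine ⟨fun s => if s < n then u s else e s, fun i hocc => ?_, fun s hs => if_pos hs⟩
  by_cases h : i + m ≤ n
  · refine hu.2 i (Nat.zero_le _) h ((occ_congr fun s h1 h2 => ?_).1 hocc)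
    exact if_pos (by omega)
  · have := hocc (i + m - 1) (by omega) (by omega)
    simp only at this
    rw [if_neg (by omega)] at this
    have h2 := he (i + m - 1)
    rw [show i + m - 1 + 1 - m = i by omega] at h2
    exact h2 this

/-- The truncation of a sequence meeting all the constraints is an admissible word. -/
lemma truncate_mem_words {d : ℕ → Fin b} (hd : ∀ i, ¬ Occ m O d i) (n : ℕ) :
    (fun s => if s < n then d s else 0) ∈ Words m O 0 n := by
  refine ⟨fun s hs => if_neg (by omega), fun i _ hin => ?_⟩
  rw [occ_congr (d' := d)]
  · exact hd i
  · intro s h1 h2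
    exact if_pos (by omega)

end Words

/-! ### Word counts of `L_{p,q}` sequences are comparable to powers of `λ^{1/(p+q)}` -/

section Asymptotics

variable {b m p q : ℕ} [NeZero b]

/-- The letter of the word `ω i`, read at position `i`, sitting at the absolute position `s`
(the value outside `[i, i + m)` is irrelevant). -/
def letter (ω : ℕ → Fin m → Fin b) (i s : ℕ) : Fin b :=
  if h : s - i < m then ω i ⟨s - i, h⟩ else 0

lemma letter_add (ω : ℕ → Fin m → Fin b) (i : ℕ) (t : Fin m) : letter ω i (i + t) = ω i t := by
  have h : i + t.1 - i = t.1 := by omega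
  simp [letter, h]

lemma ProgOverlapAt.letter_eq {ω : ℕ → Fin m → Fin b} {i : ℕ} (h : ProgOverlapAt b m ω i) (i' : ℕ)
    (h1 : i' < i) (h2 : i < i' + m) (s : ℕ) (h3 : i ≤ s) (h4 : s < i' + m) :
    letter ω i s = letter ω i' s := by
  obtain ⟨j, rfl⟩ := Nat.exists_eq_add_of_lt h1
  have := h (j + 1) (by omega) (by omega) (s - (i' + j + 1)) (by omega)
  have e1 : i' + j + 1 - (j + 1) = i' := by omega
  have e2 : s - (i' + j + 1) + (j + 1) = s - i' := by omega
  have h5 : s - (i' + j + 1) < m := by omega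
  have h6 : s - i' < m := by omega
  simp only [e1, e2] at this
  simp only [letter, h5, h6, dif_pos]
  exact this

lemma TotDistinctAt.exists_letter_ne {ω : ℕ → Fin m → Fin b} {i : ℕ} (h : TotDistinctAt b m ω i)
    (i' : ℕ) (h1 : i' < i) (h2 : i < i' + m) :
    ∃ s, i ≤ s ∧ s < i' + m ∧ letter ω i s ≠ letter ω i' s := by
  obtain ⟨j, rfl⟩ := Nat.exists_eq_add_of_lt h1
  by_contra! hcon
  refine h (j + 1) (by omega) (by omega) fun t ht => ?_
  have := hcon (i' + j + 1 + t) (by omega) (by omega)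
  have e1 : i' + j + 1 - (j + 1) = i' := by omega
  have e2 : i' + j + 1 + t - (i' + j + 1) = t := by omega
  have e3 : i' + j + 1 + t - i' = t + (j + 1) := by omega
  have h5 : t < m := by omega
  simp only [letter, e2, e3, h5, ht, dif_pos] at this
  simp only [e1]
  exact this

/-- The vector of the `m` word counts preceding the position `i + m`, most recent first. -/
noncomputable def cntVec (m : ℕ) (O : ℕ → ℕ → Fin b) (k i : ℕ) : Fin m → ℝ :=
  fun j => cnt m O k (i + m - 1 - j.1)

variable {O : ℕ → ℕ → Fin b}

lemma cntVec_overlap (hb : 3 ≤ b) (hm : 2 ≤ m) {k i : ℕ} (hk : k ≤ i)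
    (h : ∀ i', k ≤ i' → i' < i → i < i' + m → ∀ s, i ≤ s → s < i' + m → O i s = O i' s) :
    cntVec m O k (i + 1) = Matrix.vecMul (cntVec m O k i) (matA b m) := by
  funext j
  rcases Nat.eq_zero_or_pos j.1 with hj | hj
  · rw [vecMul_matA_zero _ _ hj]
    have e : i + 1 + m - 1 - j.1 = i + m := by omega
    simp only [cntVec, e]
    rw [cnt_overlap hk h]
    push_cast [Nat.cast_sub (show 1 ≤ b by omega)]
    congr 1
    rw [← Fin.sum_univ_eq_sum_range (fun t => (cnt m O k (i + t) : ℝ)) m,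
      ← Equiv.sum_comp Fin.revPerm]
    refine Finset.sum_congr rfl fun t _ => ?_
    have := t.isLt
    simp only [Fin.revPerm_apply, Fin.val_rev]
    congr 2
    omega
  · rw [vecMul_matA_succ _ ⟨j.1 - 1, by omega⟩ j (by simp only; omega)]
    simp only [cntVec]
    congr 2
    omega

lemma cntVec_distinct (hm : 2 ≤ m) {k i : ℕ} (hk : k ≤ i)
    (h : ∀ i', k ≤ i' → i' < i → i < i' + m → ∃ s, i ≤ s ∧ s < i' + m ∧ O i s ≠ O i' s) :
    cntVec m O k (i + 1) = Matrix.vecMul (cntVec m O k i) (matB b m) := by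
  funext j
  rcases Nat.eq_zero_or_pos j.1 with hj | hj
  · rw [vecMul_matB_zero hm _ j ⟨m - 1, by omega⟩ hj rfl]
    have e : i + 1 + m - 1 - j.1 = i + m := by omega
    have e1 : i + m - 1 - j.1 = i + m - 1 := by omega
    have e2 : i + m - 1 - (m - 1) = i := by omega
    simp only [cntVec, e, e1, e2]
    rw [eq_sub_iff_add_eq]
    exact_mod_cast cnt_distinct (by omega) hk h
  · rw [vecMul_matB_succ _ ⟨j.1 - 1, by omega⟩ j (by simp only; omega)]
    simp only [cntVec]
    congr 2
    omega

/-- No forbidden word fits into fewer than `m` positions. -/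
lemma cnt_short (hm : 1 ≤ m) (k r : ℕ) (hr : r < m) : cnt m O k (k + r) = b ^ r := by
  induction r with
  | zero => simpa using cnt_self hm k
  | succ r ih =>
    rw [← add_assoc, cnt_succ_of_lt (by omega) (by omega), ih (by omega), pow_succ, mul_comm]

lemma cntVec_init (hm : 2 ≤ m) (k : ℕ) : cntVec m O k (k + 1) = initVec b m := by
  funext j
  have hj := j.isLt
  simp only [cntVec, initVec]
  split_ifs with h
  · have h1 := cnt_distinct (O := O) (m := m) (by omega) (le_refl k)
      (fun i' h1 h2 => absurd h1 (by omega))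
    rw [cnt_self (by omega), show k + m - 1 = k + (m - 1) by omega,
      cnt_short (by omega) k (m - 1) (by omega), ← pow_succ', show m - 1 + 1 = m by omega] at h1
    rw [show k + 1 + m - 1 - j.1 = k + m by omega, eq_sub_iff_add_eq]
    exact_mod_cast h1
  · rw [show k + 1 + m - 1 - j.1 = k + (m - j.1) by omega, cnt_short (by omega) _ _ (by omega)]
    push_cast
    rfl

/-- At the beginning of a period the word counts are exactly given by the powers of `A^p B^q`. -/
lemma cnt_eq_blockCount (hb : 3 ≤ b) (hm : 2 ≤ m) {ω : ℕ → Fin m → Fin b}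
    (hω : MemLpq b m p q ω) (K l : ℕ) :
    (cnt m (letter ω) (K * (p + q)) (K * (p + q) + m + l * (p + q)) : ℝ) =
      blockCount b m p q hm l := by
  set k := K * (p + q) with hk
  have hpA : ∀ l t, t ≤ p → cntVec m (letter ω) k (k + 1 + l * (p + q) + t) =
      Matrix.vecMul (cntVec m (letter ω) k (k + 1 + l * (p + q))) (matA b m ^ t) := by
    intro l t
    induction t with
    | zero => simp
    | succ t ih =>
      intro ht
      rw [pow_succ, ← Matrix.vecMul_vecMul, ← ih (by omega), ← add_assoc]
      refine cntVec_overlap hb hm (by omega) fun i' _ h2 h3 s h4 h5 => ?_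
      refine ((hω (K + l) _).1 ?_ ?_).letter_eq i' h2 h3 s h4 h5 <;> rw [add_mul, ← hk] <;> omega
  have hpB : ∀ l t, t ≤ q → cntVec m (letter ω) k (k + 1 + l * (p + q) + p + t) =
      Matrix.vecMul (cntVec m (letter ω) k (k + 1 + l * (p + q) + p)) (matB b m ^ t) := by
    intro l t
    induction t with
    | zero => simp
    | succ t ih =>
      intro ht
      rw [pow_succ, ← Matrix.vecMul_vecMul, ← ih (by omega), ← add_assoc]
      refine cntVec_distinct hm (by omega) fun i' _ h2 h3 => ?_
      refine ((hω (K + l) _).2 ?_ ?_).exists_letter_ne i' h2 h3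
      · rw [add_mul, ← hk]; omega
      · rw [add_mul, add_mul, one_mul, ← hk]; omega
  have hmain : ∀ l, cntVec m (letter ω) k (k + 1 + l * (p + q)) =
      Matrix.vecMul (initVec b m) ((matA b m ^ p * matB b m ^ q) ^ l) := by
    intro l
    induction l with
    | zero => simpa using cntVec_init hm k
    | succ l ih =>
      rw [pow_succ, ← Matrix.vecMul_vecMul, ← ih, ← Matrix.vecMul_vecMul, ← hpA l p le_rfl,
        ← hpB l q le_rfl]
      congr 1
      ring
  rw [blockCount, ← hmain l]
  simp only [cntVec]
  congr 2
  omega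

lemma cnt_le_pow_mul_prepend {k n : ℕ} (j : ℕ) : cnt m O k n ≤ b ^ j * cnt m O (k + j) n := by
  induction j with
  | zero => simp
  | succ j ih =>
    refine ih.trans ?_
    rw [pow_succ, mul_assoc, ← add_assoc]
    exact Nat.mul_le_mul_left _ cnt_le_mul_cnt_succ

lemma cnt_le_cnt_add (hb : 3 ≤ b) (hm : 1 ≤ m) {k n : ℕ} (hk : k ≤ n) (j : ℕ) :
    cnt m O k n ≤ cnt m O k (n + j) := by
  induction j with
  | zero => simp
  | succ j ih => exact ih.trans (cnt_le_cnt_succ hb hm (by omega))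

lemma cnt_add_le {k n : ℕ} (hk : k ≤ n) (j : ℕ) : cnt m O k (n + j) ≤ b ^ j * cnt m O k n := by
  induction j with
  | zero => simp
  | succ j ih =>
    refine (cnt_succ_le (n := n + j) (by omega)).trans ?_
    rw [pow_succ', mul_assoc]
    exact Nat.mul_le_mul_left _ ih

/-- If `θ^(p+q) = λ`, the number of admissible words on `[k, n)` is comparable to `θ^(n-k)`,
uniformly in `k ≤ n`. -/
lemma exists_cnt_bounds (hb : 3 ≤ b) (hm : 2 ≤ m) (hp : 1 ≤ p) {ω : ℕ → Fin m → Fin b}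
    (hω : MemLpq b m p q ω) {lam θ c C : ℝ} (hθ : 1 ≤ θ) (hθl : θ ^ (p + q) = lam) (hc : 0 < c)
    (hC : 0 < C)
    (hcC : ∀ k, c * lam ^ k ≤ blockCount b m p q hm k ∧ blockCount b m p q hm k ≤ C * lam ^ k) :
    ∃ c' C' : ℝ, 0 < c' ∧ 0 < C' ∧ ∀ k n, k ≤ n →
      c' * θ ^ (n - k) ≤ cnt m (letter ω) k n ∧ (cnt m (letter ω) k n : ℝ) ≤ C' * θ ^ (n - k) := by
  set P := p + q with hP
  have hb0 : (0 : ℝ) < b := by exact_mod_cast (show 0 < b by omega)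
  have hb1 : (1 : ℝ) ≤ b := by exact_mod_cast (show 1 ≤ b by omega)
  refine ⟨c / b ^ (m + P + P), C * θ ^ (2 * P), by positivity, by positivity, fun k n hkn => ?_⟩
  have hk1 : k / P * P ≤ k := Nat.div_mul_le_self _ _
  have hk2 : k < k / P * P + P := Nat.lt_div_mul_add (by omega)
  have hn1 : (n - k / P * P) / P * P ≤ n - k / P * P := Nat.div_mul_le_self _ _
  have hn2 : n - k / P * P < (n - k / P * P) / P * P + P := Nat.lt_div_mul_add (by omega)
  -- the interval `[K P, K P + m + l P)`, whose count is known, contains `[k, n)` and is longer by at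
  -- most `m + 2 P`
  set K := k / P with hK
  set l := (n - K * P) / P + 1 with hl
  have hl1 : l * P = (n - K * P) / P * P + P := by rw [hl, add_mul, one_mul]
  have heq := cnt_eq_blockCount hb hm hω K l
  rw [← hP] at heq
  obtain ⟨h1, h2⟩ := hcC l
  rw [← hθl, ← pow_mul, mul_comm P l, ← heq] at h1 h2
  obtain ⟨j, hj⟩ := Nat.exists_eq_add_of_le (show n ≤ K * P + m + l * P by omega)
  obtain ⟨i, hi⟩ := Nat.exists_eq_add_of_le hk1
  constructor
  · have h3 : (cnt m (letter ω) (K * P) (K * P + m + l * P) : ℝ) ≤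
        b ^ (m + P + P) * cnt m (letter ω) k n := by
      have h4 := cnt_add_le (m := m) (O := letter ω) (show K * P ≤ n by omega) j
      have h5 := cnt_le_pow_mul_prepend (m := m) (O := letter ω) (k := K * P) (n := n) i
      rw [← hi] at h5
      rw [← hj] at h4
      have h6 := h4.trans (Nat.mul_le_mul_left _ h5)
      rw [← mul_assoc, ← pow_add] at h6
      have h7 := h6.trans (Nat.mul_le_mul_right _ (Nat.pow_le_pow_right (show 1 ≤ b by omega)
        (show j + i ≤ m + P + P by omega)))
      exact_mod_cast h7
    rw [div_mul_eq_mul_div, div_le_iff₀ (by positivity), mul_comm _ ((b : ℝ) ^ _)]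
    refine le_trans ?_ (h1.trans h3)
    gcongr
    omega
  · have h3 : cnt m (letter ω) k n ≤ cnt m (letter ω) (K * P) (K * P + m + l * P) := by
      have h4 := cnt_le_cnt_add (m := m) (O := letter ω) hb (by omega) (show K * P ≤ n by omega) j
      have h5 := pow_mul_cnt_le (m := m) (O := letter ω) hb (by omega : 1 ≤ m) i
        (show K * P + i ≤ n by omega)
      rw [← hi] at h5
      rw [← hj] at h4
      exact (Nat.le_mul_of_pos_left _ (by positivity)).trans (h5.trans h4)
    refine (Nat.cast_le.2 h3).trans (h2.trans ?_)
    rw [mul_assoc, ← pow_add]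
    gcongr
    omega

end Asymptotics

/-! ### Digit expansions and counting of words with a prescribed value -/

section Digits

variable {b : ℕ}

/-- The integer whose base `b` expansion is given by the first `k` digits of `d`. -/
def num (d : ℕ → Fin b) : ℕ → ℕ
  | 0 => 0
  | k + 1 => b * num d k + d k

lemma num_congr {d d' : ℕ → Fin b} {k : ℕ} (h : ∀ s, s < k → d s = d' s) : num d k = num d' k := by
  induction k with
  | zero => rfl
  | succ k ih => rw [num, num, ih fun s hs => h s (by omega), h k (by omega)]

lemma num_inj {d d' : ℕ → Fin b} {k : ℕ} (h : num d k = num d' k) : ∀ s, s < k → d s = d' s := by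
  induction k with
  | zero => intro s hs; omega
  | succ k ih =>
    rw [num, num] at h
    have h1 : (d k).1 = (d' k).1 := by
      have := congrArg (· % b) h
      simpa [Nat.mul_add_mod, Nat.mod_eq_of_lt (d k).isLt, Nat.mod_eq_of_lt (d' k).isLt] using this
    have hb : 0 < b := Fin.pos (d 0)
    have h2 : num d k = num d' k := by
      rw [h1] at h
      exact Nat.eq_of_mul_eq_mul_left hb (by omega)
    intro s hs
    rcases Nat.lt_succ_iff_lt_or_eq.1 hs with hs | rfl
    · exact ih h2 s hs
    · exact Fin.ext h1

lemma sum_ofDigitsTerm (d : ℕ → Fin b) (k : ℕ) :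
    ∑ i ∈ Finset.range k, Real.ofDigitsTerm d i = num d k / (b : ℝ) ^ k := by
  have hb : (b : ℝ) ≠ 0 := by
    have : 0 < b := Fin.pos (d 0)
    positivity
  induction k with
  | zero => simp [num]
  | succ k ih =>
    rw [Finset.sum_range_succ, ih, num, Real.ofDigitsTerm]
    push_cast
    field_simp
    ring

lemma le_ofDigits (d : ℕ → Fin b) (k : ℕ) : (num d k : ℝ) / (b : ℝ) ^ k ≤ Real.ofDigits d := by
  rw [Real.ofDigits_eq_sum_add_ofDigits d k, sum_ofDigitsTerm]
  have := Real.ofDigits_nonneg fun i => d (i + k)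
  have : 0 ≤ ((b : ℝ) ^ k)⁻¹ * Real.ofDigits fun i => d (i + k) := by positivity
  linarith

lemma ofDigits_le (d : ℕ → Fin b) (k : ℕ) :
    Real.ofDigits d ≤ ((num d k : ℝ) + 1) / (b : ℝ) ^ k := by
  rw [Real.ofDigits_eq_sum_add_ofDigits d k, sum_ofDigitsTerm, add_div, one_div]
  have h := Real.ofDigits_le_one fun i => d (i + k)
  have : ((b : ℝ) ^ k)⁻¹ * (Real.ofDigits fun i => d (i + k)) ≤ ((b : ℝ) ^ k)⁻¹ * 1 := by gcongr
  linarith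

/-- A word vanishing from position `k` on has the smallest value among the sequences which start
in the same way. -/
lemma ofDigits_mem_Icc {d u : ℕ → Fin b} [NeZero b] {k : ℕ} (hu : ∀ s, k ≤ s → u s = 0)
    (h : ∀ s, s < k → d s = u s) :
    Real.ofDigits d ∈ Set.Icc (Real.ofDigits u) (Real.ofDigits u + ((b : ℝ) ^ k)⁻¹) := by
  have hu' : Real.ofDigits u = num u k / (b : ℝ) ^ k := by
    rw [Real.ofDigits_eq_sum_add_ofDigits u k, sum_ofDigitsTerm]
    have : (Real.ofDigits fun i => u (i + k)) = 0 := by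
      simp [Real.ofDigits, Real.ofDigitsTerm, hu]
    rw [this]; ring
  have h1 := le_ofDigits d k
  have h2 := ofDigits_le d k
  rw [num_congr h] at h1 h2
  rw [add_div, one_div] at h2
  rw [hu']
  exact ⟨h1, h2⟩

variable [NeZero b] {m : ℕ} {O : ℕ → ℕ → Fin b}

/-- The set of admissible words on `[0, N)` with value in `S`. -/
def wordsIn (m : ℕ) (O : ℕ → ℕ → Fin b) (N : ℕ) (S : Set ℝ) : Set (ℕ → Fin b) :=
  {d | d ∈ Words m O 0 N ∧ Real.ofDigits d ∈ S}

lemma finite_wordsIn (N : ℕ) (S : Set ℝ) : (wordsIn m O N S).Finite :=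
  (finite_words 0 N).subset fun _ h => h.1

lemma wordsIn_mono (N : ℕ) {S T : Set ℝ} (h : S ⊆ T) :
    (wordsIn m O N S).ncard ≤ (wordsIn m O N T).ncard :=
  Set.ncard_le_ncard (fun _ hd => ⟨hd.1, h hd.2⟩) (finite_wordsIn _ _)

/-- An interval of length `L b^{-k}` meets at most `L + 2` cylinders of level `k`. -/
lemma ncard_wordsIn_le {k N : ℕ} (α : ℝ) (L : ℕ) :
    (wordsIn m O N (Set.Icc α (α + L * ((b : ℝ) ^ k)⁻¹))).ncard ≤ (L + 2) * cnt m O k N := by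
  have hb : (0 : ℝ) < (b : ℝ) ^ k := by
    have : 0 < b := Nat.pos_of_ne_zero (NeZero.ne b)
    positivity
  set x := (b : ℝ) ^ k * α with hx
  set I : Set ℕ := ↑(Finset.Icc ⌈x - 1⌉₊ ⌊x + L⌋₊) with hI
  have hIcard : I.ncard ≤ L + 2 := by
    rw [hI, Set.ncard_coe_finset, Nat.card_Icc]
    have h1 : x - 1 ≤ (⌈x - 1⌉₊ : ℝ) := Nat.le_ceil _
    rcases le_or_gt 0 (x + L) with h | h
    · have h2 : (⌊x + L⌋₊ : ℝ) ≤ x + L := Nat.floor_le h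
      have h3 : (⌊x + L⌋₊ : ℝ) ≤ (⌈x - 1⌉₊ : ℝ) + L + 1 := by linarith
      have h4 : ⌊x + L⌋₊ ≤ ⌈x - 1⌉₊ + L + 1 := by exact_mod_cast h3
      omega
    · rw [Nat.floor_of_nonpos h.le]
      omega
  have hfin : (I ×ˢ Words m O k N).Finite := (Finset.finite_toSet _).prod (finite_words _ _)
  refine le_trans ?_ (Nat.mul_le_mul_right _ hIcard)
  rw [cnt, ← Set.ncard_prod]
  refine Set.ncard_le_ncard_of_injOn (fun d => (num d k, fun s => if s < k then 0 else d s))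
    ?_ ?_ hfin
  · rintro d ⟨hd, hd1, hd2⟩
    refine ⟨?_, fun s hs => ?_, fun i hi hin => ?_⟩
    · have h1 := le_ofDigits d k
      have h2 := ofDigits_le d k
      rw [div_le_iff₀ hb] at h1
      rw [le_div_iff₀ hb] at h2
      have h3 : α * (b : ℝ) ^ k ≤ num d k + 1 := le_trans (by gcongr) h2
      have h4 : (num d k : ℝ) ≤ (α + L * ((b : ℝ) ^ k)⁻¹) * (b : ℝ) ^ k := h1.trans (by gcongr)
      have h5 : (α + L * ((b : ℝ) ^ k)⁻¹) * (b : ℝ) ^ k = x + L := by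
        rw [hx]; field_simp
      simp only [hI, Finset.coe_Icc, Set.mem_Icc]
      refine ⟨Nat.ceil_le.2 (by linarith), Nat.le_floor (by linarith)⟩
    · simp only
      split_ifs with h
      · rfl
      · exact hd.1 s (by omega)
    · rw [occ_congr (d' := d)]
      · exact hd.2 i (by omega) hin
      · intro s h1 h2
        exact if_neg (by omega)
  · rintro d ⟨hd, -⟩ d' ⟨hd', -⟩ h
    obtain ⟨h1, h2⟩ := Prod.ext_iff.1 h
    funext s
    by_cases hs : s < k
    · exact num_inj h1 s hs
    · have := congrFun h2 s
      simpa [hs] using this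

/-- The set of the values of all infinite sequences meeting all the constraints. -/
def survivor (m : ℕ) (O : ℕ → ℕ → Fin b) : Set ℝ := Real.ofDigits '' {d | ∀ i, ¬ Occ m O d i}

lemma isClosed_survivor : IsClosed (survivor m O) := by
  have h : IsClosed {d : ℕ → Fin b | ∀ i, ¬ Occ m O d i} := by
    simp only [Set.ofPred_forall]
    refine isClosed_iInter fun i => ?_
    rw [← isOpen_compl_iff]
    have : {d : ℕ → Fin b | ¬ Occ m O d i}ᶜ = ⋂ s ∈ Set.Ico i (i + m), {d | d s = O i s} := by
      ext d; simp [Occ]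
    rw [this]
    refine (Set.finite_Ico _ _).isOpen_biInter fun s _ => ?_
    have hs : Continuous fun d : ℕ → Fin b => d s := continuous_apply s
    exact (isOpen_discrete ({O i s} : Set (Fin b))).preimage hs
  exact (h.isCompact.image Real.continuous_ofDigits).isClosed

/-- Near a point of the survivor set there are as many words of length `N` as extensions of a
single word of length `n`. -/
lemma cnt_le_wordsIn (hb : 3 ≤ b) (hm : 1 ≤ m) {x : ℝ} (hx : x ∈ survivor m O) {n N : ℕ}
    (hn : n ≤ N) :
    cnt m O n N ≤ 2 ^ m * (wordsIn m O N
      (Set.Ioc (x - 2 * ((b : ℝ) ^ n)⁻¹) (x + ((b : ℝ) ^ n)⁻¹))).ncard := by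
  obtain ⟨d, hd, rfl⟩ := hx
  refine (cnt_le_extensions hb hm hn (truncate_mem_words hd n)).trans (Nat.mul_le_mul_left _ ?_)
  refine Set.ncard_le_ncard ?_ (finite_wordsIn _ _)
  rintro e ⟨he, hde⟩
  have h0 : (0 : ℝ) < ((b : ℝ) ^ n)⁻¹ := by positivity
  have hz : ∀ s, n ≤ s → (if s < n then d s else 0) = 0 := fun s hs => if_neg (by omega)
  have h1 := ofDigits_mem_Icc hz hde
  have h2 := ofDigits_mem_Icc hz fun s hs => (if_pos hs).symm
  exact ⟨he, by linarith [h1.1, h2.2], by linarith [h1.2, h2.1]⟩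

/-- Every admissible word is close to a point of the survivor set. -/
lemma exists_survivor_near (hb : 3 ≤ b) (hm : 1 ≤ m) {N : ℕ} {u : ℕ → Fin b}
    (hu : u ∈ Words m O 0 N) :
    ∃ x ∈ survivor m O, x ∈ Set.Icc (Real.ofDigits u) (Real.ofDigits u + ((b : ℝ) ^ N)⁻¹) := by
  obtain ⟨d, hd, hdu⟩ := exists_infinite_extension hb hm hu
  exact ⟨_, ⟨d, hd, rfl⟩, ofDigits_mem_Icc (fun s hs => hu.1 s (Or.inr hs)) hdu⟩

/-- Every point of the survivor set is close to an admissible word. -/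
lemma exists_word_near {x : ℝ} (hx : x ∈ survivor m O) (N : ℕ) :
    ∃ u ∈ Words m O 0 N, x ∈ Set.Icc (Real.ofDigits u) (Real.ofDigits u + ((b : ℝ) ^ N)⁻¹) := by
  obtain ⟨d, hd, rfl⟩ := hx
  exact ⟨_, truncate_mem_words hd N, ofDigits_mem_Icc (fun s hs => if_neg (by omega))
    fun s hs => (if_pos hs).symm⟩

end Digits

/-! ### The limit distribution function and the Hausdorff measure -/

section Hausdorff

variable {b : ℕ} [NeZero b] {m : ℕ} {O : ℕ → ℕ → Fin b}

/-- The normalised number of admissible words on `[0, N)` with value at most `x`. -/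
noncomputable def distFun (m : ℕ) (O : ℕ → ℕ → Fin b) (θ : ℝ) (N : ℕ) (x : ℝ) : ℝ :=
  (wordsIn m O N (Set.Iic x)).ncard * (θ ^ N)⁻¹

lemma distFun_sub (θ : ℝ) (N : ℕ) {x y : ℝ} (hxy : x ≤ y) :
    distFun m O θ N y - distFun m O θ N x = (wordsIn m O N (Set.Ioc x y)).ncard * (θ ^ N)⁻¹ := by
  have h : (wordsIn m O N (Set.Iic y)).ncard =
      (wordsIn m O N (Set.Iic x)).ncard + (wordsIn m O N (Set.Ioc x y)).ncard := by
    rw [← Set.ncard_union_eq ?_ (finite_wordsIn _ _) (finite_wordsIn _ _)]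
    · congr 1
      ext d
      simp only [wordsIn, Set.mem_union, Set.mem_ofPred_eq, Set.mem_Iic, Set.mem_Ioc,
        ← and_or_left]
      refine and_congr_right fun _ => ⟨fun h => ?_, fun h => ?_⟩
      · exact (le_or_gt _ x).imp_right fun h' => ⟨h', h⟩
      · exact h.elim (fun h => h.trans hxy) fun h => h.2
    · rw [Set.disjoint_left]
      rintro d ⟨-, h1⟩ ⟨-, h2⟩
      exact absurd h1 (not_le.2 h2.1)
  rw [distFun, distFun, h]
  push_cast
  ring

/-- If the word counts are comparable to the powers of `θ`, the distributions of the values of the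
words of length `N` have a limit point. It has the modulus of continuity dictated by `θ`, it is
constant away from the survivor set, and it gives a large mass to the neighbourhood of each point
of the survivor set. -/
lemma exists_limit_distFun (hb : 3 ≤ b) (hm : 1 ≤ m) {θ c C : ℝ} (hθ : 1 ≤ θ) (hcnt : ∀ k n, k ≤ n →
      c * θ ^ (n - k) ≤ cnt m O k n ∧ (cnt m O k n : ℝ) ≤ C * θ ^ (n - k)) :
    ∃ g : ℝ → ℝ, Monotone g ∧
      (∀ k x y, x ≤ y → y ≤ x + ((b : ℝ) ^ k)⁻¹ → g y - g x ≤ 3 * C * (θ ^ k)⁻¹) ∧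
      (∀ x ∈ survivor m O, ∀ n, c / 2 ^ m * (θ ^ n)⁻¹ ≤
        g (x + ((b : ℝ) ^ n)⁻¹) - g (x - 2 * ((b : ℝ) ^ n)⁻¹)) ∧
      ∀ y, y ∉ survivor m O → ∃ δ > 0, g (y + δ) = g (y - δ) := by
  have hθ0 : 0 < θ := by linarith
  have hb0 : (0 : ℝ) < b := by exact_mod_cast (show 0 < b by omega)
  have hdiv : ∀ k N, k ≤ N → θ ^ (N - k) * (θ ^ N)⁻¹ = (θ ^ k)⁻¹ := by
    intro k N hk
    obtain ⟨j, rfl⟩ := Nat.exists_eq_add_of_le hk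
    rw [Nat.add_sub_cancel_left, pow_add]
    field_simp
  -- an ultrafilter makes the values converge at all real points simultaneously
  have hlim : ∀ x, ∃ a, Tendsto (fun N => distFun m O θ N x) (hyperfilter ℕ) (nhds a) := by
    intro x
    obtain ⟨a, -, ha⟩ := (isCompact_Icc (a := (0 : ℝ)) (b := C)).ultrafilter_le_nhds'
      ((hyperfilter ℕ).map fun N => distFun m O θ N x) (by
        refine Filter.univ_mem' (f := (hyperfilter ℕ : Filter ℕ)) fun N => ?_
        simp only [Set.mem_preimage]
        refine ⟨by rw [distFun]; positivity, ?_⟩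
        have h1 : (wordsIn m O N (Set.Iic x)).ncard ≤ cnt m O 0 N :=
          Set.ncard_le_ncard (fun d hd => hd.1) (finite_words _ _)
        have h2 : ((wordsIn m O N (Set.Iic x)).ncard : ℝ) ≤ C * θ ^ N :=
          (Nat.cast_le.2 h1).trans (hcnt 0 N (Nat.zero_le _)).2
        rw [distFun, ← div_eq_mul_inv, div_le_iff₀ (by positivity)]
        exact h2)
    exact ⟨a, ha⟩
  choose g hg using hlim
  have hev : ∀ n : ℕ, ∀ᶠ N in (hyperfilter ℕ : Filter ℕ), n ≤ N := fun n =>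
    (eventually_ge_atTop n).filter_mono Nat.hyperfilter_le_atTop
  refine ⟨g, fun x y hxy => ?_, fun k x y hxy hk => ?_, fun x hx n => ?_, fun y hy => ?_⟩
  · refine le_of_tendsto_of_tendsto' (hg x) (hg y) fun N => ?_
    rw [← sub_nonneg, distFun_sub _ _ hxy]
    positivity
  · refine le_of_tendsto ((hg y).sub (hg x)) ((hev k).mono fun N hN => ?_)
    rw [distFun_sub _ _ hxy, ← hdiv k N hN, ← mul_assoc]
    gcongr
    have h1 := (wordsIn_mono (m := m) (O := O) N (show Set.Ioc x y ⊆
      Set.Icc x (x + (1 : ℕ) * ((b : ℝ) ^ k)⁻¹) from fun z hz => ⟨hz.1.le, hz.2.trans (by simpa)⟩)).trans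
      (ncard_wordsIn_le x 1)
    have h2 : ((wordsIn m O N (Set.Ioc x y)).ncard : ℝ) ≤ 3 * cnt m O k N := by exact_mod_cast h1
    linarith [(hcnt k N hN).2]
  · have h0 : (0 : ℝ) < ((b : ℝ) ^ n)⁻¹ := by positivity
    refine ge_of_tendsto ((hg _).sub (hg _)) ((hev n).mono fun N hN => ?_)
    rw [distFun_sub _ _ (by linarith), ← hdiv n N hN, ← mul_assoc]
    gcongr
    have h1 := cnt_le_wordsIn hb hm hx hN
    have h2 := (hcnt n N hN).1.trans (Nat.cast_le.2 h1)
    push_cast at h2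
    rw [div_mul_eq_mul_div, div_le_iff₀ (by positivity)]
    linarith
  · obtain ⟨ε, hε, hball⟩ := Metric.isOpen_iff.1 isClosed_survivor.isOpen_compl y hy
    refine ⟨ε / 2, by positivity, ?_⟩
    obtain ⟨n, hn⟩ := exists_pow_lt_of_lt_one (show 0 < ε / 2 by positivity)
      (show (b : ℝ)⁻¹ < 1 from inv_lt_one_of_one_lt₀ (by exact_mod_cast (show 1 < b by omega)))
    have h : Tendsto (fun N => distFun m O θ N (y + ε / 2) - distFun m O θ N (y - ε / 2))
        (hyperfilter ℕ) (nhds 0) := by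
      refine tendsto_const_nhds.congr' ((hev n).mono fun N hN => ?_)
      simp only
      rw [distFun_sub _ _ (by linarith)]
      have : wordsIn m O N (Set.Ioc (y - ε / 2) (y + ε / 2)) = ∅ := by
        rw [Set.eq_empty_iff_forall_notMem]
        rintro u ⟨hu, hu1, hu2⟩
        obtain ⟨x, hx, hx1, hx2⟩ := exists_survivor_near hb hm hu
        have hN' : ((b : ℝ) ^ N)⁻¹ < ε / 2 := by
          refine lt_of_le_of_lt ?_ hn
          rw [inv_pow]
          gcongr
          exact_mod_cast (show 1 ≤ b by omega)
        refine hball ?_ hx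
        rw [Metric.mem_ball, Real.dist_eq, abs_lt]
        constructor <;> linarith
      simp [this]
    linarith [tendsto_nhds_unique ((hg _).sub (hg _)) h]

/-- The scale of a radius `r < 1`. -/
lemma exists_scale (hb : 3 ≤ b) {r : ℝ} (h0 : 0 < r) (h1 : r < 1) :
    ∃ n : ℕ, ((b : ℝ) ^ (n + 1))⁻¹ ≤ r ∧ r ≤ ((b : ℝ) ^ n)⁻¹ := by
  have hb1 : (1 : ℝ) < b := by exact_mod_cast (show 1 < b by omega)
  obtain ⟨n, hn1, hn2⟩ := exists_nat_pow_near_of_lt_one h0 h1.le (inv_pos.2 (by linarith))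
    (inv_lt_one_of_one_lt₀ hb1)
  rw [inv_pow] at hn1 hn2
  exact ⟨n, hn1.le, hn2⟩

variable {s θ : ℝ}

lemma inv_pow_rpow (hθ : (b : ℝ) ^ s = θ) (n : ℕ) : (((b : ℝ) ^ n)⁻¹) ^ s = (θ ^ n)⁻¹ := by
  have hb0 : (0 : ℝ) ≤ b := Nat.cast_nonneg _
  rw [Real.inv_rpow (by positivity), ← Real.rpow_natCast, ← Real.rpow_mul hb0, mul_comm,
    Real.rpow_mul hb0, hθ, Real.rpow_natCast]

/-- The upper bound, by covering with cylinders of level `N → ∞`. The exponent `s` and `θ` are tied by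
`b ^ s = θ`. -/
lemma hausdorff_upper (hb : 3 ≤ b) (hs : 0 ≤ s) (hθ : (b : ℝ) ^ s = θ) {C : ℝ} (hC : 0 < C)
    (hcnt : ∀ k n, k ≤ n → (cnt m O k n : ℝ) ≤ C * θ ^ (n - k)) {x r : ℝ} (h0 : 0 < r)
    (h1 : r < 1) :
    Measure.hausdorffMeasure s (survivor m O ∩ Metric.closedBall x r) ≤
      ENNReal.ofReal (5 * C * θ * r ^ s) := by
  have hb0 : (0 : ℝ) < b := by exact_mod_cast (show 0 < b by omega)
  have hb1 : (1 : ℝ) < b := by exact_mod_cast (show 1 < b by omega)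
  have hθ0 : 0 < θ := hθ ▸ Real.rpow_pos_of_pos hb0 s
  obtain ⟨n, hn1, hn2⟩ := exists_scale hb h0 h1
  set z : ℕ → ℝ := fun N => ((b : ℝ) ^ N)⁻¹ with hz
  have hz0 : ∀ N, 0 < z N := fun N => by simp only [hz]; positivity
  set W : ℕ → Set (ℕ → Fin b) := fun N => wordsIn m O N (Set.Icc (x - r - z N) (x + r)) with hW
  have : ∀ N, Fintype (W N) := fun N => (finite_wordsIn _ _).fintype
  have hztend : Tendsto (fun N => ENNReal.ofReal (z N)) atTop (nhds 0) := by
    rw [← ENNReal.ofReal_zero]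
    refine ENNReal.tendsto_ofReal ?_
    simp only [hz, ← inv_pow]
    exact tendsto_pow_atTop_nhds_zero_of_lt_one (by positivity) (inv_lt_one_of_one_lt₀ hb1)
  refine (Measure.hausdorffMeasure_le_liminf_sum (ι := fun N => W N) s _
    (fun N => ENNReal.ofReal (z N)) hztend
    (fun N d => Set.Icc (Real.ofDigits d.1) (Real.ofDigits d.1 + z N)) ?_ ?_).trans ?_
  · refine Eventually.of_forall fun N d => ?_
    rw [Real.ediam_Icc, add_sub_cancel_left]
  · refine Eventually.of_forall fun N y hy => ?_
    obtain ⟨u, hu, hu1, hu2⟩ := exists_word_near hy.1 N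
    have hy2 := hy.2
    rw [Real.closedBall_eq_Icc] at hy2
    refine Set.mem_iUnion.2 ⟨⟨u, hu, ?_, ?_⟩, hu1, hu2⟩
    · linarith [hy2.1]
    · exact hu1.trans hy2.2
  · refine liminf_le_of_frequently_le' (Eventually.frequently ?_)
    filter_upwards [eventually_ge_atTop n] with N hN
    have hzN : z N ≤ z n := by
      simp only [hz]
      gcongr
      exact hb1.le
    have hsum : ∑ d : W N, Metric.ediam (Set.Icc (Real.ofDigits d.1) (Real.ofDigits d.1 + z N)) ^ s
        = ENNReal.ofReal ((W N).ncard * (θ ^ N)⁻¹) := by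
      simp only [Real.ediam_Icc, add_sub_cancel_left]
      rw [Finset.sum_const, Finset.card_univ, ENNReal.ofReal_rpow_of_pos (hz0 N),
        inv_pow_rpow hθ, ← Nat.card_eq_fintype_card, Nat.card_coe_set_eq, nsmul_eq_mul,
        ENNReal.ofReal_mul (Nat.cast_nonneg _), ENNReal.ofReal_natCast]
    rw [hsum]
    refine ENNReal.ofReal_le_ofReal ?_
    have hcard : (W N).ncard ≤ (3 + 2) * cnt m O n N := by
      refine (wordsIn_mono N (Set.Icc_subset_Icc le_rfl ?_)).trans
        (ncard_wordsIn_le (x - r - z N) 3)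
      have : z n = ((b : ℝ) ^ n)⁻¹ := rfl
      push_cast
      linarith
    have h3 : ((W N).ncard : ℝ) ≤ 5 * (C * θ ^ (N - n)) := by
      have : ((W N).ncard : ℝ) ≤ 5 * cnt m O n N := by exact_mod_cast hcard
      linarith [hcnt n N hN]
    have h4 : (θ ^ (n + 1))⁻¹ ≤ r ^ s := by
      rw [← inv_pow_rpow hθ]
      exact Real.rpow_le_rpow (hz0 _).le hn1 hs
    obtain ⟨j, rfl⟩ := Nat.exists_eq_add_of_le hN
    rw [Nat.add_sub_cancel_left] at h3
    calc ((W (n + j)).ncard : ℝ) * (θ ^ (n + j))⁻¹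
        ≤ 5 * (C * θ ^ j) * (θ ^ (n + j))⁻¹ := by gcongr
      _ = 5 * C * θ * (θ ^ (n + 1))⁻¹ := by rw [pow_add, pow_succ]; field_simp
      _ ≤ 5 * C * θ * r ^ s := by gcongr

/-- The mass distribution principle, for the measure with distribution function `g`: by `hg1` it is
bounded by a multiple of the `s`-dimensional Hausdorff measure, by `hg3` it is carried by `F`, and by
`hg2` it gives mass at least of order `r ^ s` to balls centred in `F`. -/
lemma hausdorff_lower (hb : 3 ≤ b) (hs : 0 < s) (hθ : (b : ℝ) ^ s = θ) {C c : ℝ} (hC : 0 < C)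
    (hc : 0 < c) {F : Set ℝ} {g : ℝ → ℝ} (hg : Monotone g)
    (hg1 : ∀ k x y, x ≤ y → y ≤ x + ((b : ℝ) ^ k)⁻¹ → g y - g x ≤ C * (θ ^ k)⁻¹)
    (hg2 : ∀ x ∈ F, ∀ n, c * (θ ^ n)⁻¹ ≤
        g (x + ((b : ℝ) ^ n)⁻¹) - g (x - 2 * ((b : ℝ) ^ n)⁻¹))
    (hg3 : ∀ y, y ∉ F → ∃ δ > 0, g (y + δ) = g (y - δ)) {x r : ℝ} (hx : x ∈ F) (h0 : 0 < r)
    (h1 : r < 1) :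
    ENNReal.ofReal (c / (3 * C * θ ^ 3) * r ^ s) ≤
      Measure.hausdorffMeasure s (F ∩ Metric.closedBall x r) := by
  have hb2 : (2 : ℝ) ≤ b := by exact_mod_cast (show 2 ≤ b by omega)
  have hb1 : (1 : ℝ) < b := by linarith
  have hb0 : (0 : ℝ) < b := by linarith
  have hθ1 : 1 < θ := hθ ▸ Real.one_lt_rpow hb1 hs
  have hθ0 : 0 < θ := by linarith
  have hz0 : ∀ n : ℕ, 0 < ((b : ℝ) ^ n)⁻¹ := fun n => by positivity
  have htend : Tendsto (fun k : ℕ => (θ ^ k)⁻¹) atTop (nhds 0) := by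
    simp only [← inv_pow]
    exact tendsto_pow_atTop_nhds_zero_of_lt_one (by positivity) (inv_lt_one_of_one_lt₀ hθ1)
  set M := 3 * C * θ with hM
  have hM0 : 0 < M := by positivity
  -- normalised so that the constant in the comparison with the Hausdorff measure is `1`
  let f : StieltjesFunction ℝ :=
    { toFun := fun t => g t / M
      mono' := fun u v huv => by
        have := hg huv
        simp only
        gcongr
      right_continuous' := fun u => by
        refine ContinuousWithinAt.div_const ?_ M
        rw [Metric.continuousWithinAt_iff]
        intro ε hε
        have h2 := (htend.const_mul C).eventually (gt_mem_nhds (show C * 0 < ε by simpa using hε))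
        obtain ⟨k, hk⟩ := h2.exists
        refine ⟨((b : ℝ) ^ k)⁻¹, hz0 k, fun v hv hvu => ?_⟩
        rw [Real.dist_eq, abs_lt] at hvu
        have h3 := hg1 k u v hv (by linarith [hvu.2])
        have h4 := hg hv
        rw [Real.dist_eq, abs_of_nonneg (by linarith)]
        linarith }
  have hf : ∀ u v, f.measure (Set.Ioc u v) = ENNReal.ofReal ((g v - g u) / M) := fun u v => by
    rw [f.measure_Ioc, sub_div]
  -- three consecutive intervals of length `b^{-k}` cover the closed interval of radius `b^{-k}`
  have hmass : ∀ k y, f.measure (Set.Icc (y - ((b : ℝ) ^ k)⁻¹) (y + ((b : ℝ) ^ k)⁻¹)) ≤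
      ENNReal.ofReal ((θ ^ (k + 1))⁻¹) := by
    intro k y
    have hz := hz0 k
    set z := ((b : ℝ) ^ k)⁻¹ with hzdef
    refine (measure_mono (t := Set.Ioc (y - z - z) (y + z))
      fun t ht => ⟨by linarith [ht.1], ht.2⟩).trans ?_
    rw [hf]
    refine ENNReal.ofReal_le_ofReal ?_
    rw [div_le_iff₀ hM0]
    have e : (θ ^ (k + 1))⁻¹ * M = 3 * (C * (θ ^ k)⁻¹) := by
      rw [hM, pow_succ]; field_simp
    rw [e]
    linarith [hg1 k (y - z - z) (y - z) (by linarith) (by linarith),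
      hg1 k (y - z) y (by linarith) (by linarith), hg1 k y (y + z) (by linarith) le_rfl]
  have hle : f.measure ≤ Measure.hausdorffMeasure s := by
    refine Measure.le_hausdorffMeasure s _ (ENNReal.ofReal (1 / 2)) (by simp) fun S hS => ?_
    rcases S.eq_empty_or_nonempty with rfl | ⟨y, hy⟩
    · simp
    have hbdd : Bornology.IsBounded S :=
      Metric.isBounded_iff_ediam_ne_top.2 (ne_top_of_le_ne_top ENNReal.ofReal_ne_top hS)
    have hD : Metric.ediam S = ENNReal.ofReal (Metric.diam S) :=
      (ENNReal.ofReal_toReal (ne_top_of_le_ne_top ENNReal.ofReal_ne_top hS)).symm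
    have hD1 : Metric.diam S ≤ 1 / 2 := by
      rw [hD] at hS
      exact (ENNReal.ofReal_le_ofReal_iff (by norm_num)).1 hS
    have hS' : ∀ k : ℕ, Metric.diam S ≤ ((b : ℝ) ^ k)⁻¹ →
        f.measure S ≤ ENNReal.ofReal ((θ ^ (k + 1))⁻¹) := by
      refine fun k hk => (measure_mono fun t ht => ?_).trans (hmass k y)
      have := abs_le.1 ((Real.dist_eq t y) ▸ (Metric.dist_le_diam_of_mem hbdd ht hy).trans hk)
      exact ⟨by linarith [this.1], by linarith [this.2]⟩
    rcases (Metric.diam_nonneg (s := S)).eq_or_lt with h | h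
    · -- `0 ^ s = 0`, so a single point must be shown to be null
      have : f.measure S ≤ 0 := by
        have h2 : Tendsto (fun k : ℕ => ENNReal.ofReal ((θ ^ (k + 1))⁻¹)) atTop (nhds 0) := by
          rw [← ENNReal.ofReal_zero]
          exact ENNReal.tendsto_ofReal (htend.comp (tendsto_add_atTop_nat 1))
        exact ge_of_tendsto' h2 fun k => hS' k (h ▸ (hz0 k).le)
      exact this.trans zero_le
    · obtain ⟨k, hk1, hk2⟩ := exists_scale hb h (by linarith)
      refine (hS' k hk2).trans ?_
      rw [hD, ENNReal.ofReal_rpow_of_pos h, ← inv_pow_rpow hθ]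
      exact ENNReal.ofReal_le_ofReal (Real.rpow_le_rpow (hz0 _).le hk1 hs.le)
  have hnull : f.measure Fᶜ = 0 := by
    refine measure_null_of_locally_null _ fun y hy => ?_
    obtain ⟨δ, hδ, hgδ⟩ := hg3 y hy
    refine ⟨Set.Ioc (y - δ) (y + δ), mem_nhdsWithin_of_mem_nhds
      (Ioc_mem_nhds (by linarith) (by linarith)), ?_⟩
    rw [hf, hgδ]
    simp
  obtain ⟨n, hn1, hn2⟩ := exists_scale hb h0 h1
  -- two levels finer, the interval of `hg2` fits into the ball
  have hn3 : 2 * ((b : ℝ) ^ (n + 2))⁻¹ ≤ r := by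
    refine le_trans ?_ hn1
    rw [pow_succ _ (n + 1), mul_inv, ← mul_assoc, mul_comm 2, mul_assoc, mul_le_iff_le_one_right
      (hz0 _), ← div_eq_mul_inv, div_le_one hb0]
    exact hb2
  have hn4 : r ^ s ≤ (θ ^ n)⁻¹ := by
    rw [← inv_pow_rpow hθ]
    exact Real.rpow_le_rpow h0.le hn2 hs.le
  calc ENNReal.ofReal (c / (3 * C * θ ^ 3) * r ^ s)
      ≤ ENNReal.ofReal (c * (θ ^ (n + 2))⁻¹ / M) := by
        refine ENNReal.ofReal_le_ofReal ?_
        have e : c * (θ ^ (n + 2))⁻¹ / M = c / (3 * C * θ ^ 3) * (θ ^ n)⁻¹ := by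
          rw [hM, pow_add]; field_simp
        rw [e]
        gcongr
    _ ≤ f.measure (Set.Ioc (x - 2 * ((b : ℝ) ^ (n + 2))⁻¹) (x + ((b : ℝ) ^ (n + 2))⁻¹)) := by
        rw [hf]
        refine ENNReal.ofReal_le_ofReal ?_
        have := hg2 x hx (n + 2)
        gcongr
    _ ≤ f.measure (Metric.closedBall x r) := by
        refine measure_mono fun t ht => ?_
        rw [Real.closedBall_eq_Icc]
        exact ⟨by linarith [ht.1], by linarith [ht.2, hz0 (n + 2)]⟩
    _ ≤ f.measure (F ∩ Metric.closedBall x r ∪ Fᶜ) := by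
        refine measure_mono fun t ht => ?_
        by_cases h : t ∈ F
        · exact Or.inl ⟨h, ht⟩
        · exact Or.inr h
    _ ≤ f.measure (F ∩ Metric.closedBall x r) + f.measure Fᶜ := measure_union_le _ _
    _ = f.measure (F ∩ Metric.closedBall x r) := by rw [hnull, add_zero]
    _ ≤ Measure.hausdorffMeasure s (F ∩ Metric.closedBall x r) := hle _

end Hausdorff

/-! ### Conclusion -/

/-- The `tsum` defining `Kset` is `Real.ofDigits`. -/
lemma Kset_eq_survivor {b m : ℕ} [NeZero b] (ω : ℕ → Fin m → Fin b) :
    Kset b m ω = survivor m (letter ω) := by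
  have h : ∀ (d : ℕ → Fin b) k, (fun j : Fin m => d (k + j.1)) = ω k ↔ Occ m (letter ω) d k := by
    intro d k
    constructor
    · intro h s h1 h2
      obtain ⟨t, rfl⟩ := Nat.exists_eq_add_of_le h1
      exact (congrFun h ⟨t, by omega⟩).trans (letter_add ω k ⟨t, by omega⟩).symm
    · intro h
      funext t
      exact (h (k + t) (by omega) (by omega)).trans (letter_add ω k t)
  ext x
  simp only [Kset, survivor, Set.mem_image, Set.mem_ofPred_eq, ne_eq, h, Real.ofDigits,
    Real.ofDigitsTerm, div_eq_mul_inv]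
  exact exists_congr fun d => and_congr_right fun _ => eq_comm

/-- **Theorem 1.8 (first part).** For every `p, q ≥ 1` there is `λ_{p,q} > 1`, namely
`λ_{p,q} = lim_k ‖(A^p B^q)^k‖^{1/k}`, such that `K^ω` is
`(log λ_{p,q} / ((p+q) log b))`-Ahlfors regular for all `ω ∈ L_{p,q}`. -/
theorem ahlfors_regular_of_mem_Lpq (b m : ℕ) (hb : 3 ≤ b) (hm : 2 ≤ m)
    (p q : ℕ) (hp : 1 ≤ p) (hq : 1 ≤ q) :
    ∃ lpq : ℝ, 1 < lpq ∧
      Filter.Tendsto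
        (fun k : ℕ => matNorm ((matA b m ^ p * matB b m ^ q) ^ k) ^ (1 / (k : ℝ)))
        Filter.atTop (nhds lpq) ∧
      ∀ ω : ℕ → Fin m → Fin b, MemLpq b m p q ω →
        AhlforsRegular (Kset b m ω) (Real.log lpq / (((p : ℝ) + (q : ℝ)) * Real.log b)) := by
  obtain ⟨lam, hlam, htend, c, C, hc, hC, hcC⟩ := exists_growth p q hb hm hp
  have : NeZero b := ⟨by omega⟩
  refine ⟨lam, by linarith, htend, fun ω hω => ?_⟩
  have hb1 : (1 : ℝ) < b := by exact_mod_cast (show 1 < b by omega)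
  have hlogb : 0 < Real.log b := Real.log_pos hb1
  have hpq : (0 : ℝ) < (p : ℝ) + q := by positivity
  set s := Real.log lam / (((p : ℝ) + (q : ℝ)) * Real.log b) with hs
  have hs0 : 0 < s := div_pos (Real.log_pos (by linarith)) (by positivity)
  obtain ⟨θ, hθ⟩ : ∃ θ, (b : ℝ) ^ s = θ := ⟨_, rfl⟩
  have hθ1 : 1 < θ := hθ ▸ Real.one_lt_rpow hb1 hs0
  have hθ0 : 0 < θ := by linarith
  have hθl : θ ^ (p + q) = lam := by
    rw [← hθ, ← Real.rpow_natCast, ← Real.rpow_mul (by linarith),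
      Real.rpow_def_of_pos (by linarith), hs]
    push_cast
    rw [show Real.log b * (Real.log lam / ((p + q) * Real.log b) * (p + q)) = Real.log lam by
      field_simp]
    exact Real.exp_log (by linarith)
  obtain ⟨c', C', hc', hC', hcnt⟩ := exists_cnt_bounds hb hm hp hω hθ1.le hθl hc hC hcC
  obtain ⟨g, hg, hg1, hg2, hg3⟩ := exists_limit_distFun hb (by omega) hθ1.le hcnt
  rw [Kset_eq_survivor]
  set K₁ := c' / 2 ^ m / (3 * (3 * C') * θ ^ 3) with hK₁
  set K₂ := 5 * C' * θ with hK₂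
  have hK₁0 : 0 < K₁ := by positivity
  refine ⟨max 1 (max K₁⁻¹ K₂), le_max_left _ _, fun x hx r h0 h1 => ⟨?_, ?_⟩⟩
  · refine le_trans (ENNReal.ofReal_le_ofReal ?_) (hausdorff_lower hb hs0 hθ (by positivity)
      (by positivity) hg hg1 hg2 hg3 hx h0 h1)
    have : (max 1 (max K₁⁻¹ K₂))⁻¹ ≤ K₁ :=
      inv_le_of_inv_le₀ hK₁0 ((le_max_left _ _).trans (le_max_right _ _))
    gcongr
  · refine (hausdorff_upper hb hs0.le hθ hC' (fun k n hkn => (hcnt k n hkn).2) h0 h1).trans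
      (ENNReal.ofReal_le_ofReal ?_)
    have : K₂ ≤ max 1 (max K₁⁻¹ K₂) := (le_max_right _ _).trans (le_max_right _ _)
    gcongr

end Paper
end

section
/- For p, q ∈ ℕ let λ_{p,q} = lim_{k→∞} ‖(A^p B^q)^k‖^{1/k}. Then the set { log λ_{p,q} / ((p+q) log b) : p, q ∈ ℕ } is dense in the interval [log η / log b, log λ / log b], where η is the unique root in (b−1, b) of x^m − b x^{m−1} + 1 = 0 and λ is the unique root in (b−1, b) of x^m − (b−1)(x^{m−1} + ⋯ + x + 1) = 0. -/
/-!
A row vector is read as a window `(s_n, s_{n-1}, …, s_{n-m+1})` of a sequence. Right multiplication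
by `A` is then one step of the recurrence `s_{n+1} = (b-1)(s_n + ⋯ + s_{n-m+1})`, and right
multiplication by `B` one step of `s_{n+1} = b s_n - s_{n-m+1}`. Both steps preserve the cone
`growthCone` of nonnegative windows whose entries grow by a factor at least `b - 1`.

A right eigenvector of `A` for `λ` (`exists_functional_matA`) and one of `B` for `η`
(`exists_functional_matB`) give linear functionals that scale exactly under `A`, respectively `B`,
and both are comparable on the cone with the leading entry of the window. Hence on the cone `A^p B^q`
multiplies the leading entry by `λ^p η^q` up to a factor in `[C⁻¹, C]` with `C` independent of
`p, q` (`exists_block_bound`). The cone spans the whole space, so the norm of `(A^p B^q)^k` has the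
same exponential growth (`exists_matNorm_pow_bound`), and
`|log λ_{p,q} - (p log λ + q log η)| ≤ |log C|` (by `exists_lpq_bound`). Letting `p, q → ∞` with
prescribed limiting proportions produces every convex combination of `log η` and `log λ`.
-/

open MeasureTheory Filter

namespace Paper


/-! ### An invariant cone -/

/-- The cone of row vectors with nonnegative entries, each entry at least `b - 1` times the next
one. Row vectors are read as windows `(s_n, s_{n-1}, …)` of a sequence; for `b ≥ 2` the cone is
stable under right multiplication by both `A` and `B`. -/
def growthCone (b n : ℕ) : Set (Fin (n + 1) → ℝ) :=
  { r | (∀ i, 0 ≤ r i) ∧ ∀ j : Fin n, ((b : ℝ) - 1) * r j.succ ≤ r j.castSucc }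

open Matrix in
/-- `A` acts on windows as the recurrence `s_{n+1} = (b-1)(s_n + ⋯ + s_{n-m+1})`. -/
lemma vecMul_matA_zero_s6 (b n : ℕ) (r : Fin (n + 1) → ℝ) :
    (r ᵥ* matA b (n + 1)) 0 = ((b : ℝ) - 1) * ∑ i, r i := by
  simp [vecMul, dotProduct, matA, ← Finset.sum_mul, mul_comm]

open Matrix in
lemma vecMul_matA_succ_s6 (b n : ℕ) (r : Fin (n + 1) → ℝ) (j : Fin n) :
    (r ᵥ* matA b (n + 1)) j.succ = r j.castSucc := by
  simp only [vecMul, dotProduct, matA]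
  rw [Finset.sum_eq_single j.castSucc]
  · simp
  · intro i _ hi
    have : ¬ (j.1 = i.1) := fun h => hi (Fin.ext (by simp [h]))
    simp [this]
  · simp

open Matrix in
/-- `B` acts on windows as the recurrence `s_{n+1} = b s_n - s_{n-m+1}`. -/
lemma vecMul_matB_zero_s6 (b n : ℕ) (hn : 1 ≤ n) (r : Fin (n + 1) → ℝ) :
    (r ᵥ* matB b (n + 1)) 0 = (b : ℝ) * r 0 - r (Fin.last n) := by
  obtain ⟨n, rfl⟩ : ∃ k, n = k + 1 := ⟨n - 1, by omega⟩
  simp only [vecMul, dotProduct, matB]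
  rw [Fin.sum_univ_succ, Fin.sum_univ_castSucc]
  have : ∀ x : Fin n, (x : ℕ) ≠ n := fun x => x.2.ne
  simp [this]
  ring

open Matrix in
lemma vecMul_matB_succ_s6 (b n : ℕ) (r : Fin (n + 1) → ℝ) (j : Fin n) :
    (r ᵥ* matB b (n + 1)) j.succ = r j.castSucc := by
  simp only [vecMul, dotProduct, matB]
  rw [Finset.sum_eq_single j.castSucc]
  · simp
  · intro i _ hi
    have : ¬ (j.1 = i.1) := fun h => hi (Fin.ext (by simp [h]))
    simp [this]
  · simp

lemma growthCone_pow_mul_le {b n : ℕ} (hb : 3 ≤ b) {r : Fin (n + 1) → ℝ}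
    (hr : r ∈ growthCone b n) (i : Fin (n + 1)) : (2 : ℝ) ^ (i : ℕ) * r i ≤ r 0 := by
  have hb' : (3 : ℝ) ≤ b := by exact_mod_cast hb
  induction i using Fin.induction with
  | zero => simp
  | succ j ih =>
    refine le_trans ?_ ih
    have h1 := hr.2 j
    have h0 := hr.1 j.succ
    have : 2 * r j.succ ≤ r j.castSucc := by nlinarith
    simp only [Fin.val_succ, Fin.val_castSucc, pow_succ]
    rw [mul_assoc]
    gcongr

lemma growthCone_le_zero {b n : ℕ} (hb : 3 ≤ b) {r : Fin (n + 1) → ℝ}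
    (hr : r ∈ growthCone b n) (i : Fin (n + 1)) : r i ≤ r 0 := by
  refine le_trans ?_ (growthCone_pow_mul_le hb hr i)
  exact le_mul_of_one_le_left (hr.1 i) (one_le_pow₀ (by norm_num))

/-- A window extended to the left by one step stays in the cone as soon as the new entry grows by
a factor at least `b - 1`. -/
lemma growthCone_of_step {b n : ℕ} (hb : 3 ≤ b) (hn : 1 ≤ n) {r s : Fin (n + 1) → ℝ}
    (hr : r ∈ growthCone b n) (h0 : ((b : ℝ) - 1) * r 0 ≤ s 0)
    (hs : ∀ j : Fin n, s j.succ = r j.castSucc) : s ∈ growthCone b n := by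
  have hb' : (3 : ℝ) ≤ b := by exact_mod_cast hb
  obtain ⟨n, rfl⟩ : ∃ k, n = k + 1 := ⟨n - 1, by omega⟩
  refine ⟨fun i => ?_, fun j => ?_⟩
  · induction i using Fin.cases with
    | zero => exact le_trans (mul_nonneg (by linarith) (hr.1 0)) h0
    | succ j => rw [hs]; exact hr.1 _
  · induction j using Fin.cases with
    | zero => rw [hs]; simpa using h0
    | succ j =>
      rw [hs, ← Fin.succ_castSucc, hs]
      exact hr.2 j.castSucc

open Matrix in
lemma growthCone_matA {b n : ℕ} (hb : 3 ≤ b) (hn : 1 ≤ n) {r : Fin (n + 1) → ℝ}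
    (hr : r ∈ growthCone b n) : r ᵥ* matA b (n + 1) ∈ growthCone b n := by
  have hb' : (3 : ℝ) ≤ b := by exact_mod_cast hb
  refine growthCone_of_step hb hn hr ?_ (vecMul_matA_succ_s6 b n r)
  rw [vecMul_matA_zero_s6]
  exact mul_le_mul_of_nonneg_left
    (Finset.single_le_sum (fun i _ => hr.1 i) (Finset.mem_univ 0)) (by linarith)

open Matrix in
lemma growthCone_matB {b n : ℕ} (hb : 3 ≤ b) (hn : 1 ≤ n) {r : Fin (n + 1) → ℝ}
    (hr : r ∈ growthCone b n) : r ᵥ* matB b (n + 1) ∈ growthCone b n := by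
  refine growthCone_of_step hb hn hr ?_ (vecMul_matB_succ_s6 b n r)
  rw [vecMul_matB_zero_s6 b n hn]
  linarith [growthCone_le_zero hb hr (Fin.last n)]

open Matrix in
lemma growthCone_pow {b n : ℕ} {M : Matrix (Fin (n + 1)) (Fin (n + 1)) ℝ}
    (hM : ∀ r ∈ growthCone b n, r ᵥ* M ∈ growthCone b n) (k : ℕ) :
    ∀ r ∈ growthCone b n, r ᵥ* M ^ k ∈ growthCone b n := by
  induction k with
  | zero => intro r hr; simpa using hr
  | succ k ih => intro r hr; rw [pow_succ, ← vecMul_vecMul]; exact hM _ (ih r hr)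

open Matrix in
lemma vecMul_pow_dotProduct {n : ℕ} {M : Matrix (Fin (n + 1)) (Fin (n + 1)) ℝ}
    {u : Fin (n + 1) → ℝ} {t : ℝ} (h : ∀ r : Fin (n + 1) → ℝ, (r ᵥ* M) ⬝ᵥ u = t * (r ⬝ᵥ u))
    (k : ℕ) (r : Fin (n + 1) → ℝ) : (r ᵥ* M ^ k) ⬝ᵥ u = t ^ k * (r ⬝ᵥ u) := by
  induction k with
  | zero => simp
  | succ k ih => rw [pow_succ, ← vecMul_vecMul, h, ih]; ring

/-! ### Eigenfunctionals of `A` and `B` -/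

/-- Entries, read from the last one upwards, of the right Perron eigenvector of `A`. -/
noncomputable def perronA (β t : ℝ) : ℕ → ℝ
  | 0 => 0
  | k + 1 => (β + perronA β t k) / t

lemma perronA_mul_pow (β t : ℝ) (ht : 0 < t) (k : ℕ) :
    perronA β t k * t ^ k = β * ∑ i ∈ Finset.range k, t ^ i := by
  induction k with
  | zero => simp [perronA]
  | succ k ih =>
    rw [Finset.sum_range_succ, mul_add, ← ih, perronA]
    field_simp
    ring

open Matrix in
/-- A linear functional which is multiplied by `λ` under the action of `A`, and which is comparable
with the leading entry on the cone. -/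
lemma exists_functional_matA {b n : ℕ} (hb : 3 ≤ b) {lam : ℝ} (hlam1 : (b : ℝ) - 1 < lam)
    (hlam : lam ^ (n + 1) = ((b : ℝ) - 1) * ∑ i ∈ Finset.range (n + 1), lam ^ i) :
    ∃ u : Fin (n + 1) → ℝ, ∃ C : ℝ, 1 ≤ C ∧
      (∀ r : Fin (n + 1) → ℝ, (r ᵥ* matA b (n + 1)) ⬝ᵥ u = lam * (r ⬝ᵥ u)) ∧
      ∀ r ∈ growthCone b n, r 0 ≤ r ⬝ᵥ u ∧ r ⬝ᵥ u ≤ C * r 0 := by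
  have hb' : (3 : ℝ) ≤ b := by exact_mod_cast hb
  have hlam0 : 0 < lam := by linarith
  set v := perronA ((b : ℝ) - 1) lam with hv
  have hv0 : ∀ k, 0 ≤ v k := by
    intro k
    induction k with
    | zero => simp [hv, perronA]
    | succ k ih => exact div_nonneg (add_nonneg (by linarith) ih) hlam0.le
  have hvs : ∀ k, lam * v (k + 1) = (b : ℝ) - 1 + v k := by
    intro k
    simp only [hv, perronA]
    field_simp
  have hv1 : v (n + 1) = 1 := by
    have h := perronA_mul_pow ((b : ℝ) - 1) lam hlam0 (n + 1)
    rw [← hlam] at h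
    exact (mul_eq_right₀ (pow_pos hlam0 _).ne').1 h
  let u : Fin (n + 1) → ℝ := fun i => v (n + 1 - i)
  have hu0 : u 0 = 1 := by simp [u, hv1]
  have hupos : ∀ i, 0 ≤ u i := fun i => hv0 _
  refine ⟨u, ∑ i, u i, ?_, ?_, ?_⟩
  · rw [← hu0]
    exact Finset.single_le_sum (fun i _ => hupos i) (Finset.mem_univ 0)
  · intro r
    simp only [dotProduct]
    rw [Fin.sum_univ_succ, vecMul_matA_zero_s6, hu0, mul_one]
    simp only [vecMul_matA_succ_s6]
    rw [Finset.mul_sum, Finset.mul_sum, Fin.sum_univ_castSucc, Fin.sum_univ_castSucc]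
    have h1 : ((b : ℝ) - 1) * r (Fin.last n) = lam * (r (Fin.last n) * u (Fin.last n)) := by
      have := hvs 0
      have h2 : v 0 = 0 := by simp [hv, perronA]
      simp only [u, Fin.val_last, Nat.add_sub_cancel_left]
      rw [h2] at this
      linear_combination -(r (Fin.last n)) * this
    have h2 : ∀ j : Fin n, lam * (r j.castSucc * u j.castSucc)
        = ((b : ℝ) - 1) * r j.castSucc + r j.castSucc * u j.succ := by
      intro j
      have h3 : u j.castSucc = v (n - j + 1 - 1 + 1) := by
        simp only [u, Fin.val_castSucc]; congr 1; have := j.2; omega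
      have h4 : u j.succ = v (n - j + 1 - 1) := by
        simp only [u, Fin.val_succ]; congr 1; have := j.2; omega
      rw [h3, h4]
      linear_combination (r j.castSucc) * hvs (n - j + 1 - 1)
    simp only [h2, Finset.sum_add_distrib]
    rw [h1]
    ring
  · intro r hr
    refine ⟨?_, ?_⟩
    · have := Finset.single_le_sum (f := fun i => r i * u i)
        (fun i _ => mul_nonneg (hr.1 i) (hupos i)) (Finset.mem_univ 0)
      simpa [hu0, dotProduct] using this
    · rw [Finset.sum_mul]
      refine Finset.sum_le_sum fun i _ => ?_
      rw [mul_comm]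
      exact mul_le_mul_of_nonneg_left (growthCone_le_zero hb hr i) (hupos i)

open Matrix in
/-- A linear functional which is multiplied by `η` under the action of `B`, and which is comparable
with the leading entry on the cone. Its vector, a right eigenvector of `B`, is
`(1, -(b-η), -(b-η)η, …)`; the negative entries are compensated by the geometric decay of
the entries of elements of the cone. -/
lemma exists_functional_matB {b n : ℕ} (hb : 3 ≤ b) (hn : 1 ≤ n) {eta : ℝ}
    (heta1 : (b : ℝ) - 1 < eta) (heta2 : eta < (b : ℝ))
    (heta : eta ^ (n + 1) = (b : ℝ) * eta ^ n - 1) :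
    ∃ u : Fin (n + 1) → ℝ,
      (∀ r : Fin (n + 1) → ℝ, (r ᵥ* matB b (n + 1)) ⬝ᵥ u = eta * (r ⬝ᵥ u)) ∧
      ∀ r ∈ growthCone b n, r ⬝ᵥ u ≤ r 0 ∧ r 0 ≤ 2 * (r ⬝ᵥ u) := by
  have hb' : (3 : ℝ) ≤ b := by exact_mod_cast hb
  have heta0 : 2 < eta := by linarith
  have hkey : ((b : ℝ) - eta) * eta ^ n = 1 := by
    rw [pow_succ] at heta
    linear_combination -heta
  let w : Fin n → ℝ := fun j => ((b : ℝ) - eta) * eta ^ (j : ℕ)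
  let u : Fin (n + 1) → ℝ := Fin.cons 1 (fun j => - w j)
  have hdot : ∀ r : Fin (n + 1) → ℝ, r ⬝ᵥ u = r 0 - ∑ j : Fin n, r j.succ * w j := by
    intro r
    simp only [dotProduct]
    rw [Fin.sum_univ_succ]
    simp [u, sub_eq_add_neg]
  refine ⟨u, ?_, ?_⟩
  · intro r
    rw [hdot, hdot, vecMul_matB_zero_s6 b n hn]
    simp only [vecMul_matB_succ_s6]
    obtain ⟨n, rfl⟩ : ∃ k, n = k + 1 := ⟨n - 1, by omega⟩
    rw [Fin.sum_univ_succ, Fin.sum_univ_castSucc]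
    have h1 : w (Fin.last n) * eta = 1 := by
      simp only [w, Fin.val_last]
      rw [← hkey]; ring
    have h2 : w 0 = (b : ℝ) - eta := by simp [w]
    have h3 : ∀ j : Fin n, w j.succ = eta * w j.castSucc := by
      intro j; simp only [w, Fin.val_succ, Fin.val_castSucc]; ring
    have h4 : ∑ j : Fin n, r j.succ.castSucc * w j.succ
        = eta * ∑ j : Fin n, r j.castSucc.succ * w j.castSucc := by
      rw [Finset.mul_sum]
      refine Finset.sum_congr rfl fun j _ => ?_
      rw [h3, Fin.succ_castSucc]; ring
    rw [h4, h2, Fin.castSucc_zero, Fin.succ_last]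
    linear_combination (r (Fin.last (n + 1))) * h1
  · intro r hr
    rw [hdot]
    have hw : ∀ j, 0 ≤ w j := fun j => mul_nonneg (by linarith) (by positivity)
    have hS : 0 ≤ ∑ j : Fin n, r j.succ * w j :=
      Finset.sum_nonneg fun j _ => mul_nonneg (hr.1 _) (hw j)
    refine ⟨by linarith, ?_⟩
    -- As `(b - η) ηⁿ = 1`, each of the `n` negative terms is at most `2⁻⁽ⁿ⁺¹⁾ r₀`.
    have hterm : ∀ j : Fin n, 2 ^ (n + 1) * (r j.succ * w j) ≤ r 0 := by
      intro j
      have h1 : w j * eta ^ (n - j) = 1 := by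
        simp only [w]
        rw [mul_assoc, ← pow_add, Nat.add_sub_cancel' j.2.le, hkey]
      have h2 : w j * 2 ^ (n - (j : ℕ)) ≤ 1 := by
        rw [← h1]
        exact mul_le_mul_of_nonneg_left (pow_le_pow_left₀ (by norm_num) heta0.le _) (hw j)
      have h3 := growthCone_pow_mul_le hb hr j.succ
      have h4 : (2 : ℝ) ^ (n + 1) = 2 ^ ((j.succ : Fin (n + 1)) : ℕ) * 2 ^ (n - (j : ℕ)) := by
        rw [← pow_add]; congr 1; simp only [Fin.val_succ]; have := j.2; omega
      calc 2 ^ (n + 1) * (r j.succ * w j)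
          = (2 ^ ((j.succ : Fin (n + 1)) : ℕ) * r j.succ) * (w j * 2 ^ (n - (j : ℕ))) := by
            rw [h4]; ring
        _ ≤ (2 ^ ((j.succ : Fin (n + 1)) : ℕ) * r j.succ) * 1 :=
            mul_le_mul_of_nonneg_left h2 (mul_nonneg (by positivity) (hr.1 _))
        _ ≤ r 0 := by rw [mul_one]; exact h3
    have hsum : 2 ^ (n + 1) * ∑ j : Fin n, r j.succ * w j ≤ n * r 0 := by
      rw [Finset.mul_sum]
      refine (Finset.sum_le_sum fun j _ => hterm j).trans ?_
      simp
    have hnn : (n : ℝ) ≤ 2 ^ n := by exact_mod_cast Nat.lt_two_pow_self.le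
    have h5 : (n : ℝ) * r 0 ≤ 2 ^ n * r 0 := mul_le_mul_of_nonneg_right hnn (hr.1 0)
    have h6 : (2 : ℝ) ^ n * (2 * ∑ j : Fin n, r j.succ * w j) ≤ 2 ^ n * r 0 := by
      rw [pow_succ] at hsum; linarith
    have h7 := le_of_mul_le_mul_left h6 (by positivity)
    linarith

/-! ### Growth of `A^p B^q` and the limit `λ_{p,q}` -/

open Matrix in
/-- On the cone, `A^p B^q` multiplies the leading entry by `λ^p η^q` up to a constant factor which
does not depend on `p` and `q`. -/
lemma exists_block_bound {b n : ℕ} (hb : 3 ≤ b) (hn : 1 ≤ n) {eta lam : ℝ}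
    (heta1 : (b : ℝ) - 1 < eta) (heta2 : eta < (b : ℝ))
    (heta : eta ^ (n + 1) = (b : ℝ) * eta ^ n - 1) (hlam1 : (b : ℝ) - 1 < lam)
    (hlam : lam ^ (n + 1) = ((b : ℝ) - 1) * ∑ i ∈ Finset.range (n + 1), lam ^ i) :
    ∃ C : ℝ, 0 < C ∧ ∀ p q : ℕ, ∀ r ∈ growthCone b n,
      r ᵥ* (matA b (n + 1) ^ p * matB b (n + 1) ^ q) ∈ growthCone b n ∧
      C⁻¹ * (lam ^ p * eta ^ q) * r 0 ≤
        (r ᵥ* (matA b (n + 1) ^ p * matB b (n + 1) ^ q)) 0 ∧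
      (r ᵥ* (matA b (n + 1) ^ p * matB b (n + 1) ^ q)) 0 ≤
        C * (lam ^ p * eta ^ q) * r 0 := by
  have hb' : (3 : ℝ) ≤ b := by exact_mod_cast hb
  obtain ⟨u, C, hC, hu, huC⟩ := exists_functional_matA hb hlam1 hlam
  obtain ⟨v, hv, hvC⟩ := exists_functional_matB hb hn heta1 heta2 heta
  refine ⟨2 * C, by linarith, fun p q r hr => ?_⟩
  have hlam0 : 0 < lam ^ p := pow_pos (by linarith) _
  have heta0 : 0 < eta ^ q := pow_pos (by linarith) _
  rw [← vecMul_vecMul]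
  have hs := growthCone_pow (fun r hr => growthCone_matA hb hn hr) p r hr
  have hsu := vecMul_pow_dotProduct hu p r
  set s := r ᵥ* matA b (n + 1) ^ p
  have ht := growthCone_pow (fun r hr => growthCone_matB hb hn hr) q s hs
  have htv := vecMul_pow_dotProduct hv q s
  set t := s ᵥ* matB b (n + 1) ^ q
  have h1 := huC r hr
  have h2 := huC s hs
  have h3 := hvC s hs
  have h4 := hvC t ht
  have e1 : lam ^ p * r 0 ≤ C * s 0 :=
    (mul_le_mul_of_nonneg_left h1.1 hlam0.le).trans (hsu ▸ h2.2)
  have e2 : s 0 ≤ lam ^ p * (C * r 0) :=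
    (hsu ▸ h2.1).trans (mul_le_mul_of_nonneg_left h1.2 hlam0.le)
  have e3 : eta ^ q * s 0 ≤ 2 * t 0 := by
    have := mul_le_mul_of_nonneg_left h3.2 heta0.le
    linarith [h4.1]
  have e4 : t 0 ≤ 2 * (eta ^ q * s 0) := by
    have := mul_le_mul_of_nonneg_left h3.1 heta0.le
    linarith [h4.2]
  refine ⟨ht, ?_, ?_⟩
  · have h5 : (lam ^ p * eta ^ q) * r 0 ≤ (2 * C) * t 0 := by
      have := mul_le_mul_of_nonneg_left e1 heta0.le
      have := mul_le_mul_of_nonneg_left e3 (by linarith : (0 : ℝ) ≤ C)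
      linarith
    rw [mul_assoc, inv_mul_le_iff₀ (by linarith)]
    exact h5
  · have := mul_le_mul_of_nonneg_left e2 heta0.le
    linarith

open Matrix in
/-- If `M` preserves the cone and multiplies the leading entry by a factor in `[X, Y]`, then
`‖M^k‖` lies between constant multiples of `X^k` and `Y^k`. The upper bound uses that the cone
spans: every basis row vector is a difference of two elements of the cone. -/
lemma exists_matNorm_pow_bound {b n : ℕ} (hb : 3 ≤ b)
    {M : Matrix (Fin (n + 1)) (Fin (n + 1)) ℝ} {X Y : ℝ} (hX : 0 ≤ X) (hY : 0 ≤ Y)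
    (hM : ∀ r ∈ growthCone b n, r ᵥ* M ∈ growthCone b n ∧
      X * r 0 ≤ (r ᵥ* M) 0 ∧ (r ᵥ* M) 0 ≤ Y * r 0) :
    ∃ c D : ℝ, 0 < c ∧ 0 < D ∧ ∀ k : ℕ, c * X ^ k ≤ matNorm (M ^ k) ∧
      matNorm (M ^ k) ≤ D * Y ^ k := by
  have hb' : (3 : ℝ) ≤ b := by exact_mod_cast hb
  have hpow : ∀ k : ℕ, ∀ r ∈ growthCone b n, r ᵥ* M ^ k ∈ growthCone b n ∧
      X ^ k * r 0 ≤ (r ᵥ* M ^ k) 0 ∧ (r ᵥ* M ^ k) 0 ≤ Y ^ k * r 0 := by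
    intro k r hr
    induction k with
    | zero => simpa using hr
    | succ k ih =>
      obtain ⟨i1, i2, i3⟩ := ih
      obtain ⟨j1, j2, j3⟩ := hM _ i1
      rw [pow_succ, ← vecMul_vecMul]
      refine ⟨j1, le_trans ?_ j2, j3.trans ?_⟩
      · rw [pow_succ, mul_comm (X ^ k), mul_assoc]; exact mul_le_mul_of_nonneg_left i2 hX
      · rw [pow_succ, mul_comm (Y ^ k), mul_assoc]; exact mul_le_mul_of_nonneg_left i3 hY
  -- A point in the interior of the cone, far enough from the boundary to absorb basis vectors.
  let ρ : Fin (n + 1) → ℝ := fun i => (b : ℝ) ^ (n + 1 - (i : ℕ))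
  have hstep : ∀ j : Fin n, (b : ℝ) + ((b : ℝ) - 1) * ρ j.succ ≤ ρ j.castSucc := by
    intro j
    have h1 : n + 1 - (j.castSucc : ℕ) = (n + 1 - (j.succ : ℕ)) + 1 := by
      simp only [Fin.val_castSucc, Fin.val_succ]; have := j.2; omega
    have h2 : (b : ℝ) ≤ (b : ℝ) ^ (n + 1 - (j.succ : ℕ)) :=
      le_self_pow₀ (by linarith) (by simp only [Fin.val_succ]; have := j.2; omega)
    simp only [ρ]
    rw [h1, pow_succ]
    linarith
  have hρpos : ∀ i, 0 < ρ i := fun i => by simp only [ρ]; positivity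
  have hρ : ρ ∈ growthCone b n := ⟨fun i => (hρpos i).le, fun j => by linarith [hstep j]⟩
  have hρi : ∀ i : Fin (n + 1), ρ + Pi.single i 1 ∈ growthCone b n := by
    intro i
    have h01 : ∀ l : Fin (n + 1), 0 ≤ (Pi.single i 1 : Fin (n + 1) → ℝ) l ∧
        (Pi.single i 1 : Fin (n + 1) → ℝ) l ≤ 1 := by
      intro l
      by_cases h : l = i
      · subst h; simp
      · simp [h]
    refine ⟨fun l => add_nonneg (hρpos l).le (h01 l).1, fun j => ?_⟩
    have h1 := (h01 j.castSucc).1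
    have h2 := mul_le_mul_of_nonneg_left (h01 j.succ).2 (by linarith : (0 : ℝ) ≤ b - 1)
    simp only [Pi.add_apply]
    linarith [hstep j]
  refine ⟨1, (n + 1) * ((n + 1) * (2 * ρ 0 + 1)), one_pos, ?_, fun k => ⟨?_, ?_⟩⟩
  · have := hρpos 0; positivity
  · have h1 := (hpow k ρ hρ).2.1
    have h2 : (ρ ᵥ* M ^ k) 0 ≤ ρ 0 * matNorm (M ^ k) := by
      simp only [vecMul, dotProduct, matNorm, Finset.mul_sum]
      refine Finset.sum_le_sum fun i _ => ?_
      rw [← Finset.mul_sum]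
      calc ρ i * (M ^ k) i 0 ≤ ρ i * |(M ^ k) i 0| :=
            mul_le_mul_of_nonneg_left (le_abs_self _) (hρpos i).le
        _ ≤ ρ 0 * |(M ^ k) i 0| :=
            mul_le_mul_of_nonneg_right (growthCone_le_zero hb hρ i) (abs_nonneg _)
        _ ≤ ρ 0 * ∑ j, |(M ^ k) i j| :=
            mul_le_mul_of_nonneg_left (Finset.single_le_sum (f := fun j => |(M ^ k) i j|)
              (fun j _ => abs_nonneg _) (Finset.mem_univ 0)) (hρpos 0).le
    rw [one_mul]
    refine le_of_mul_le_mul_left ?_ (hρpos 0)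
    linarith
  · have hentry : ∀ i j, |(M ^ k) i j| ≤ (2 * ρ 0 + 1) * Y ^ k := by
      intro i j
      have hYk := pow_nonneg hY k
      obtain ⟨a1, -, a3⟩ := hpow k ρ hρ
      obtain ⟨c1, -, c3⟩ := hpow k _ (hρi i)
      have a4 := growthCone_le_zero hb a1 j
      have c4 := growthCone_le_zero hb c1 j
      have a5 := a1.1 j
      have c5 := c1.1 j
      have hsingle : (Pi.single i 1 : Fin (n + 1) → ℝ) 0 ≤ 1 := by
        by_cases h : (0 : Fin (n + 1)) = i
        · subst h; simp
        · simp [h]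
      have c6 : Y ^ k * (ρ + Pi.single i 1 : Fin (n + 1) → ℝ) 0 ≤ Y ^ k * (ρ 0 + 1) :=
        mul_le_mul_of_nonneg_left (by simpa using hsingle) hYk
      have e : (M ^ k) i j = ((ρ + Pi.single i 1) ᵥ* M ^ k) j - (ρ ᵥ* M ^ k) j := by
        rw [add_vecMul, single_one_vecMul]; simp
      have hρY : 0 ≤ Y ^ k * ρ 0 := mul_nonneg hYk (hρpos 0).le
      rw [e, abs_le]
      constructor <;> nlinarith
    calc matNorm (M ^ k) ≤ ∑ _i : Fin (n + 1), ∑ _j : Fin (n + 1), (2 * ρ 0 + 1) * Y ^ k :=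
          Finset.sum_le_sum fun i _ => Finset.sum_le_sum fun j _ => hentry i j
      _ = _ := by simp; ring

lemma tendsto_const_mul_pow_root {c X : ℝ} (hc : 0 < c) (hX : 0 ≤ X) :
    Tendsto (fun k : ℕ => (c * X ^ k) ^ (1 / (k : ℝ))) atTop (nhds X) := by
  have h1 : Tendsto (fun k : ℕ => c ^ (1 / (k : ℝ))) atTop (nhds 1) := by
    have := (tendsto_const_nhds (x := c)).rpow tendsto_one_div_atTop_nhds_zero_nat
      (Or.inl hc.ne')
    simpa using this
  have h2 : Tendsto (fun k : ℕ => c ^ (1 / (k : ℝ)) * X) atTop (nhds X) := by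
    simpa using h1.mul_const X
  refine h2.congr' ?_
  filter_upwards [eventually_ne_atTop 0] with k hk
  rw [Real.mul_rpow hc.le (pow_nonneg hX k), one_div, Real.pow_rpow_inv_natCast hX hk]

/-- The limit `λ_{p,q}` equals `λ^p η^q` up to a factor which does not depend on `p` and `q`. -/
lemma exists_lpq_bound {b n : ℕ} (hb : 3 ≤ b) (hn : 1 ≤ n) {eta lam : ℝ}
    (heta1 : (b : ℝ) - 1 < eta) (heta2 : eta < (b : ℝ))
    (heta : eta ^ (n + 1) = (b : ℝ) * eta ^ n - 1) (hlam1 : (b : ℝ) - 1 < lam)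
    (hlam : lam ^ (n + 1) = ((b : ℝ) - 1) * ∑ i ∈ Finset.range (n + 1), lam ^ i) :
    ∃ C : ℝ, 0 < C ∧ ∀ p q : ℕ, ∀ L : ℝ,
      Tendsto (fun k : ℕ => matNorm ((matA b (n + 1) ^ p * matB b (n + 1) ^ q) ^ k)
        ^ (1 / (k : ℝ))) atTop (nhds L) →
      C⁻¹ * (lam ^ p * eta ^ q) ≤ L ∧ L ≤ C * (lam ^ p * eta ^ q) := by
  have hb' : (3 : ℝ) ≤ b := by exact_mod_cast hb
  obtain ⟨C, hC, h⟩ := exists_block_bound hb hn heta1 heta2 heta hlam1 hlam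
  refine ⟨C, hC, fun p q L hL => ?_⟩
  have hlam0 : 0 < lam := by linarith
  have heta0 : 0 < eta := by linarith
  have hX : 0 ≤ C⁻¹ * (lam ^ p * eta ^ q) := by positivity
  have hY : 0 ≤ C * (lam ^ p * eta ^ q) := by positivity
  obtain ⟨c, D, hc, hD, hk⟩ := exists_matNorm_pow_bound hb hX hY (h p q)
  constructor
  · refine le_of_tendsto_of_tendsto' (tendsto_const_mul_pow_root hc hX) hL fun k => ?_
    exact Real.rpow_le_rpow (by positivity) (hk k).1 (by positivity)
  · refine le_of_tendsto_of_tendsto' hL (tendsto_const_mul_pow_root hD hY) fun k => ?_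
    exact Real.rpow_le_rpow ((by positivity : 0 ≤ c * _ ^ k).trans (hk k).1) (hk k).2
      (by positivity)

/-- **Theorem 1.8 (second part).** The set of values `log λ_{p,q} / ((p+q) log b)`,
where `λ_{p,q} = lim_k ‖(A^p B^q)^k‖^{1/k}`, is dense in `[log η / log b, log λ / log b]`. -/
theorem dense_lambda_pq (b m : ℕ) (hb : 3 ≤ b) (hm : 2 ≤ m)
    (eta : ℝ) (heta1 : (b : ℝ) - 1 < eta) (heta2 : eta < (b : ℝ))
    (heta : eta ^ m = (b : ℝ) * eta ^ (m - 1) - 1)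
    (lam : ℝ) (hlam1 : (b : ℝ) - 1 < lam) (hlam2 : lam < (b : ℝ))
    (hlam : lam ^ m = ((b : ℝ) - 1) * ∑ i ∈ Finset.range m, lam ^ i)
    (lpq : ℕ → ℕ → ℝ)
    (hlpq : ∀ p q : ℕ, 1 ≤ p → 1 ≤ q →
      Filter.Tendsto
        (fun k : ℕ => matNorm ((matA b m ^ p * matB b m ^ q) ^ k) ^ (1 / (k : ℝ)))
        Filter.atTop (nhds (lpq p q))) :
    Set.Icc (Real.log eta / Real.log b) (Real.log lam / Real.log b) ⊆
      closure { x : ℝ | ∃ p q : ℕ, 1 ≤ p ∧ 1 ≤ q ∧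
        x = Real.log (lpq p q) / (((p : ℝ) + (q : ℝ)) * Real.log b) } := by
  obtain ⟨n, rfl⟩ : ∃ k, m = k + 1 := ⟨m - 1, by omega⟩
  have hn : 1 ≤ n := by omega
  rw [Nat.add_sub_cancel] at heta
  have hb' : (3 : ℝ) ≤ b := by exact_mod_cast hb
  have hlam0 : 0 < lam := by linarith
  have heta0 : 0 < eta := by linarith
  have hlogb : 0 < Real.log b := Real.log_pos (by linarith)
  obtain ⟨C, hC, hbound⟩ := exists_lpq_bound hb hn heta1 heta2 heta hlam1 hlam
  have hlog : ∀ p q : ℕ, 1 ≤ p → 1 ≤ q →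
      |Real.log (lpq p q) - (p * Real.log lam + q * Real.log eta)| ≤ |Real.log C| := by
    intro p q hp hq
    obtain ⟨h1, h2⟩ := hbound p q _ (hlpq p q hp hq)
    have hX : 0 < lam ^ p * eta ^ q := by positivity
    have hXlog : Real.log (lam ^ p * eta ^ q) = p * Real.log lam + q * Real.log eta := by
      rw [Real.log_mul (by positivity) (by positivity), Real.log_pow, Real.log_pow]
    have hpos : 0 < C⁻¹ * (lam ^ p * eta ^ q) := by positivity
    have g1 := Real.log_le_log hpos h1
    have g2 := Real.log_le_log (hpos.trans_le h1) h2
    rw [Real.log_mul (by positivity) hX.ne', Real.log_inv, hXlog] at g1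
    rw [Real.log_mul hC.ne' hX.ne', hXlog] at g2
    have := le_abs_self (Real.log C)
    rw [abs_le]
    constructor <;> linarith
  intro y hy
  rw [← segment_eq_Icc (hy.1.trans hy.2)] at hy
  obtain ⟨s, t, hs, ht, hst, rfl⟩ := hy
  -- Block lengths with `p / N → t` and `q / N → s`.
  let p : ℕ → ℕ := fun N => ⌊t * N⌋₊ + 1
  let q : ℕ → ℕ := fun N => ⌊s * N⌋₊ + 1
  have hfloor : ∀ a : ℝ, 0 ≤ a →
      Tendsto (fun N : ℕ => ((⌊a * N⌋₊ + 1 : ℕ) : ℝ) / N) atTop (nhds a) := by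
    intro a ha
    have h1 := (tendsto_nat_floor_mul_div_atTop ha).comp (tendsto_natCast_atTop_atTop (R := ℝ))
    have h2 := h1.add (tendsto_one_div_atTop_nhds_zero_nat (𝕜 := ℝ))
    rw [add_zero] at h2
    refine h2.congr fun N => ?_
    simp [add_div]
  have hp : Tendsto (fun N : ℕ => (p N : ℝ) / N) atTop (nhds t) := hfloor t ht
  have hq : Tendsto (fun N : ℕ => (q N : ℝ) / N) atTop (nhds s) := hfloor s hs
  have herr : Tendsto (fun N : ℕ => (Real.log (lpq (p N) (q N)) -
      (p N * Real.log lam + q N * Real.log eta)) / N) atTop (nhds 0) := by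
    refine squeeze_zero_norm (a := fun N : ℕ => |Real.log C| / N) (fun N => ?_)
      (tendsto_const_div_atTop_nhds_zero_nat _)
    rw [norm_div, Real.norm_eq_abs, Real.norm_natCast]
    exact div_le_div_of_nonneg_right
      (hlog (p N) (q N) (Nat.le_add_left _ _) (Nat.le_add_left _ _)) (Nat.cast_nonneg N)
  have hnum := ((hp.mul_const (Real.log lam)).add (hq.mul_const (Real.log eta))).add herr
  have hden := (hp.add hq).mul_const (Real.log b)
  have hts : t + s = 1 := by linarith
  have hlim := hnum.div hden (by rw [hts]; simpa using hlogb.ne')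
  have hval : (t * Real.log lam + s * Real.log eta + 0) / ((t + s) * Real.log b)
      = s • (Real.log eta / Real.log b) + t • (Real.log lam / Real.log b) := by
    rw [hts, smul_eq_mul, smul_eq_mul]
    field_simp
    ring
  rw [hval] at hlim
  refine mem_closure_of_tendsto hlim ?_
  filter_upwards [eventually_gt_atTop 0] with N hN
  refine ⟨p N, q N, Nat.le_add_left _ _, Nat.le_add_left _ _, ?_⟩
  have hN' : (0 : ℝ) < N := by exact_mod_cast hN
  have hpq : (0 : ℝ) < (p N : ℝ) + q N := by
    have : 0 < p N + q N := by simp only [p]; omega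
    exact_mod_cast this
  simp only [Pi.div_apply]
  field_simp
  ring

end Paper
end

section
/- Let φ : ℕ → (0,∞) be a positive function with φ(n) → 0 as n → ∞. Then the set E(φ) = {x ∈ [0,1) : |T_b^n(x) − x| ≥ φ(n) for all but finitely many n ≥ 1} has Hausdorff dimension 1. -/
/-!
For `p ≥ 1`, consider the Cantor set `S` of numbers whose base-`b` expansion is a concatenation of
blocks of length `p + 1`, each ending in the digit `1` and otherwise arbitrary. No `p + 1`
consecutive digits of a point `y ∈ S` vanish, so the whole orbit of `y` stays above `b⁻⁽ᵖ⁺¹⁾`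
(`fract_padded`). Prepending `p + 2` zeros, `x = y / b ^ (p + 2)` lies below `b⁻⁽ᵖ⁺²⁾` while
`T_b ^ n x`, for `n ≥ p + 2`, stays above `b⁻⁽ᵖ⁺¹⁾`; the distance is bounded below by a positive
constant, which eventually exceeds `φ n`. Hence the set of the theorem contains
`S / b ^ (p + 2)`, which has the same dimension as `S`.

To bound the dimension of `S` from below without constructing a measure, delete the forced digits:
reading the free blocks as digits in base `b ^ p` maps `S` onto `[0, 1]`, and this map is
`p / (p + 1)`-Hölder (`holder_padded`), since two points of `S` that first differ in block `k`
are at distance at least `b ^ (-(p + 1) (k + 1))`, while their images are at distance at most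
`b ^ (-p k)`. Therefore `dimH S ≥ p / (p + 1)`, and `p → ∞` gives the result.
-/

open MeasureTheory Filter

namespace Paper

/-- The expanding map `T_b : [0,1) → [0,1)`, `x ↦ bx (mod 1)`. -/
noncomputable def Tmap (b : ℕ) : ℝ → ℝ := fun x => Int.fract ((b : ℝ) * x)

/-- The digits in base `b ^ (p + 1)` obtained by appending, in base `b`, a digit `1` to each of the
base-`b ^ p` digits `u k`. -/
def pad {b : ℕ} (hb : 3 ≤ b) {p : ℕ} (u : ℕ → Fin (b ^ p)) : ℕ → Fin (b ^ (p + 1)) :=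
  fun k => ⟨b * u k + 1, by
    have := (u k).isLt
    rw [pow_succ']
    nlinarith⟩

/-- The real number whose expansion in base `b ^ (p + 1)` has the digits `pad hb u`. -/
noncomputable def padded {b : ℕ} (hb : 3 ≤ b) {p : ℕ} (u : ℕ → Fin (b ^ p)) : ℝ :=
  Real.ofDigits (pad hb u)

section

variable {b : ℕ} (hb : 3 ≤ b) {p : ℕ}

lemma padded_step (u : ℕ → Fin (b ^ p)) :
    (b : ℝ) ^ (p + 1) * padded hb u
      = (b * (u 0 : ℕ) + 1 : ℕ) + padded hb (fun i => u (i + 1)) := by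
  have hb0 : (b : ℝ) ≠ 0 := by positivity
  have h := Real.ofDigits_eq_sum_add_ofDigits (pad hb u) 1
  simp only [Finset.sum_range_one, Real.ofDigitsTerm, zero_add, pow_one, Nat.cast_pow] at h
  unfold padded
  rw [h]
  simp only [pad]
  field_simp
  rfl

lemma padded_nonneg (u : ℕ → Fin (b ^ p)) : 0 ≤ padded hb u := Real.ofDigits_nonneg _

/-- The leading digit of `padded hb u` is at most `b ^ (p + 1) - b + 1`; because `b ≥ 3` it is not
the largest digit, so the expansion does not represent `1`. -/
lemma padded_lt_one (u : ℕ → Fin (b ^ p)) : padded hb u < 1 := by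
  have h := padded_step hb u
  have h1 : padded hb (fun i => u (i + 1)) ≤ 1 := Real.ofDigits_le_one _
  have hu : ((u 0 : ℕ) : ℝ) + 1 ≤ (b : ℝ) ^ p := by exact_mod_cast (u 0).isLt
  have hb' : (3 : ℝ) ≤ b := by exact_mod_cast hb
  have hB : (0 : ℝ) < (b : ℝ) ^ (p + 1) := by positivity
  push_cast at h
  refine lt_of_mul_lt_mul_left ?_ hB.le
  rw [h, pow_succ']
  nlinarith

lemma padded_shift (n : ℕ) : ∀ u : ℕ → Fin (b ^ p), ∃ z : ℤ,
    (b : ℝ) ^ ((p + 1) * n) * padded hb u = z + padded hb (fun i => u (i + n)) := by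
  induction n with
  | zero => exact fun u => ⟨0, by simp⟩
  | succ n ih =>
    intro u
    obtain ⟨z, hz⟩ := ih (fun i => u (i + 1))
    refine ⟨z + b ^ ((p + 1) * n) * (b * (u 0 : ℕ) + 1 : ℕ), ?_⟩
    have h := padded_step hb u
    have e : (fun i => u (i + (n + 1))) = fun i => u (i + n + 1) := by
      ext i; rw [add_assoc]
    rw [e, Nat.mul_succ, pow_add, mul_assoc, h, mul_add, hz]
    push_cast
    ring

/-- Within the first block, the orbit of `padded hb u` stays away from `0`, because the digit `1`
ending that block is still to come. -/
lemma fract_padded_block (u : ℕ → Fin (b ^ p)) {j : ℕ} (hj : j ≤ p) :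
    ((b : ℝ) ^ (p + 1))⁻¹ ≤ Int.fract ((b : ℝ) ^ j * padded hb u) := by
  obtain ⟨i, rfl⟩ := Nat.exists_eq_add_of_le hj
  have hb0 : (0 : ℝ) < b := by positivity
  have h := padded_step hb u
  set Y := padded hb (fun i => u (i + 1))
  have hY0 : 0 ≤ Y := padded_nonneg hb _
  have hY1 : Y < 1 := padded_lt_one hb _
  set N : ℕ := b * (u 0 : ℕ) + 1
  have hM : 0 < b ^ (i + 1) := by positivity
  have hs1 : 1 ≤ N % b ^ (i + 1) := by
    have h1 : N % b ^ (i + 1) % b = 1 := by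
      rw [Nat.mod_mod_of_dvd _ (dvd_pow_self b (by omega)), Nat.mul_add_mod,
        Nat.mod_eq_of_lt (by omega)]
    by_contra! h0
    rw [Nat.lt_one_iff.mp h0] at h1
    simp at h1
  have hs2 : N % b ^ (i + 1) + 1 ≤ b ^ (i + 1) := Nat.mod_lt _ hM
  have hdiv := Nat.div_add_mod N (b ^ (i + 1))
  set s := N % b ^ (i + 1)
  set q := N / b ^ (i + 1)
  have hdiv' : (b : ℝ) ^ (i + 1) * q + s = N := by exact_mod_cast hdiv
  have hs1' : (1 : ℝ) ≤ s := by exact_mod_cast hs1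
  have hs2' : (s : ℝ) + 1 ≤ (b : ℝ) ^ (i + 1) := by exact_mod_cast hs2
  have hM' : (0 : ℝ) < (b : ℝ) ^ (i + 1) := by positivity
  have hf : Int.fract ((b : ℝ) ^ j * padded hb u) = (s + Y) / (b : ℝ) ^ (i + 1) := by
    rw [Int.fract_eq_iff]
    refine ⟨by positivity, by rw [div_lt_one hM']; linarith, q, ?_⟩
    have h2 : (b : ℝ) ^ (i + 1) * ((b : ℝ) ^ j * padded hb u) = N + Y := by
      rw [← h]; ring
    field_simp
    push_cast
    linarith
  rw [hf, inv_eq_one_div]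
  have hle : (b : ℝ) ^ (i + 1) ≤ (b : ℝ) ^ (j + i + 1) :=
    pow_le_pow_right₀ (by exact_mod_cast (by omega : 1 ≤ b)) (by omega)
  gcongr
  linarith

lemma fract_padded (u : ℕ → Fin (b ^ p)) (n : ℕ) :
    ((b : ℝ) ^ (p + 1))⁻¹ ≤ Int.fract ((b : ℝ) ^ n * padded hb u) := by
  obtain ⟨z, hz⟩ := padded_shift hb (n / (p + 1)) u
  have hn : n = n % (p + 1) + (p + 1) * (n / (p + 1)) := (Nat.mod_add_div _ _).symm
  have e : (b : ℝ) ^ n * padded hb u = (b : ℝ) ^ (n % (p + 1)) *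
      padded hb (fun i => u (i + n / (p + 1))) + ((b ^ (n % (p + 1)) * z : ℤ) : ℝ) := by
    conv_lhs => rw [hn]
    rw [pow_add, mul_assoc, hz]
    push_cast
    ring
  rw [e, Int.fract_add_intCast]
  exact fract_padded_block hb _ (Nat.lt_succ_iff.mp (Nat.mod_lt _ (Nat.succ_pos p)))

/-- The gap created by the forced digit: padded numbers that first differ in block `k` are at least
one unit of that block apart. -/
lemma separation (u v : ℕ → Fin (b ^ p)) (k : ℕ) (hlt : ∀ i < k, u i = v i) (hk : u k ≠ v k) :
    ((b : ℝ) ^ ((p + 1) * (k + 1)))⁻¹ ≤ |padded hb u - padded hb v| := by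
  have hb' : (3 : ℝ) ≤ b := by exact_mod_cast hb
  have hB : (0 : ℝ) < (b : ℝ) ^ ((p + 1) * (k + 1)) := by positivity
  have hdiff : padded hb u - padded hb v = ((b : ℝ) ^ ((p + 1) * k))⁻¹ *
      (padded hb (fun i => u (i + k)) - padded hb (fun i => v (i + k))) := by
    have hs : ∑ i ∈ Finset.range k, Real.ofDigitsTerm (pad hb u) i
        = ∑ i ∈ Finset.range k, Real.ofDigitsTerm (pad hb v) i :=
      Finset.sum_congr rfl fun i hi => by
        simp [Real.ofDigitsTerm, pad, hlt i (Finset.mem_range.mp hi)]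
    unfold padded
    rw [Real.ofDigits_eq_sum_add_ofDigits (pad hb u) k,
      Real.ofDigits_eq_sum_add_ofDigits (pad hb v) k, hs, add_sub_add_left_eq_sub, ← mul_sub,
      pow_mul, Nat.cast_pow]
    rfl
  have h1 := padded_step hb (fun i => u (i + k))
  have h2 := padded_step hb (fun i => v (i + k))
  have e : (b : ℝ) ^ ((p + 1) * (k + 1)) * (padded hb u - padded hb v)
      = b * ((u k : ℕ) - (v k : ℕ) : ℝ) + (padded hb (fun i => u (i + 1 + k))
        - padded hb (fun i => v (i + 1 + k))) := by
    have hb0 : (b : ℝ) ≠ 0 := by positivity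
    rw [hdiff, Nat.mul_succ, pow_add]
    simp only [zero_add] at h1 h2
    push_cast at h1 h2
    field_simp
    linarith
  have a1 := padded_nonneg hb (fun i => u (i + 1 + k))
  have a2 := padded_lt_one hb (fun i => u (i + 1 + k))
  have a3 := padded_nonneg hb (fun i => v (i + 1 + k))
  have a4 := padded_lt_one hb (fun i => v (i + 1 + k))
  have key : 1 ≤ |(b : ℝ) ^ ((p + 1) * (k + 1)) * (padded hb u - padded hb v)| := by
    rw [e]
    rcases lt_or_gt_of_ne (fun h => hk (Fin.ext h) : (u k : ℕ) ≠ (v k : ℕ)) with h | h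
    · have : ((u k : ℕ) : ℝ) + 1 ≤ (v k : ℕ) := by exact_mod_cast h
      rw [le_abs']; left; nlinarith
    · have : ((v k : ℕ) : ℝ) + 1 ≤ (u k : ℕ) := by exact_mod_cast h
      rw [le_abs']; right; nlinarith
  rw [abs_mul, abs_of_pos hB] at key
  rwa [inv_le_iff_one_le_mul₀' hB]

/-- Deleting the forced digits is `p / (p + 1)`-Hölder. -/
lemma holder_padded (u v : ℕ → Fin (b ^ p)) :
    |Real.ofDigits u - Real.ofDigits v|
      ≤ (b : ℝ) ^ p * |padded hb u - padded hb v| ^ ((p : ℝ) / (p + 1)) := by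
  by_cases huv : u = v
  · subst huv
    simp only [sub_self, abs_zero]
    positivity
  have hex : ∃ k, u k ≠ v k := Function.ne_iff.mp huv
  classical
  obtain ⟨k, hk, hlt⟩ : ∃ k, u k ≠ v k ∧ ∀ i < k, u i = v i :=
    ⟨Nat.find hex, Nat.find_spec hex, fun i hi => not_not.mp (Nat.find_min hex hi)⟩
  have hb0 : (0 : ℝ) < b := by positivity
  have hsep := separation hb u v k hlt hk
  have e : (((b : ℝ) ^ ((p + 1) * (k + 1)))⁻¹) ^ ((p : ℝ) / (p + 1))
      = ((b : ℝ) ^ (p * (k + 1)))⁻¹ := by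
    rw [Real.inv_rpow (by positivity), ← Real.rpow_natCast, ← Real.rpow_mul hb0.le,
      ← Real.rpow_natCast]
    congr 2
    push_cast
    field_simp
  calc |Real.ofDigits u - Real.ofDigits v|
      ≤ (((b ^ p : ℕ) : ℝ) ^ k)⁻¹ := Real.abs_ofDigits_sub_ofDigits_le hlt
    _ = (b : ℝ) ^ p * ((b : ℝ) ^ (p * (k + 1)))⁻¹ := by
        rw [Nat.cast_pow, ← pow_mul, Nat.mul_succ, pow_add]
        field_simp
    _ ≤ _ := by
        rw [← e]
        gcongr

/-- The Cantor set of padded numbers has dimension at least `p / (p + 1)`. -/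
lemma le_dimH_range_padded (hp : 0 < p) :
    (((p : NNReal) / (p + 1) : NNReal) : ENNReal)
      ≤ dimH (Set.range (padded hb : (ℕ → Fin (b ^ p)) → ℝ)) := by
  have hbp : 1 < b ^ p := Nat.one_lt_pow hp.ne' (by omega)
  have : NeZero (b ^ p) := ⟨by omega⟩
  -- A right inverse is enough: by the Hölder estimate, its choice does not affect the value of `f`.
  let f : ℝ → ℝ := fun x => Real.ofDigits (Function.invFun
    (padded hb : (ℕ → Fin (b ^ p)) → ℝ) x)
  set S := Set.range (padded hb : (ℕ → Fin (b ^ p)) → ℝ)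
  set r : NNReal := (p : NNReal) / (p + 1)
  have hr : 0 < r := by
    have : (0 : NNReal) < p := by exact_mod_cast hp
    positivity
  have hinv : ∀ x ∈ S, padded hb (Function.invFun
      (padded hb : (ℕ → Fin (b ^ p)) → ℝ) x) = x := fun x hx => Function.invFun_eq hx
  have hbound : ∀ u v : ℕ → Fin (b ^ p), edist (Real.ofDigits u) (Real.ofDigits v)
      ≤ ((b ^ p : NNReal) : ENNReal) * edist (padded hb u) (padded hb v) ^ (r : ℝ) := by
    intro u v
    have hre : (r : ℝ) = (p : ℝ) / (p + 1) := by simp [r]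
    rw [edist_dist, edist_dist, ENNReal.ofReal_rpow_of_nonneg dist_nonneg r.coe_nonneg,
      ← ENNReal.ofReal_coe_nnreal, ← ENNReal.ofReal_mul (NNReal.coe_nonneg _)]
    refine ENNReal.ofReal_le_ofReal ?_
    rw [Real.dist_eq, Real.dist_eq, hre]
    simpa using holder_padded hb u v
  have hol : HolderOnWith (b ^ p : NNReal) r f S := by
    intro x hx y hy
    have := hbound (Function.invFun (padded hb) x) (Function.invFun (padded hb) y)
    rwa [hinv x hx, hinv y hy] at this
  have hsurj : Set.Icc (0 : ℝ) 1 ⊆ f '' S := by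
    intro t ht
    obtain ⟨u, -, rfl⟩ := Real.ofDigits_SurjOn hbp ht
    refine ⟨padded hb u, ⟨u, rfl⟩, ?_⟩
    have h := hbound (Function.invFun (padded hb) (padded hb u)) u
    rw [hinv _ ⟨u, rfl⟩, edist_self, ENNReal.zero_rpow_of_pos (by exact_mod_cast hr), mul_zero]
      at h
    exact edist_le_zero.mp h
  have h1 : dimH (Set.Icc (0 : ℝ) 1) = 1 := by
    rw [Real.dimH_of_nonempty_interior (by simp)]
    simp
  have h2 : 1 ≤ dimH S / r := h1 ▸ (dimH_mono hsurj).trans (hol.dimH_image_le hr)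
  rwa [ENNReal.le_div_iff_mul_le (Or.inl (by exact_mod_cast hr.ne')) (Or.inl ENNReal.coe_ne_top),
    one_mul] at h2

end

lemma Tmap_iterate (b n : ℕ) {x : ℝ} (hx : x ∈ Set.Ico (0 : ℝ) 1) :
    (Tmap b)^[n] x = Int.fract ((b : ℝ) ^ n * x) := by
  induction n with
  | zero => simp [Int.fract_eq_self.mpr hx]
  | succ n ih =>
    rw [Function.iterate_succ_apply', ih, Tmap, Int.fract_eq_fract]
    refine ⟨-(b * ⌊(b : ℝ) ^ n * x⌋), ?_⟩
    rw [Int.fract]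
    push_cast
    ring

/-- **Theorem 1.5 (i).** If `φ(n) → 0`, then the set
`E(φ) = {x ∈ [0,1) : |T_b^n x - x| ≥ φ(n) for all but finitely many n}` has full
Hausdorff dimension. -/
theorem dimH_non_recurrent_eq_one (b : ℕ) (hb : 3 ≤ b)
    (φ : ℕ → ℝ) (hφ : ∀ n, 1 ≤ n → 0 < φ n)
    (h0 : Filter.Tendsto φ Filter.atTop (nhds 0)) :
    dimH { x : ℝ | x ∈ Set.Ico (0 : ℝ) 1 ∧
        ∀ᶠ n in Filter.atTop, φ n ≤ |(Tmap b)^[n] x - x| } = 1 := by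
  have hb' : (3 : ℝ) ≤ b := by exact_mod_cast hb
  set E := { x : ℝ | x ∈ Set.Ico (0 : ℝ) 1 ∧
        ∀ᶠ n in Filter.atTop, φ n ≤ |(Tmap b)^[n] x - x| }
  refine le_antisymm ((dimH_mono (Set.subset_univ E)).trans_eq Real.dimH_univ) ?_
  have key : ∀ p : ℕ, 0 < p → (((p : NNReal) / (p + 1) : NNReal) : ENNReal) ≤ dimH E := by
    intro p hp
    refine (le_dimH_range_padded hb hp).trans ?_
    have hB : (0 : ℝ) < (b : ℝ) ^ (p + 1) := by positivity
    have hsub : Set.range (padded hb : (ℕ → Fin (b ^ p)) → ℝ)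
        ⊆ (fun x : ℝ => ((b : ℝ) ^ (p + 2)) • x) '' E := by
      rintro _ ⟨u, rfl⟩
      have hy0 := padded_nonneg hb u
      have hy1 := padded_lt_one hb u
      have hD : (1 : ℝ) ≤ (b : ℝ) ^ (p + 2) := one_le_pow₀ (by linarith)
      set x := padded hb u / (b : ℝ) ^ (p + 2) with hx
      have hyx : (b : ℝ) ^ (p + 2) * x = padded hb u := by
        rw [hx]; field_simp
      have hx0 : 0 ≤ x := by positivity
      have hxle : x ≤ ((b : ℝ) ^ (p + 2))⁻¹ := by
        rw [hx, div_eq_mul_inv]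
        exact mul_le_of_le_one_left (by positivity) hy1.le
      have hgap : 0 < ((b : ℝ) ^ (p + 1))⁻¹ - ((b : ℝ) ^ (p + 2))⁻¹ := by
        rw [sub_pos]
        exact inv_strictAnti₀ hB (pow_lt_pow_right₀ (by linarith) (by omega))
      have hxI : x ∈ Set.Ico (0 : ℝ) 1 := ⟨hx0, by nlinarith⟩
      refine ⟨x, ⟨hxI, ?_⟩, hyx⟩
      filter_upwards [h0.eventually_le_const hgap, eventually_ge_atTop (p + 2)] with n hn hnp
      obtain ⟨k, rfl⟩ := Nat.exists_eq_add_of_le hnp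
      have h := fract_padded hb u k
      rw [← hyx, ← mul_assoc, ← pow_add, add_comm k] at h
      rw [Tmap_iterate b _ hxI]
      exact le_trans (by linarith) (le_abs_self _)
    exact (dimH_mono hsub).trans
      ((lipschitzWith_smul ((b : ℝ) ^ (p + 2))).dimH_image_le E)
  have hlim : Tendsto (fun p : ℕ => (((p : NNReal) / (p + 1) : NNReal) : ENNReal)) atTop
      (nhds ((1 : NNReal) : ENNReal)) := by
    rw [ENNReal.tendsto_coe, ← NNReal.tendsto_coe]
    simpa using tendsto_natCast_div_add_atTop (𝕜 := ℝ) 1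
  exact le_of_tendsto hlim ((eventually_gt_atTop 0).mono key)

end Paper
end

section
/- The joint spectral radius of the family 𝒜 = {A_d : d ∈ D_b^m}, namely the limit lim_{n→∞} sup{ ‖A_{d^0}A_{d^1}⋯A_{d^{n−1}}‖^{1/n} : d^0, d^1, …, d^{n−1} ∈ D_b^m }, exists and equals λ, the unique root in (b−1, b) of x^m − (b−1)(x^{m−1} + ⋯ + x + 1) = 0. Moreover, for every n ∈ ℕ and every progressively overlapping sequence ω ∈ (D_b^m)^{ℕ₀} which is periodic with period n (ω^{k+n} = ω^k for all k ≥ 0), one has lim_{k→∞} ‖(A_{ω^0}A_{ω^1}⋯A_{ω^{n−1}})^k‖^{1/(nk)} = λ; in particular the finiteness property holds for 𝒜. -/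
open MeasureTheory Filter

namespace Paper


/-!
The entry sum of `A_{ω^0} ⋯ A_{ω^{n-1}}` counts words `x` of length `n + m - 1` whose `i`-th window of
length `m` differs from `ω^i`.  Both bounds on its growth come from one weight function on states.

At time `k` the state `u` (the last `m - 1` letters read) has a *match of length `j`* if its last `j`
letters are the first `j` letters of the forbidden word `ω^{k+m-1-j}` that is currently `j` letters
long.  Let `L(k,u)` be the largest match length, let `h(0) = 1` and `h(j+1) = λ h(j) - (b-1)`, and put
`F_k(u) = h(L(k,u))`.  The equation for `λ` says exactly that `h(m) = 0`, and `λ < b` makes `h`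
decreasing, so `h(m-1) ≤ F_k ≤ 1` with `h(m-1) = (b-1)/λ > 0`.

If `j = L(k,u)`, one of the `b` possible next letters extends the longest match to length `j + 1`
(or completes a forbidden word, when `j + 1 = m`), and contributes at most `h(j+1)`; the others
contribute at most `h(0) = 1`.  Hence `A_{ω^k} F_{k+1} ≤ λ F_k` for every `ω`
(`adjMat_weight_le`).  When `ω` is progressively overlapping, all forbidden words prescribe the same
letter at a given position, so every other letter destroys all matches, and equality holds
(`adjMat_weight_eq`).  Iterating gives `‖A_{ω^0} ⋯ A_{ω^{n-1}}‖ ≤ C λ^n` in general and `≥ c λ^n` in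
the progressively overlapping case, with `c, C > 0` independent of `ω`; both limits follow by taking
`n`-th roots.
-/

/-! ### The weight sequence -/

/-- The weights `h(0) = 1`, `h(j+1) = λ h(j) - (β - 1)`, where `β` is the number of letters. -/
noncomputable def hseq (β lam : ℝ) : ℕ → ℝ
  | 0 => 1
  | j + 1 => lam * hseq β lam j - (β - 1)

lemma hseq_closed (β lam : ℝ) (j : ℕ) :
    hseq β lam j = lam ^ j - (β - 1) * ∑ i ∈ Finset.range j, lam ^ i := by
  induction j with
  | zero => simp [hseq]
  | succ j ih =>
    rw [hseq, ih, Finset.sum_range_succ', pow_succ]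
    simp only [pow_succ, ← Finset.sum_mul]
    ring

lemma hseq_sub (β lam : ℝ) (j : ℕ) :
    hseq β lam j - hseq β lam (j + 1) = (β - lam) * lam ^ j := by
  induction j with
  | zero => simp [hseq]; ring
  | succ j ih =>
    have h1 : hseq β lam (j + 1) = lam * hseq β lam j - (β - 1) := rfl
    have h2 : hseq β lam (j + 1 + 1) = lam * hseq β lam (j + 1) - (β - 1) := rfl
    rw [pow_succ, ← mul_assoc, ← ih]
    linarith

lemma hseq_antitone {β lam : ℝ} (h0 : 0 ≤ lam) (h1 : lam ≤ β) : Antitone (hseq β lam) := by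
  refine antitone_nat_of_succ_le fun j => ?_
  have := hseq_sub β lam j
  have := mul_nonneg (sub_nonneg.2 h1) (pow_nonneg h0 j)
  linarith

/-! ### Matches with the forbidden words and the weight of a state -/

section States

variable {b m : ℕ}

/-- The successor of the state `u` after reading the letter `c`: drop the first letter, append `c`. -/
def shiftState (u : Fin (m - 1) → Fin b) (c : Fin b) : Fin (m - 1) → Fin b :=
  fun i => if h : i.1 + 1 < m - 1 then u ⟨i.1 + 1, h⟩ else c

/-- At time `k`, the last `j` letters of the state `u` are the first `j` letters of
`ω^{k+m-1-j}`.  Meaningful for `j ≤ m - 1`; position `s` of `u` faces position `t` of the forbidden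
word when `s + j = m - 1 + t`. -/
def IsMatch (ω : ℕ → Fin m → Fin b) (k : ℕ) (u : Fin (m - 1) → Fin b) (j : ℕ) : Prop :=
  ∀ (s : ℕ) (hs : s < m - 1) (t : ℕ) (ht : t < m), s + j = m - 1 + t →
    u ⟨s, hs⟩ = ω (k + (m - 1 - j)) ⟨t, ht⟩

open Classical in
/-- The largest `j ≤ m - 1` for which `u` has a match of length `j` at time `k`. -/
noncomputable def matchLen (ω : ℕ → Fin m → Fin b) (k : ℕ) (u : Fin (m - 1) → Fin b) : ℕ :=
  Nat.findGreatest (IsMatch ω k u) (m - 1)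

lemma isMatch_zero (ω : ℕ → Fin m → Fin b) (k : ℕ) (u : Fin (m - 1) → Fin b) :
    IsMatch ω k u 0 := by
  intro s hs t ht h
  omega

lemma matchLen_le (ω : ℕ → Fin m → Fin b) (k : ℕ) (u : Fin (m - 1) → Fin b) :
    matchLen ω k u ≤ m - 1 := by
  classical
  unfold matchLen
  exact Nat.findGreatest_le _

lemma isMatch_matchLen (ω : ℕ → Fin m → Fin b) (k : ℕ) (u : Fin (m - 1) → Fin b) :
    IsMatch ω k u (matchLen ω k u) := by
  classical
  unfold matchLen
  exact Nat.findGreatest_spec (Nat.zero_le _) (isMatch_zero ω k u)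

lemma le_matchLen {ω : ℕ → Fin m → Fin b} {k : ℕ} {u : Fin (m - 1) → Fin b} {j : ℕ}
    (hj : j ≤ m - 1) (h : IsMatch ω k u j) : j ≤ matchLen ω k u := by
  classical
  unfold matchLen
  exact Nat.le_findGreatest hj h

/-- Matches of positive length after reading `c` are exactly the matches of `u` extended by `c`. -/
lemma isMatch_shift (ω : ℕ → Fin m → Fin b) (k : ℕ) (u : Fin (m - 1) → Fin b) (c : Fin b)
    (j : ℕ) (hj : j + 1 ≤ m - 1) :
    IsMatch ω (k + 1) (shiftState u c) (j + 1) ↔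
      IsMatch ω k u j ∧ c = ω (k + (m - 1 - j)) ⟨j, by omega⟩ := by
  have hk : k + 1 + (m - 1 - (j + 1)) = k + (m - 1 - j) := by omega
  unfold IsMatch
  rw [hk]
  constructor
  · intro h
    constructor
    · intro s hs t ht hst
      have h1 := h (s - 1) (by omega) t ht (by omega)
      have hs1 : s - 1 + 1 = s := by omega
      simpa [shiftState, hs1, hs] using h1
    · have h1 := h (m - 2) (by omega) j (by omega) (by omega)
      have h2 : ¬ (m - 2 + 1 < m - 1) := by omega
      simpa [shiftState, h2] using h1
  · rintro ⟨h, hc⟩ s hs t ht hst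
    by_cases h2 : s + 1 < m - 1
    · simpa [shiftState, h2] using h (s + 1) h2 t ht (by omega)
    · obtain rfl : t = j := by omega
      simpa [shiftState, h2] using hc

open Classical in
/-- The transition reading `c` is forbidden exactly when `c` completes the word `ω^k`. -/
lemma adjMat_shift (hm : 2 ≤ m) (ω : ℕ → Fin m → Fin b) (k : ℕ) (u : Fin (m - 1) → Fin b)
    (c : Fin b) :
    adjMat b m (ω k) u (shiftState u c) =
      if IsMatch ω k u (m - 1) ∧ c = ω k ⟨m - 1, by omega⟩ then 0 else 1 := by
  have hp : m - 1 < m := by omega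
  have h2 : ¬ (m - 2 + 1 < m - 1) := by omega
  have h1 : (∀ (i : ℕ) (h : i + 1 < m - 1), u ⟨i + 1, h⟩ = shiftState u c ⟨i, by omega⟩) := by
    intro i h
    simp [shiftState, h]
  have hA : (∀ (j : ℕ) (h : j < m - 1), u ⟨j, h⟩ = ω k ⟨j, by omega⟩) ↔
      IsMatch ω k u (m - 1) := by
    unfold IsMatch
    simp only [Nat.sub_self, Nat.add_zero]
    constructor
    · intro h s hs t ht hst
      obtain rfl : s = t := by omega
      exact h s hs
    · intro h j hj
      exact h j hj j (by omega) (by omega)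
  have hB : (∀ (h2 : m - 2 < m - 1),
      shiftState u c ⟨m - 2, h2⟩ = ω k ⟨m - 1, by omega⟩) ↔ c = ω k ⟨m - 1, by omega⟩ := by
    have h3 : shiftState u c ⟨m - 2, by omega⟩ = c := by simp [shiftState, h2]
    exact ⟨fun h => h3.symm.trans (h (by omega)), fun h _ => h3.trans h⟩
  unfold adjMat
  by_cases h : IsMatch ω k u (m - 1) ∧ c = ω k ⟨m - 1, hp⟩
  · rw [if_pos h]
    refine if_neg fun h' => h'.2 ⟨hA.2 h.1, hB.2 h.2⟩
  · rw [if_neg h]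
    refine if_pos ⟨h1, fun h' => h ⟨hA.1 h'.1, hB.1 h'.2⟩⟩

lemma adjMat_nonneg (d : Fin m → Fin b) (u v : Fin (m - 1) → Fin b) : 0 ≤ adjMat b m d u v := by
  unfold adjMat
  split_ifs <;> norm_num

/-- Only the `b` successors of `u` contribute to row `u` of `A_d`. -/
lemma adjMat_mulVec (hm : 2 ≤ m) (d : Fin m → Fin b) (f : (Fin (m - 1) → Fin b) → ℝ)
    (u : Fin (m - 1) → Fin b) :
    (adjMat b m d).mulVec f u =
      ∑ c : Fin b, adjMat b m d u (shiftState u c) * f (shiftState u c) := by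
  have h2 : ¬ (m - 2 + 1 < m - 1) := by omega
  symm
  refine Finset.sum_of_injOn (fun c => shiftState u c) ?_ (by simp) ?_ (fun _ _ => rfl)
  · intro c _ c' _ h
    have := congrFun h ⟨m - 2, by omega⟩
    simpa [shiftState, h2] using this
  · intro v _ hv
    have : adjMat b m d u v = 0 := by
      unfold adjMat
      rw [if_neg]
      rintro ⟨h, -⟩
      apply hv
      refine ⟨v ⟨m - 2, by omega⟩, by simp, ?_⟩
      funext i
      by_cases hi : i.1 + 1 < m - 1
      · simp [shiftState, hi, h i.1 hi]
      · have : i = ⟨m - 2, by omega⟩ := by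
          apply Fin.ext
          have := i.isLt
          simp only
          omega
        rw [this]
        simp [shiftState, h2]
    simp [this]

/-- The weight `F_k(u) = h(L(k,u))`. -/
noncomputable def weight (lam : ℝ) (ω : ℕ → Fin m → Fin b) (k : ℕ) (u : Fin (m - 1) → Fin b) : ℝ :=
  hseq b lam (matchLen ω k u)

/-- The letter of a forbidden word that extends the longest match of `u`. -/
noncomputable def nextLetter (hm : 2 ≤ m) (ω : ℕ → Fin m → Fin b) (k : ℕ)
    (u : Fin (m - 1) → Fin b) : Fin b :=
  ω (k + (m - 1 - matchLen ω k u))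
    ⟨matchLen ω k u, by have := matchLen_le ω k u; omega⟩

lemma sum_letters (c : Fin b) (x : ℝ) (hb : 1 ≤ b) :
    ∑ c' : Fin b, (if c' = c then x else 1) = x + ((b : ℝ) - 1) := by
  rw [← Finset.add_sum_erase _ _ (Finset.mem_univ c), if_pos rfl,
    Finset.sum_congr rfl (g := fun _ => (1 : ℝ))
      (fun c' hc' => if_neg (Finset.ne_of_mem_erase hc'))]
  simp [Nat.cast_sub hb]

lemma hseq_step (lam : ℝ) (j : ℕ) :
    hseq b lam (j + 1) + ((b : ℝ) - 1) = lam * hseq b lam j := by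
  simp [hseq]

/-- The weights are `λ`-superharmonic, for an arbitrary sequence of forbidden words. -/
lemma adjMat_weight_le (hb : 1 ≤ b) (hm : 2 ≤ m) {lam : ℝ} (h0 : 0 ≤ lam) (h1 : lam ≤ b)
    (hz : hseq b lam m = 0) (ω : ℕ → Fin m → Fin b) (k : ℕ) (u : Fin (m - 1) → Fin b) :
    (adjMat b m (ω k)).mulVec (weight lam ω (k + 1)) u ≤ lam * weight lam ω k u := by
  classical
  have ha := hseq_antitone h0 h1
  rw [adjMat_mulVec hm]
  unfold weight
  rw [← hseq_step, ← sum_letters (nextLetter hm ω k u) _ hb]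
  refine Finset.sum_le_sum fun c _ => ?_
  have hj := matchLen_le ω k u
  have hmj := isMatch_matchLen ω k u
  rw [adjMat_shift hm]
  split_ifs with hk hc hc
  · -- The forbidden word is completed, so the longest match has length `m - 1`.
    have h3 := le_matchLen le_rfl hk.1
    have : matchLen ω k u + 1 = m := by omega
    rw [this, hz, zero_mul]
  · simp
  · rw [one_mul]
    by_cases hlt : matchLen ω k u + 1 ≤ m - 1
    · exact ha (le_matchLen hlt ((isMatch_shift ω k u c _ hlt).2 ⟨hmj, hc⟩))
    · exfalso
      have he : matchLen ω k u = m - 1 := by omega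
      apply hk
      rw [he] at hmj
      refine ⟨hmj, ?_⟩
      rw [hc]
      unfold nextLetter
      congr 1
      · rw [he]; simp
      · simp [he]
  · rw [one_mul]
    exact ha (Nat.zero_le _)

/-- In a progressively overlapping sequence the letter prescribed at position `k + m - 1` does not
depend on which forbidden word covering that position is used. -/
lemma overlap_letter {ω : ℕ → Fin m → Fin b} (hω : ∀ k : ℕ, 1 ≤ k → ProgOverlapAt b m ω k)
    (k i j : ℕ) (hij : i ≤ j) (hj : j < m) :
    ω (k + (m - 1 - i)) ⟨i, by omega⟩ = ω (k + (m - 1 - j)) ⟨j, hj⟩ := by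
  rcases hij.eq_or_lt with rfl | hlt
  · rfl
  have h := hω (k + (m - 1 - i)) (by omega) (j - i) (by omega) (by omega) i (by omega)
  rw [h]
  have e1 : k + (m - 1 - i) - (j - i) = k + (m - 1 - j) := by omega
  have e2 : i + (j - i) = j := by omega
  simp only [e1, e2]

/-- For progressively overlapping forbidden words the weights are `λ`-harmonic. -/
lemma adjMat_weight_eq (hb : 1 ≤ b) (hm : 2 ≤ m) {lam : ℝ}
    (hz : hseq b lam m = 0) {ω : ℕ → Fin m → Fin b}
    (hω : ∀ k : ℕ, 1 ≤ k → ProgOverlapAt b m ω k) (k : ℕ) (u : Fin (m - 1) → Fin b) :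
    (adjMat b m (ω k)).mulVec (weight lam ω (k + 1)) u = lam * weight lam ω k u := by
  classical
  rw [adjMat_mulVec hm]
  unfold weight
  rw [← hseq_step, ← sum_letters (nextLetter hm ω k u) _ hb]
  refine Finset.sum_congr rfl fun c _ => ?_
  have hj := matchLen_le ω k u
  have hmj := isMatch_matchLen ω k u
  have key : ∀ i, i ≤ matchLen ω k u → ∀ hi : i < m,
      ω (k + (m - 1 - i)) ⟨i, hi⟩ = nextLetter hm ω k u := fun i hi _ =>
    overlap_letter hω k i _ hi (by omega)
  have hkill : c = ω k ⟨m - 1, by omega⟩ → IsMatch ω k u (m - 1) → c = nextLetter hm ω k u := by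
    intro hc h
    rw [← key (m - 1) (le_matchLen le_rfl h) (by omega), hc]
    simp
  -- A match of positive length after reading `c` extends a match of `u`.
  have hv : ∀ i, matchLen ω (k + 1) (shiftState u c) = i + 1 →
      i ≤ matchLen ω k u ∧ c = nextLetter hm ω k u := by
    intro i hi
    have h1 := isMatch_matchLen ω (k + 1) (shiftState u c)
    have h2 := matchLen_le ω (k + 1) (shiftState u c)
    rw [hi] at h1 h2
    obtain ⟨h3, h4⟩ := (isMatch_shift ω k u c i h2).1 h1
    have h5 := le_matchLen (by omega) h3
    exact ⟨h5, h4.trans (key i h5 (by omega))⟩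
  rw [adjMat_shift hm]
  split_ifs with hk hc hc
  · have h3 := le_matchLen le_rfl hk.1
    have : matchLen ω k u + 1 = m := by omega
    rw [this, hz, zero_mul]
  · exact absurd (hkill hk.2 hk.1) hc
  · rw [one_mul]
    by_cases hlt : matchLen ω k u + 1 ≤ m - 1
    · have h1 := le_matchLen hlt ((isMatch_shift ω k u c _ hlt).2 ⟨hmj, hc⟩)
      have := (hv (matchLen ω (k + 1) (shiftState u c) - 1) (by omega)).1
      congr 1
      omega
    · exfalso
      have he : matchLen ω k u = m - 1 := by omega
      apply hk
      rw [he] at hmj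
      refine ⟨hmj, ?_⟩
      rw [hc, ← key (m - 1) he.ge (by omega)]
      simp
  · rw [one_mul]
    rcases Nat.eq_zero_or_eq_succ_pred (matchLen ω (k + 1) (shiftState u c)) with h | h
    · rw [h]; rfl
    · exact absurd (hv _ h).2 hc

end States

/-! ### Matrix products -/

section Products

variable {b m : ℕ}

lemma prodA_succ (ω : ℕ → Fin m → Fin b) (n : ℕ) :
    prodA b m ω (n + 1) = prodA b m ω n * adjMat b m (ω n) := by
  simp [prodA, List.range_succ]

lemma prodA_add (ω : ℕ → Fin m → Fin b) (n k : ℕ) :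
    prodA b m ω (n + k) = prodA b m ω n * prodA b m (fun i => ω (n + i)) k := by
  induction k with
  | zero => simp [prodA]
  | succ k ih => rw [← add_assoc, prodA_succ, ih, prodA_succ, Matrix.mul_assoc]

lemma prodA_pow (ω : ℕ → Fin m → Fin b) (n : ℕ) (hω : ∀ k, ω (k + n) = ω k) (k : ℕ) :
    prodA b m ω n ^ k = prodA b m ω (n * k) := by
  induction k with
  | zero => simp [prodA]
  | succ k ih =>
    have h : (fun i => ω (n + i)) = ω := by
      funext i
      rw [add_comm, hω]
    rw [pow_succ', ih, Nat.mul_succ, add_comm, prodA_add, h]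

lemma prodA_nonneg (ω : ℕ → Fin m → Fin b) (n : ℕ) (u v : Fin (m - 1) → Fin b) :
    0 ≤ prodA b m ω n u v := by
  induction n generalizing v with
  | zero =>
    simp only [prodA, List.range_zero, List.map_nil, List.prod_nil, Matrix.one_apply]
    split_ifs <;> norm_num
  | succ n ih =>
    rw [prodA_succ, Matrix.mul_apply]
    exact Finset.sum_nonneg fun w _ => mul_nonneg (ih w) (adjMat_nonneg _ _ _)

lemma prodA_mulVec_mono (ω : ℕ → Fin m → Fin b) (n : ℕ) {f g : (Fin (m - 1) → Fin b) → ℝ}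
    (h : ∀ v, f v ≤ g v) (u : Fin (m - 1) → Fin b) :
    (prodA b m ω n).mulVec f u ≤ (prodA b m ω n).mulVec g u :=
  Finset.sum_le_sum fun v _ => mul_le_mul_of_nonneg_left (h v) (prodA_nonneg ω n u v)

lemma matNorm_prodA (ω : ℕ → Fin m → Fin b) (n : ℕ) :
    matNorm (prodA b m ω n) = ∑ u, (prodA b m ω n).mulVec (fun _ => 1) u := by
  simp [matNorm, Matrix.mulVec, dotProduct, abs_of_nonneg (prodA_nonneg ω n _ _)]

lemma matNorm_nonneg' (ω : ℕ → Fin m → Fin b) (n : ℕ) : 0 ≤ matNorm (prodA b m ω n) :=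
  Finset.sum_nonneg fun _ _ => Finset.sum_nonneg fun _ _ => abs_nonneg _

lemma prodA_weight_le (hb : 1 ≤ b) (hm : 2 ≤ m) {lam : ℝ} (h0 : 0 ≤ lam) (h1 : lam ≤ b)
    (hz : hseq b lam m = 0) (ω : ℕ → Fin m → Fin b) (n : ℕ) (u : Fin (m - 1) → Fin b) :
    (prodA b m ω n).mulVec (weight lam ω n) u ≤ lam ^ n * weight lam ω 0 u := by
  induction n with
  | zero => simp [prodA]
  | succ n ih =>
    rw [prodA_succ, ← Matrix.mulVec_mulVec]
    calc _ ≤ (prodA b m ω n).mulVec (lam • weight lam ω n) u :=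
          prodA_mulVec_mono ω n (fun v => adjMat_weight_le hb hm h0 h1 hz ω n v) u
      _ = lam * (prodA b m ω n).mulVec (weight lam ω n) u := by
          rw [Matrix.mulVec_smul]; rfl
      _ ≤ lam * (lam ^ n * weight lam ω 0 u) := mul_le_mul_of_nonneg_left ih h0
      _ = _ := by ring

lemma prodA_weight_eq (hb : 1 ≤ b) (hm : 2 ≤ m) {lam : ℝ}
    (hz : hseq b lam m = 0) {ω : ℕ → Fin m → Fin b}
    (hω : ∀ k : ℕ, 1 ≤ k → ProgOverlapAt b m ω k) (n : ℕ) :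
    (prodA b m ω n).mulVec (weight lam ω n) = lam ^ n • weight lam ω 0 := by
  induction n with
  | zero => simp [prodA]
  | succ n ih =>
    have h : (adjMat b m (ω n)).mulVec (weight lam ω (n + 1)) = lam • weight lam ω n :=
      funext fun u => adjMat_weight_eq hb hm hz hω n u
    rw [prodA_succ, ← Matrix.mulVec_mulVec, h, Matrix.mulVec_smul, ih, smul_smul, pow_succ']

/-- Two-sided exponential bounds, with constants independent of the sequence of forbidden words. -/
lemma exists_bounds (hb : 3 ≤ b) (hm : 2 ≤ m) {lam : ℝ} (hlam1 : (b : ℝ) - 1 < lam)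
    (hlam2 : lam < (b : ℝ)) (hlam : lam ^ m = ((b : ℝ) - 1) * ∑ i ∈ Finset.range m, lam ^ i) :
    ∃ c C : ℝ, 0 < c ∧ 0 < C ∧
      (∀ (ω : ℕ → Fin m → Fin b) (n : ℕ), matNorm (prodA b m ω n) ≤ C * lam ^ n) ∧
      (∀ ω : ℕ → Fin m → Fin b, (∀ k : ℕ, 1 ≤ k → ProgOverlapAt b m ω k) →
        ∀ n : ℕ, c * lam ^ n ≤ matNorm (prodA b m ω n)) := by
  have hb' : (3 : ℝ) ≤ b := by exact_mod_cast hb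
  have hl : 0 < lam := by linarith
  have hb1 : 1 ≤ b := by omega
  have hz : hseq b lam m = 0 := by rw [hseq_closed, hlam, sub_self]
  have ha := hseq_antitone hl.le hlam2.le
  set ε := hseq b lam (m - 1) with hε
  have hεpos : 0 < ε := by
    have h := hseq_step (b := b) lam (m - 1)
    rw [Nat.sub_add_cancel (by omega), hz] at h
    exact pos_of_mul_pos_right (a := lam) (by rw [← h]; linarith) hl.le
  have hw1 : ∀ (ω : ℕ → Fin m → Fin b) k u, weight lam ω k u ≤ 1 := fun ω k u => ha (Nat.zero_le _)
  have hwε : ∀ (ω : ℕ → Fin m → Fin b) k u, ε ≤ weight lam ω k u := fun ω k u =>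
    ha (matchLen_le ω k u)
  set S : ℝ := ∑ _u : Fin (m - 1) → Fin b, (1 : ℝ) with hS
  have hSpos : 0 < S := by
    have : Nonempty (Fin (m - 1) → Fin b) := ⟨fun _ => ⟨0, by omega⟩⟩
    exact Finset.sum_pos (fun _ _ => one_pos) Finset.univ_nonempty
  refine ⟨ε * S, ε⁻¹ * S, by positivity, by positivity, ?_, ?_⟩
  · intro ω n
    rw [matNorm_prodA, mul_right_comm, hS, Finset.mul_sum]
    refine Finset.sum_le_sum fun u _ => ?_
    have h1 : ε * (prodA b m ω n).mulVec (fun _ => 1) u ≤ lam ^ n := by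
      calc _ = (prodA b m ω n).mulVec (ε • fun _ => 1) u := by
            rw [Matrix.mulVec_smul]; rfl
        _ ≤ (prodA b m ω n).mulVec (weight lam ω n) u :=
            prodA_mulVec_mono ω n (fun v => by simpa using hwε ω n v) u
        _ ≤ lam ^ n * weight lam ω 0 u := prodA_weight_le hb1 hm hl.le hlam2.le hz ω n u
        _ ≤ lam ^ n * 1 := mul_le_mul_of_nonneg_left (hw1 ω 0 u) (by positivity)
        _ = lam ^ n := mul_one _
    rw [mul_one, inv_mul_eq_div, le_div_iff₀ hεpos, mul_comm]
    exact h1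
  · intro ω hω n
    rw [matNorm_prodA, mul_right_comm, hS, Finset.mul_sum]
    refine Finset.sum_le_sum fun u _ => ?_
    calc ε * lam ^ n * 1 = lam ^ n * ε := by ring
      _ ≤ lam ^ n * weight lam ω 0 u := mul_le_mul_of_nonneg_left (hwε ω 0 u) (by positivity)
      _ = (prodA b m ω n).mulVec (weight lam ω n) u := by
          rw [prodA_weight_eq hb1 hm hz hω]; rfl
      _ ≤ _ := prodA_mulVec_mono ω n (hw1 ω n) u

end Products

/-! ### Roots and limits -/

lemma tendsto_root {C lam : ℝ} (hC : 0 < C) (hl : 0 < lam) :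
    Tendsto (fun n : ℕ => (C * lam ^ n) ^ (1 / (n : ℝ))) atTop (nhds lam) := by
  have h1 : Tendsto (fun n : ℕ => C ^ (1 / (n : ℝ)) * lam) atTop (nhds (C ^ (0 : ℝ) * lam)) :=
    (tendsto_const_nhds.rpow tendsto_one_div_atTop_nhds_zero_nat (Or.inl hC.ne')).mul_const _
  rw [Real.rpow_zero, one_mul] at h1
  refine h1.congr' ?_
  filter_upwards [eventually_ge_atTop 1] with n hn
  rw [Real.mul_rpow hC.le (by positivity), one_div, Real.pow_rpow_inv_natCast hl.le (by omega)]

/-- **Theorem 1.9.** The joint spectral radius of `𝒜 = {A_d : d ∈ D_b^m}` exists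
and equals `λ`, and for every periodic progressively overlapping sequence `ω` of
period `n` one has `‖(A_{ω^0}⋯A_{ω^{n-1}})^k‖^{1/(nk)} → λ`; in particular the
finiteness property holds for `𝒜`. -/
theorem finiteness_property (b m : ℕ) (hb : 3 ≤ b) (hm : 2 ≤ m)
    (lam : ℝ) (hlam1 : (b : ℝ) - 1 < lam) (hlam2 : lam < (b : ℝ))
    (hlam : lam ^ m = ((b : ℝ) - 1) * ∑ i ∈ Finset.range m, lam ^ i) :
    Filter.Tendsto
      (fun n : ℕ => sSup { x : ℝ | ∃ d : ℕ → Fin m → Fin b,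
        x = matNorm (prodA b m d n) ^ (1 / (n : ℝ)) })
      Filter.atTop (nhds lam) ∧
    ∀ n : ℕ, 1 ≤ n → ∀ ω : ℕ → Fin m → Fin b,
      (∀ k : ℕ, 1 ≤ k → ProgOverlapAt b m ω k) → (∀ k : ℕ, ω (k + n) = ω k) →
      Filter.Tendsto
        (fun k : ℕ => matNorm (prodA b m ω n ^ k) ^ (1 / ((n : ℝ) * (k : ℝ))))
        Filter.atTop (nhds lam) := by
  have hb' : (3 : ℝ) ≤ b := by exact_mod_cast hb
  have hl : 0 < lam := by linarith
  obtain ⟨c, C, hc, hC, hup, hlow⟩ := exists_bounds hb hm hlam1 hlam2 hlam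
  have hup' : ∀ (ω : ℕ → Fin m → Fin b) (n : ℕ),
      matNorm (prodA b m ω n) ^ (1 / (n : ℝ)) ≤ (C * lam ^ n) ^ (1 / (n : ℝ)) := fun ω n =>
    Real.rpow_le_rpow (matNorm_nonneg' ω n) (hup ω n) (by positivity)
  have hlow' : ∀ ω : ℕ → Fin m → Fin b, (∀ k : ℕ, 1 ≤ k → ProgOverlapAt b m ω k) → ∀ n : ℕ,
      (c * lam ^ n) ^ (1 / (n : ℝ)) ≤ matNorm (prodA b m ω n) ^ (1 / (n : ℝ)) := fun ω hω n =>
    Real.rpow_le_rpow (by positivity) (hlow ω hω n) (by positivity)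
  constructor
  · refine tendsto_of_tendsto_of_tendsto_of_le_of_le (tendsto_root hc hl) (tendsto_root hC hl)
      (fun n => ?_) (fun n => ?_)
    · -- The constant sequence `0^m, 0^m, …` is progressively overlapping.
      refine (hlow' (fun _ _ => ⟨0, by omega⟩) (fun k _ j _ _ t _ => rfl) n).trans
        (le_csSup ⟨(C * lam ^ n) ^ (1 / (n : ℝ)), ?_⟩ ⟨_, rfl⟩)
      rintro x ⟨d, rfl⟩
      exact hup' d n
    · refine csSup_le ⟨_, fun _ _ => ⟨0, by omega⟩, rfl⟩ ?_
      rintro x ⟨d, rfl⟩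
      exact hup' d n
  · intro n hn ω hω hper
    have h := tendsto_of_tendsto_of_tendsto_of_le_of_le (tendsto_root hc hl) (tendsto_root hC hl)
      (hlow' ω hω) (hup' ω)
    have h2 := h.comp (tendsto_id.const_mul_atTop' (r := n) (by omega))
    refine h2.congr fun k => ?_
    simp [prodA_pow ω n hper k]

end Paper
end
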